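/- arXiv:2503.18448 — 9 statements merged into one kernel-verified Lean document; each statement's English description precedes it below -/
import Mathlib

section
/- There exists a function F : ℂ → ℂ, holomorphic on all of ℂ, such that for every complex s with Re(s) > 1 one has F(s) = Σ_{n=A}^∞ χ(n)·P'(n)/P(n)^s. (That is, the Dirichlet-like series L_{A,χ,P} has a holomorphic continuation to the whole complex plane.) -/
open Filter Topology

/-- difference of sequences -/
def dlD (a : ℕ → ℂ) (n : ℕ) : ℂ := a n - a (n + 1)
/-- difference of functions -/
def dlE (g : ℂ → ℂ) (z : ℂ) : ℂ := g z - g (z + 1)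

lemma dl_DE (g : ℂ → ℂ) (K n : ℕ) :
    (dlD^[K] (fun n : ℕ => g n)) n = (dlE^[K] g) n := by
  induction K generalizing n with
  | zero => rfl
  | succ K ih =>
    rw [Function.iterate_succ_apply', Function.iterate_succ_apply', dlD, dlE, ih, ih]
    push_cast; rfl

lemma dl_cauchy (g : ℂ → ℂ) (x : ℂ) (R M δ : ℝ) (hδ : 0 < δ)
    (hg : DifferentiableOn ℂ g (Metric.ball x R)) (hM : ∀ z ∈ Metric.ball x R, ‖g z‖ ≤ M) (k : ℕ) :
    DifferentiableOn ℂ (dlE^[k] g) (Metric.ball x (R - k * (1 + δ))) ∧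
      ∀ z ∈ Metric.ball x (R - k * (1 + δ)), ‖(dlE^[k] g) z‖ ≤ M / δ ^ k := by
  induction k with
  | zero => simpa using ⟨hg, hM⟩
  | succ k ih =>
    set r := R - k * (1 + δ) with hr
    have hr' : R - ((k + 1 : ℕ) : ℝ) * (1 + δ) = r - (1 + δ) := by push_cast; rw [hr]; ring
    rw [hr', Function.iterate_succ_apply']
    obtain ⟨h1, h2⟩ := ih
    set h := dlE^[k] g
    have hshift : ∀ z ∈ Metric.ball x (r - (1 + δ)), z + 1 ∈ Metric.ball x (r - δ) := by
      intro z hz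
      rw [mem_ball_iff_norm] at *
      have : z + 1 - x = (z - x) + 1 := by ring
      rw [this]
      have := norm_add_le (z - x) 1
      rw [norm_one] at this
      linarith
    have hsub : Metric.ball x (r - (1 + δ)) ⊆ Metric.ball x (r - δ) :=
      Metric.ball_subset_ball (by linarith)
    have hsub2 : Metric.ball x (r - δ) ⊆ Metric.ball x r :=
      Metric.ball_subset_ball (by linarith)
    refine ⟨?_, ?_⟩
    · have : dlE h = fun z => h z - h (z + 1) := rfl
      rw [this]
      refine (h1.mono (hsub.trans hsub2)).sub ?_
      exact DifferentiableOn.comp (t := Metric.ball x r) h1 (by fun_prop)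
        (fun z hz => hsub2 (hshift z hz))
    · intro z hz
      have hd : ∀ y ∈ Metric.ball x (r - δ), ‖deriv h y‖ ≤ M / δ ^ k / δ := by
        intro y hy
        have hcb : Metric.closedBall y δ ⊆ Metric.ball x r := by
          apply Metric.closedBall_subset_ball'
          rw [Metric.mem_ball] at hy
          linarith
        refine Complex.norm_deriv_le_of_forall_mem_sphere_norm_le hδ ?_ ?_
        · apply DifferentiableOn.diffContOnCl
          rw [closure_ball _ hδ.ne']
          exact h1.mono hcb
        · intro w hw
          exact h2 w (hcb (Metric.sphere_subset_closedBall hw))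
      have := Convex.norm_image_sub_le_of_norm_deriv_le
        (fun y hy => (h1.differentiableAt (Metric.isOpen_ball.mem_nhds (hsub2 hy)))) hd
        (convex_ball x (r - δ)) (hshift z hz) (hsub hz)
      rw [dlE, pow_succ, ← div_div]
      simpa using this

lemma dl_homog (p : Polynomial ℝ) (d : ℕ) (hp : p.natDegree ≤ d) :
    ∃ G : ℂ × ℂ → ℂ, Continuous G ∧ G (0, 0) = p.coeff d ∧
      ∀ x w : ℂ, x ≠ 0 → (p.map (algebraMap ℝ ℂ)).eval (x * (1 + w)) = x ^ d * G (x⁻¹, w) := by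
  refine ⟨fun q => ∑ i ∈ Finset.range (d + 1), (p.coeff i : ℂ) * q.1 ^ (d - i) * (1 + q.2) ^ i,
    by fun_prop, ?_, ?_⟩
  · beta_reduce
    rw [Finset.sum_range_succ, Finset.sum_eq_zero]
    · simp
    · intro i hi
      have : d - i ≠ 0 := by have := Finset.mem_range.1 hi; omega
      simp [this]
  · intro x w hx
    rw [Polynomial.eval_eq_sum_range' (n := d + 1)
      (by have := Polynomial.natDegree_map_le (f := algebraMap ℝ ℂ) (p := p); omega), Finset.mul_sum]
    refine Finset.sum_congr rfl fun i hi => ?_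
    have : x ^ d = x ^ i * x ^ (d - i) := by
      rw [← pow_add]; congr 1; have := Finset.mem_range.1 hi; omega
    rw [this, mul_pow, inv_pow]
    simp only [Polynomial.coeff_map, Complex.coe_algebraMap]
    field_simp

/-- complex function whose restriction to integers is the sequence -/
noncomputable def dlf (P : Polynomial ℝ) (s z : ℂ) : ℂ :=
  ((Polynomial.derivative P).map (algebraMap ℝ ℂ)).eval z *
    ((P.map (algebraMap ℝ ℂ)).eval z) ^ (-s)

lemma dl_bound (P : Polynomial ℝ) (hd : 1 ≤ P.natDegree) (hlead : 0 < P.leadingCoeff)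
    (a R : ℝ) (K : ℕ) :
    ∃ C : ℝ, ∃ n0 : ℕ, ∀ n ≥ n0, ∀ s : ℂ, a ≤ s.re → ‖s‖ ≤ R →
      ‖(dlE^[K] (dlf P s)) n‖ ≤ C * (n : ℝ) ^ ((P.natDegree : ℝ) - 1 - P.natDegree * a - K) := by
  set d := P.natDegree with hdd
  obtain ⟨G, hGc, hG0, hG⟩ := dl_homog P d le_rfl
  obtain ⟨H, hHc, hH0, hH⟩ := dl_homog (Polynomial.derivative P) (d - 1)
    (Polynomial.natDegree_derivative_le P)
  have hG0' : G (0, 0) = P.leadingCoeff := hG0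
  set l := P.leadingCoeff with hl
  have e1 : ∀ᶠ q in 𝓝 ((0 : ℂ), (0 : ℂ)), l / 2 < (G q).re := by
    refine (Complex.continuous_re.comp hGc).continuousAt.eventually_const_lt ?_
    simp only [Function.comp, hG0', Complex.ofReal_re]; linarith
  have e2 : ∀ᶠ q in 𝓝 ((0 : ℂ), (0 : ℂ)), ‖G q‖ ^ (-a) < l ^ (-a) + 1 := by
    have : ContinuousAt (fun q => ‖G q‖ ^ (-a)) ((0 : ℂ), (0 : ℂ)) := by
      refine ContinuousAt.rpow_const hGc.norm.continuousAt (Or.inl ?_)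
      rw [hG0']; simp [hlead.ne']
    refine this.eventually_lt_const ?_
    beta_reduce; rw [hG0']; simp [abs_of_pos hlead]
  have e3 : ∀ᶠ q in 𝓝 ((0 : ℂ), (0 : ℂ)), ‖H q‖ < ‖H (0, 0)‖ + 1 :=
    hHc.norm.continuousAt.eventually_lt_const (by linarith)
  obtain ⟨ε, hε, he⟩ := Metric.eventually_nhds_iff_ball.1 (e1.and (e2.and e3))
  set C0 := (‖H (0, 0)‖ + 1) * ((l ^ (-a) + 1) * Real.exp (Real.pi * R)) with hC0
  have hl' : 0 < l ^ (-a) + 1 := by positivity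
  have hC0n : 0 ≤ C0 := by positivity
  have hK : (0 : ℝ) < 2 * (K + 1) := by positivity
  obtain ⟨n0, hn0⟩ := exists_nat_gt (max (2 / ε) (max (2 * (K + 1) / ε) (max 1 (2 / l))))
  simp only [max_lt_iff] at hn0
  obtain ⟨m1, m2, m3, m4⟩ := hn0
  refine ⟨C0 / (ε / (2 * (K + 1))) ^ K, n0, fun n hn s hs hsR => ?_⟩
  have hn' : (n0 : ℝ) ≤ n := by exact_mod_cast hn
  have hn1 : (1 : ℝ) < n := by linarith
  have hnpos : (0 : ℝ) < n := by linarith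
  have hnc : (n : ℂ) ≠ 0 := by exact_mod_cast hnpos.ne'
  have key : ∀ z ∈ Metric.ball (n : ℂ) (ε * n), ∃ w : ℂ, z = n * (1 + w) ∧
      ((n : ℂ)⁻¹, w) ∈ Metric.ball ((0 : ℂ), (0 : ℂ)) ε := by
    intro z hz
    refine ⟨(z - n) / n, by field_simp; ring, ?_⟩
    rw [mem_ball_iff_norm] at hz ⊢
    rw [Prod.mk_sub_mk, sub_zero, sub_zero, Prod.norm_mk, max_lt_iff, norm_inv, norm_div,
      Complex.norm_natCast]
    refine ⟨?_, by rwa [div_lt_iff₀ hnpos]⟩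
    rw [inv_lt_comm₀ hnpos hε]
    have : ε⁻¹ ≤ 2 / ε := by rw [inv_eq_one_div]; gcongr; norm_num
    linarith
  have hQre : ∀ z ∈ Metric.ball (n : ℂ) (ε * n), 0 < ((P.map (algebraMap ℝ ℂ)).eval z).re := by
    intro z hz
    obtain ⟨w, rfl, hw⟩ := key z hz
    obtain ⟨h1, -, -⟩ := he _ hw
    rw [hG _ _ hnc]
    have : ((n : ℂ) ^ d) = (((n : ℝ) ^ d : ℝ) : ℂ) := by push_cast; rfl
    rw [this, Complex.re_ofReal_mul]
    have : 0 < (G ((n : ℂ)⁻¹, w)).re := by linarith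
    positivity
  have hdiff : DifferentiableOn ℂ (dlf P s) (Metric.ball (n : ℂ) (ε * n)) := by
    intro z hz
    apply DifferentiableAt.differentiableWithinAt
    unfold dlf
    refine (Polynomial.differentiable _).differentiableAt.mul ?_
    exact (Polynomial.differentiable _).differentiableAt.cpow_const (Or.inl (hQre z hz))
  have hbd : ∀ z ∈ Metric.ball (n : ℂ) (ε * n), ‖dlf P s z‖ ≤
      C0 * (n : ℝ) ^ ((d : ℝ) - 1 - d * a) := by
    intro z hz
    have hre := hQre z hz
    obtain ⟨w, rfl, hw⟩ := key z hz
    obtain ⟨h1, h2, h3⟩ := he _ hw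
    unfold dlf
    set Q := (P.map (algebraMap ℝ ℂ)).eval ((n : ℂ) * (1 + w)) with hQ
    have hQn : ‖Q‖ = (n : ℝ) ^ d * ‖G ((n : ℂ)⁻¹, w)‖ := by
      rw [hQ, hG _ _ hnc, norm_mul, norm_pow, Complex.norm_natCast]
    have hGn : l / 2 < ‖G ((n : ℂ)⁻¹, w)‖ := h1.trans_le (Complex.re_le_norm _)
    have hQ1 : 1 ≤ ‖Q‖ := by
      rw [hQn]
      have : (n : ℝ) ≤ (n : ℝ) ^ d := le_self_pow₀ hn1.le (by omega)
      have h5 : 2 / l ≤ (n : ℝ) ^ d := by linarith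
      calc (1 : ℝ) = 2 / l * (l / 2) := by field_simp
        _ ≤ _ := by gcongr
    have hcp : ‖Q ^ (-s)‖ ≤ (n : ℝ) ^ (-(d * a)) * ((l ^ (-a) + 1) * Real.exp (Real.pi * R)) := by
      refine (Complex.norm_cpow_le _ _).trans ?_
      rw [div_eq_mul_inv, ← Real.exp_neg, ← mul_assoc]
      have h6 : ‖Q‖ ^ (-s).re ≤ (n : ℝ) ^ (-(d * a)) * (l ^ (-a) + 1) := by
        calc ‖Q‖ ^ (-s).re ≤ ‖Q‖ ^ (-a) := by
              apply Real.rpow_le_rpow_of_exponent_le hQ1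
              simpa using hs
          _ = (n : ℝ) ^ (-(d * a)) * ‖G ((n : ℂ)⁻¹, w)‖ ^ (-a) := by
              rw [hQn, Real.mul_rpow (by positivity) (by positivity), ← Real.rpow_natCast,
                ← Real.rpow_mul hnpos.le]
              congr 2; ring
          _ ≤ _ := by gcongr
      have h7 : -(Q.arg * (-s).im) ≤ Real.pi * R := by
        refine (neg_le_abs _).trans ?_
        rw [abs_mul]
        have := Complex.abs_arg_le_pi Q
        have h8 : |(-s).im| ≤ R := (Complex.abs_im_le_norm _).trans (by simpa using hsR)
        gcongr
      gcongr
    rw [norm_mul, hH _ _ hnc, norm_mul, norm_pow, Complex.norm_natCast]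
    have h9 : (n : ℝ) ^ ((d : ℝ) - 1 - d * a) = (n : ℝ) ^ (d - 1) * (n : ℝ) ^ (-(d * a)) := by
      rw [← Real.rpow_natCast, ← Real.rpow_add hnpos, Nat.cast_sub hd]
      congr 1; push_cast; ring
    rw [h9]
    calc _ ≤ (n : ℝ) ^ (d - 1) * (‖H (0, 0)‖ + 1) *
          ((n : ℝ) ^ (-(d * a)) * ((l ^ (-a) + 1) * Real.exp (Real.pi * R))) := by gcongr
      _ = _ := by rw [hC0]; ring
  have hδ : 0 < ε * n / (2 * (K + 1)) := by positivity
  have := (dl_cauchy (dlf P s) n (ε * n) _ _ hδ hdiff hbd K).2 n (by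
    apply Metric.mem_ball_self
    have h1 : 2 * (K + 1) < ε * n := by
      have : 2 * (K + 1) / ε < n := by linarith
      rw [div_lt_iff₀ hε] at this; linarith
    have h2 : K * (ε * n / (2 * (K + 1))) ≤ ε * n / 2 := by
      have : (K : ℝ) * (ε * n / (2 * (K + 1))) = ε * n / 2 * (K / (K + 1)) := by field_simp
      rw [this]
      have h3 : (K : ℝ) / (K + 1) ≤ 1 := by rw [div_le_one (by positivity)]; linarith
      exact mul_le_of_le_one_right (by positivity) h3
    have : (0:ℝ) ≤ K := by positivity
    linarith)
  refine this.trans (le_of_eq ?_)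
  rw [Real.rpow_sub hnpos _ (K : ℝ), Real.rpow_natCast]
  have : ε * n / (2 * (K + 1)) = ε / (2 * (K + 1)) * n := by ring
  rw [this, mul_pow]
  field_simp

/-- mean of the partial sums over one period -/
noncomputable def dlm (N : ℕ) (c : ℕ → ℂ) : ℂ :=
  (∑ n ∈ Finset.range N, ∑ i ∈ Finset.range (n + 1), c i) / N

/-- normalised partial sums -/
noncomputable def dlT (N : ℕ) (c : ℕ → ℂ) (n : ℕ) : ℂ :=
  ∑ i ∈ Finset.range (n + 1), c i - dlm N c

/-- periodic with mean zero -/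
def dlPer (N : ℕ) (c : ℕ → ℂ) : Prop :=
  Function.Periodic c N ∧ ∑ i ∈ Finset.range N, c i = 0

lemma dlT_per (N : ℕ) (hN : 1 ≤ N) (c : ℕ → ℂ) (hc : dlPer N c) : dlPer N (dlT N c) := by
  obtain ⟨h1, h2⟩ := hc
  constructor
  · intro n
    unfold dlT
    rw [show n + N + 1 = N + (n + 1) by ring, Finset.sum_range_add, h2, zero_add]
    congr 1
    refine Finset.sum_congr rfl fun i _ => ?_
    rw [add_comm]; exact h1 i
  · unfold dlT
    rw [Finset.sum_sub_distrib, Finset.sum_const, Finset.card_range, dlm, nsmul_eq_mul]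
    have : (N : ℂ) ≠ 0 := by exact_mod_cast (by omega : N ≠ 0)
    field_simp
    simp

lemma dl_bdd (N : ℕ) (hN : 1 ≤ N) (c : ℕ → ℂ) (hc : Function.Periodic c N) :
    ∃ C : ℝ, ∀ n, ‖c n‖ ≤ C := by
  refine ⟨∑ i ∈ Finset.range N, ‖c i‖, fun n => ?_⟩
  rw [← hc.map_mod_nat n]
  exact Finset.single_le_sum (f := fun i => ‖c i‖) (fun i _ => norm_nonneg _)
    (Finset.mem_range.2 (Nat.mod_lt _ hN))

lemma dl_summable_mul (N : ℕ) (hN : 1 ≤ N) (c : ℕ → ℂ) (hc : Function.Periodic c N)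
    (a : ℕ → ℂ) (ha : Summable fun n => ‖a n‖) : Summable fun n => c n * a n := by
  obtain ⟨C, hC⟩ := dl_bdd N hN c hc
  refine Summable.of_norm_bounded (ha.mul_left C) fun n => ?_
  rw [norm_mul]
  exact mul_le_mul_of_nonneg_right (hC n) (norm_nonneg _)

lemma dl_parts (N : ℕ) (hN : 1 ≤ N) (c : ℕ → ℂ) (hc : dlPer N c)
    (a : ℕ → ℂ) (ha : Summable fun n => ‖a n‖) (ha' : Summable fun n => ‖dlD a n‖) :
    ∑' n, c n * a n = dlm N c * a 0 + ∑' n, dlT N c n * dlD a n := by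
  have hT := dlT_per N hN c hc
  have s1 := (dl_summable_mul N hN c hc.1 a ha).hasSum.tendsto_sum_nat
  have s2 := (dl_summable_mul N hN _ hT.1 _ ha').hasSum.tendsto_sum_nat
  have hfin : ∀ M : ℕ, ∑ n ∈ Finset.range (M + 1), c n * a n =
      dlm N c * a 0 + ∑ n ∈ Finset.range (M + 1), dlT N c n * dlD a n +
        dlT N c M * a (M + 1) := by
    intro M
    induction M with
    | zero => simp [dlT, dlD]; ring
    | succ M ih =>
      rw [Finset.sum_range_succ, ih, Finset.sum_range_succ _ (M + 1)]
      have : dlT N c (M + 1) = dlT N c M + c (M + 1) := by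
        unfold dlT; rw [Finset.sum_range_succ _ (M + 1)]; ring
      rw [this, dlD]; ring
  have h0 : Tendsto (fun M => dlT N c M * a (M + 1)) atTop (𝓝 0) := by
    obtain ⟨C, hC⟩ := dl_bdd N hN _ hT.1
    have h1 : Tendsto (fun M => C * ‖a (M + 1)‖) atTop (𝓝 (C * 0)) :=
      ((tendsto_add_atTop_iff_nat 1).2 ha.tendsto_atTop_zero).const_mul C
    rw [mul_zero] at h1
    refine squeeze_zero_norm (fun M => ?_) h1
    rw [norm_mul]
    exact mul_le_mul_of_nonneg_right (hC M) (norm_nonneg _)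
  have t1 := (tendsto_add_atTop_iff_nat 1).2 s1
  have t2 := (((tendsto_add_atTop_iff_nat 1).2 s2).const_add (dlm N c * a 0)).add h0
  rw [add_zero] at t2
  refine tendsto_nhds_unique t1 (t2.congr fun M => (hfin M).symm)

/-- the `K`-th continuation -/
noncomputable def dlF (N : ℕ) (c : ℕ → ℂ) (a : ℂ → ℕ → ℂ) (K : ℕ) (s : ℂ) : ℂ :=
  ∑ k ∈ Finset.range K, dlm N ((dlT N)^[k] c) * (dlD^[k] (a s)) 0 +
    ∑' n, ((dlT N)^[K] c) n * (dlD^[K] (a s)) n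

lemma dl_iter_per (N : ℕ) (hN : 1 ≤ N) (c : ℕ → ℂ) (hc : dlPer N c) (K : ℕ) :
    dlPer N ((dlT N)^[K] c) := by
  induction K with
  | zero => exact hc
  | succ K ih => rw [Function.iterate_succ_apply']; exact dlT_per N hN _ ih

lemma dlF_succ (N : ℕ) (hN : 1 ≤ N) (c : ℕ → ℂ) (hc : dlPer N c) (a : ℂ → ℕ → ℂ) (K : ℕ) (s : ℂ)
    (h1 : Summable fun n => ‖(dlD^[K] (a s)) n‖) (h2 : Summable fun n => ‖(dlD^[K + 1] (a s)) n‖) :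
    dlF N c a K s = dlF N c a (K + 1) s := by
  unfold dlF
  rw [Function.iterate_succ_apply'] at h2
  rw [dl_parts N hN _ (dl_iter_per N hN c hc K) _ h1 h2, Finset.sum_range_succ,
    Function.iterate_succ_apply', Function.iterate_succ_apply', add_assoc]

lemma dlD_diff (a : ℂ → ℕ → ℂ) (ha : ∀ n, Differentiable ℂ fun s => a s n) (K n : ℕ) :
    Differentiable ℂ fun s => (dlD^[K] (a s)) n := by
  induction K generalizing n with
  | zero => exact ha n
  | succ K ih =>
    simp only [Function.iterate_succ_apply', dlD]
    exact (ih n).sub (ih (n + 1))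

lemma dl_main (N : ℕ) (hN : 1 ≤ N) (c : ℕ → ℂ) (hc : dlPer N c)
    (P : Polynomial ℝ) (hd : 1 ≤ P.natDegree) (hlead : 0 < P.leadingCoeff)
    (hpos : ∀ n : ℕ, 0 < P.eval (n : ℝ)) :
    ∃ F : ℂ → ℂ, Differentiable ℂ F ∧
      ∀ s : ℂ, 1 < s.re → F s = ∑' n : ℕ, c n * dlf P s n := by
  set d := P.natDegree with hdd
  have hd0 : (0 : ℝ) < d := by exact_mod_cast hd
  set a : ℂ → ℕ → ℂ := fun s n => dlf P s n with hadef
  have hev : ∀ n : ℕ, (P.map (algebraMap ℝ ℂ)).eval (n : ℂ) = ((P.eval (n : ℝ) : ℝ) : ℂ) := by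
    intro n
    have := Polynomial.eval_map_apply (f := algebraMap ℝ ℂ) (p := P) (n : ℝ)
    simpa using this
  have hadiff : ∀ n, Differentiable ℂ fun s => a s n := by
    intro n
    simp only [hadef, dlf, hev]
    refine Differentiable.const_mul ?_ _
    refine Differentiable.const_cpow (by fun_prop) (Or.inl ?_)
    exact_mod_cast (hpos n).ne'
  have hb : ∀ (K : ℕ) (α R : ℝ), 1 - K / d < α → ∃ u : ℕ → ℝ, Summable u ∧ ∃ n0 : ℕ,
      ∀ n ≥ n0, ∀ s : ℂ, α ≤ s.re → ‖s‖ ≤ R → ‖(dlD^[K] (a s)) n‖ ≤ u n := by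
    intro K α R hα
    obtain ⟨C, n0, h⟩ := dl_bound P hd hlead α R K
    refine ⟨fun n => C * (n : ℝ) ^ ((P.natDegree : ℝ) - 1 - P.natDegree * α - K), ?_, n0, fun n hn s h1 h2 => ?_⟩
    rotate_left
    · rw [hadef]
      simp only
      rw [dl_DE]
      exact h n hn s h1 h2
    · refine Summable.mul_left C (Real.summable_nat_rpow.2 ?_)
      rw [← hdd]
      have : (1 - K / d) * (d : ℝ) < α * d := by gcongr
      have h2 : (1 - K / d) * (d : ℝ) = d - K := by field_simp
      linarith
  have hsm : ∀ (K : ℕ) (s : ℂ), 1 - K / d < s.re → Summable fun n => ‖(dlD^[K] (a s)) n‖ := by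
    intro K s hs
    obtain ⟨u, hu, n0, h⟩ := hb K s.re ‖s‖ hs
    refine Summable.of_norm_bounded_eventually_nat hu ?_
    filter_upwards [eventually_ge_atTop n0] with n hn
    rw [norm_norm]
    exact h n hn s le_rfl le_rfl
  have hmono : ∀ (K L : ℕ), K ≤ L → (1 : ℝ) - L / d ≤ 1 - K / d := by
    intro K L h
    have : (K : ℝ) ≤ L := by exact_mod_cast h
    gcongr
  have hcons : ∀ (K : ℕ) (s : ℂ), 1 - K / d < s.re → ∀ L, K ≤ L →
      dlF N c a K s = dlF N c a L s := by
    intro K s hs L hL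
    induction L, hL using Nat.le_induction with
    | base => rfl
    | succ L hL ih =>
      rw [ih]
      exact dlF_succ N hN c hc a L s (hsm L s ((hmono K L hL).trans_lt hs))
        (hsm (L + 1) s ((hmono K (L + 1) (by omega)).trans_lt hs))
  have hdF : ∀ (K : ℕ) (s : ℂ), 1 - K / d < s.re → DifferentiableAt ℂ (dlF N c a K) s := by
    intro K s0 hs0
    obtain ⟨α, hα1, hα2⟩ := exists_between hs0
    obtain ⟨u, hu, n0, h⟩ := hb K α (‖s0‖ + 1) hα1
    obtain ⟨C, hC⟩ := dl_bdd N hN _ (dl_iter_per N hN c hc K).1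
    set U : Set ℂ := {s | α < s.re} ∩ {s | ‖s‖ < ‖s0‖ + 1} with hU
    have hUo : IsOpen U := (isOpen_lt continuous_const Complex.continuous_re).inter
      (isOpen_lt continuous_norm continuous_const)
    have hs0U : s0 ∈ U := ⟨hα2, by simp⟩
    have hdt := fun n => dlD_diff a hadiff K n
    have htail : DifferentiableOn ℂ
        (fun s => ∑' n, ((dlT N)^[K] c) (n + n0) * (dlD^[K] (a s)) (n + n0)) U := by
      refine Complex.differentiableOn_tsum_of_summable_norm (u := fun n => C * u (n + n0))
        (((summable_nat_add_iff n0).2 hu).mul_left C) ?_ hUo ?_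
      · intro n
        exact ((hdt _).const_mul _).differentiableOn
      · intro n s hs
        rw [norm_mul]
        have hC0 : 0 ≤ C := (norm_nonneg _).trans (hC 0)
        exact mul_le_mul (hC _) (h _ (by omega) s hs.1.le hs.2.le) (norm_nonneg _) hC0
    have hfull : DifferentiableOn ℂ
        (fun s => ∑' n, ((dlT N)^[K] c) n * (dlD^[K] (a s)) n) U := by
      have hfin : Differentiable ℂ fun s =>
          ∑ n ∈ Finset.range n0, ((dlT N)^[K] c) n * (dlD^[K] (a s)) n :=
        Differentiable.fun_sum fun n _ => (hdt n).const_mul _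
      refine (hfin.differentiableOn.add htail).congr fun s hs => ?_
      exact ((dl_summable_mul N hN _ (dl_iter_per N hN c hc K).1 _
        (hsm K s (hα1.trans hs.1))).sum_add_tsum_nat_add n0).symm
    have hbdry : Differentiable ℂ fun s =>
        ∑ k ∈ Finset.range K, dlm N ((dlT N)^[k] c) * (dlD^[k] (a s)) 0 :=
      Differentiable.fun_sum fun k _ => (dlD_diff a hadiff k 0).const_mul _
    exact (hbdry.differentiableAt).add (hfull.differentiableAt (hUo.mem_nhds hs0U))
  have hex : ∀ s : ℂ, ∃ K : ℕ, 1 - K / d < s.re := by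
    intro s
    obtain ⟨K, hK⟩ := exists_nat_gt ((1 - s.re) * d)
    refine ⟨K, ?_⟩
    rw [← lt_div_iff₀ hd0] at hK
    linarith
  choose κ hκ using hex
  have heq : ∀ (K : ℕ) (s : ℂ), 1 - K / d < s.re → dlF N c a (κ s) s = dlF N c a K s := by
    intro K s hs
    rcases le_total (κ s) K with h | h
    · exact hcons _ s (hκ s) K h
    · exact (hcons _ s hs _ h).symm
  refine ⟨fun s => dlF N c a (κ s) s, fun s0 => ?_, fun s hs => ?_⟩
  · refine (hdF (κ s0) s0 (hκ s0)).congr_of_eventuallyEq ?_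
    filter_upwards [(isOpen_lt continuous_const Complex.continuous_re).mem_nhds (hκ s0)] with s hs
    exact heq _ s hs
  · beta_reduce
    rw [heq 0 s (by simpa using hs)]
    simp [dlF, hadef]


/-- The Dirichlet-like series `L_{A,χ,P}` has a holomorphic continuation to the
whole complex plane: there is an entire function `F` agreeing with the series for `Re(s) > 1`. -/
theorem dirichlet_like_holomorphic_continuation
    (N : ℕ) (hN : 1 ≤ N) (χ : ℕ → ℂ)
    (hper : ∀ n : ℕ, 1 ≤ n → χ (n + N) = χ n)
    (hsum : ∑ n ∈ Finset.Icc 1 N, χ n = 0)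
    (P : Polynomial ℝ) (d : ℕ) (hd : 1 ≤ d) (hdeg : P.natDegree = d)
    (hlead : 0 < P.leadingCoeff)
    (A : ℕ) (hA : 1 ≤ A) (hpos : ∀ n : ℕ, A ≤ n → 0 < P.eval (n : ℝ)) :
    ∃ F : ℂ → ℂ, Differentiable ℂ F ∧
      ∀ s : ℂ, 1 < s.re →
        F s = ∑' n : ℕ,
          χ (n + A) * (Complex.ofReal ((Polynomial.derivative P).eval ((n + A : ℕ) : ℝ))) /
            (Complex.ofReal (P.eval ((n + A : ℕ) : ℝ))) ^ s := by
  have hcper : dlPer N (fun n => χ (n + A)) := by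
    have h1 : Function.Periodic (fun n => χ (n + 1)) N := by
      intro n
      have := hper (n + 1) (by omega)
      simpa [add_right_comm] using this
    have h0 : ∑ i ∈ Finset.range N, χ (i + 1) = 0 := by
      rw [← hsum, Finset.range_eq_Ico, Finset.sum_Ico_add' χ 0 N 1]
      rfl
    have hstep : ∀ B : ℕ, ∑ i ∈ Finset.range N, χ (i + (B + 1)) = 0 := by
      intro B
      induction B with
      | zero => simpa using h0
      | succ B ih =>
        have e1 := Finset.sum_range_succ (fun i => χ (i + (B + 1))) N
        have e2 := Finset.sum_range_succ' (fun i => χ (i + (B + 1))) N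
        have e3 : χ (N + (B + 1)) = χ (0 + (B + 1)) := by
          have := hper (B + 1) (by omega)
          rw [add_comm N, this, zero_add]
        rw [e1, ih, e3] at e2
        have e4 := add_right_cancel e2
        rw [e4]
        refine Finset.sum_congr rfl fun i _ => ?_
        congr 1; ring
    refine ⟨fun n => ?_, ?_⟩
    · have := hper (n + A) (by omega)
      simpa [add_right_comm] using this
    · obtain ⟨B, rfl⟩ : ∃ B, A = B + 1 := ⟨A - 1, by omega⟩
      exact hstep B
  set Q : Polynomial ℝ := P.comp (Polynomial.X + Polynomial.C (A : ℝ)) with hQ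
  have hQd : Q.natDegree = d := by
    rw [hQ, Polynomial.natDegree_comp, Polynomial.natDegree_X_add_C, mul_one, hdeg]
  have hQl : Q.leadingCoeff = P.leadingCoeff := by
    rw [hQ, Polynomial.leadingCoeff_comp (by rw [Polynomial.natDegree_X_add_C]; norm_num),
      Polynomial.leadingCoeff_X_add_C, one_pow, mul_one]
  have hQe : ∀ n : ℕ, Q.eval (n : ℝ) = P.eval ((n + A : ℕ) : ℝ) := by
    intro n; simp [hQ]
  have hQe' : ∀ n : ℕ, (Polynomial.derivative Q).eval (n : ℝ) =
      (Polynomial.derivative P).eval ((n + A : ℕ) : ℝ) := by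
    intro n; simp [hQ, Polynomial.derivative_comp]
  have hev : ∀ (p : Polynomial ℝ) (n : ℕ),
      (p.map (algebraMap ℝ ℂ)).eval (n : ℂ) = ((p.eval (n : ℝ) : ℝ) : ℂ) := by
    intro p n
    have := Polynomial.eval_map_apply (f := algebraMap ℝ ℂ) (p := p) (n : ℝ)
    simpa using this
  obtain ⟨F, hF, hFs⟩ := dl_main N hN _ hcper Q (by omega) (by rw [hQl]; exact hlead)
    (fun n => by rw [hQe]; exact hpos _ (by omega))
  refine ⟨F, hF, fun s hs => ?_⟩
  rw [hFs s hs]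
  refine tsum_congr fun n => ?_
  rw [dlf, hev, hev, hQe, hQe', Complex.cpow_neg, div_eq_mul_inv, mul_assoc]
end

section
/- Let F : ℂ → ℂ be holomorphic on ℂ with F(s) = Σ_{n=A}^∞ χ(n)·P'(n)/P(n)^s for all s with Re(s) > 1. Then for every positive integer m, F(1−m) = −(1/m)·Ψ_χ(P^m) − Σ_{n=1}^{A−1} χ(n)·P'(n)·P(n)^{m−1}. -/
/-- The linear form `Ψ_χ` applied to a real polynomial `Q`, where `ψ m = Ψ_χ(X^m)` is the
sequence of moments attached to `χ`. -/
noncomputable def PsiPolyR (ψ : ℕ → ℂ) (Q : Polynomial ℝ) : ℂ :=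
  ∑ k ∈ Q.support, (Complex.ofReal (Q.coeff k)) * ψ k

section
open Filter Topology
/-- forward difference -/
def fdq (a : ℕ → ℂ) : ℕ → ℂ := fun n => a (n + 1) - a n

lemma per_antidiff (N : ℕ) (hN : 1 ≤ N) (c : ℕ → ℂ) (hc : ∀ n, c (n + N) = c n)
    (h0 : ∑ n ∈ Finset.range N, c n = 0) :
    ∃ c1 : ℕ → ℂ, (∀ n, c1 (n + 1) - c1 n = c n) ∧ (∀ n, c1 (n + N) = c1 n) ∧
      ∑ n ∈ Finset.range N, c1 n = 0 := by
  have hNC : (N : ℂ) ≠ 0 := by exact_mod_cast (by omega : N ≠ 0)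
  refine ⟨fun n => (∑ i ∈ Finset.range n, c i) -
    (∑ k ∈ Finset.range N, ∑ i ∈ Finset.range k, c i) / N, ?_, ?_, ?_⟩
  · intro n
    simp only [Finset.sum_range_succ]
    ring
  · intro n
    simp only
    congr 1
    induction n with
    | zero => simpa using h0
    | succ n ih =>
      rw [Finset.sum_range_succ, show n + 1 + N = (n + N) + 1 by ring, Finset.sum_range_succ, ih, hc]
  · rw [Finset.sum_sub_distrib]
    simp only [Finset.sum_const, Finset.card_range, nsmul_eq_mul]
    field_simp
    ring

lemma per_mul (N : ℕ) (c : ℕ → ℂ) (hc : ∀ n, c (n + N) = c n) (q n : ℕ) :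
    c (n + q * N) = c n := by
  induction q with
  | zero => simp
  | succ q ih => rw [show n + (q + 1) * N = (n + q * N) + N by ring, hc, ih]

lemma abel_fin (N : ℕ) (hN : 1 ≤ N) (K : ℕ) : ∀ (c : ℕ → ℂ) (_ : ∀ n, c (n + N) = c n)
    (_ : ∑ n ∈ Finset.range N, c n = 0),
    ∃ b e : ℕ → ℂ, (∀ n, e (n + N) = e n) ∧ ∀ (a : ℕ → ℂ) (q : ℕ),
      ∑ n ∈ Finset.range (q * N), c n * a n =
        ∑ j ∈ Finset.range K, b j * ((fdq^[j] a) 0 - (fdq^[j] a) (q * N)) +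
        ∑ n ∈ Finset.range (q * N), e n * (fdq^[K] a) n := by
  induction K with
  | zero => intro c hc h0; exact ⟨0, c, hc, by simp⟩
  | succ K ih =>
    intro c hc h0
    obtain ⟨c1, h1, h2, h3⟩ := per_antidiff N hN c hc h0
    have hsh : ∑ n ∈ Finset.range N, -c1 (n + 1) = 0 := by
      have e1 := Finset.sum_range_succ c1 N
      have e2 := Finset.sum_range_succ' c1 N
      have e3 := h2 0
      rw [zero_add] at e3
      rw [Finset.sum_neg_distrib]
      rw [e1, h3, e3] at e2
      linear_combination e2
    obtain ⟨b, e, he, hb⟩ := ih (fun n => -c1 (n + 1))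
      (fun n => by rw [show n + N + 1 = (n + 1) + N by ring, h2]) hsh
    refine ⟨fun j => Nat.casesOn j (-c1 0) b, e, he, ?_⟩
    intro a q
    have hq := hb (fdq a) q
    rw [Finset.sum_range_succ']
    simp only [Function.iterate_succ_apply, Function.iterate_zero, id]
    have key : ∀ T, ∑ n ∈ Finset.range T, c n * a n = c1 T * a T - c1 0 * a 0 +
        ∑ n ∈ Finset.range T, -c1 (n + 1) * fdq a n := by
      intro T
      induction T with
      | zero => simp
      | succ T ihT =>
        rw [Finset.sum_range_succ, Finset.sum_range_succ, ihT, ← h1, fdq]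
        ring
    rw [key, hq]
    have := per_mul N c1 h2 q 0
    rw [zero_add] at this
    rw [this]
    change _ = ∑ j ∈ Finset.range K, b j * _ + (-c1 0) * _ + _
    ring

lemma per_bdd (N : ℕ) (hN : 1 ≤ N) (e : ℕ → ℂ) (he : ∀ n, e (n + N) = e n) :
    ∃ C, 0 ≤ C ∧ ∀ n, ‖e n‖ ≤ C := by
  refine ⟨∑ i ∈ Finset.range N, ‖e i‖, by positivity, fun n => ?_⟩
  have h : e n = e (n % N) := by
    conv_lhs => rw [← Nat.mod_add_div n N, mul_comm]
    exact per_mul N e he _ _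
  rw [h]
  exact Finset.single_le_sum (f := fun i => ‖e i‖) (fun _ _ => norm_nonneg _)
    (Finset.mem_range.2 (Nat.mod_lt _ hN))

lemma fdq_summable (a : ℕ → ℂ) (ha : Summable a) (j : ℕ) : Summable (fdq^[j] a) := by
  induction j generalizing a with
  | zero => simpa
  | succ j ih =>
    rw [Function.iterate_succ_apply]
    exact ih _ (((summable_nat_add_iff 1).2 ha).sub ha)

lemma abel_inf (N : ℕ) (hN : 1 ≤ N) (K : ℕ) (c b e : ℕ → ℂ) (hc : ∀ n, c (n + N) = c n)
    (he : ∀ n, e (n + N) = e n) (hb : ∀ (a : ℕ → ℂ) (q : ℕ),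
      ∑ n ∈ Finset.range (q * N), c n * a n =
        ∑ j ∈ Finset.range K, b j * ((fdq^[j] a) 0 - (fdq^[j] a) (q * N)) +
        ∑ n ∈ Finset.range (q * N), e n * (fdq^[K] a) n) (a : ℕ → ℂ) (ha : Summable a) :
    ∑' n, c n * a n = ∑ j ∈ Finset.range K, b j * (fdq^[j] a) 0 + ∑' n, e n * (fdq^[K] a) n := by
  have hs : ∀ (c a : ℕ → ℂ), (∀ n, c (n + N) = c n) → Summable a →
      Summable (fun n => c n * a n) := by
    intro c a hc ha
    obtain ⟨C, _, hC⟩ := per_bdd N hN c hc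
    refine Summable.of_norm_bounded (ha.norm.mul_left C) (fun n => ?_)
    rw [norm_mul]
    gcongr
    exact hC n
  have hT : Tendsto (fun q : ℕ => q * N) atTop atTop :=
    tendsto_atTop_mono (fun q => Nat.le_mul_of_pos_right q hN) tendsto_id
  have t1 := ((hs c a hc ha).hasSum.tendsto_sum_nat).comp hT
  have t2 := ((hs e _ he (fdq_summable a ha K)).hasSum.tendsto_sum_nat).comp hT
  have t3 : Tendsto (fun q : ℕ => ∑ j ∈ Finset.range K,
      b j * ((fdq^[j] a) 0 - (fdq^[j] a) (q * N))) atTop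
      (𝓝 (∑ j ∈ Finset.range K, b j * ((fdq^[j] a) 0 - 0))) := by
    refine tendsto_finsetSum _ (fun j _ => ?_)
    exact ((tendsto_const_nhds).sub
      ((fdq_summable a ha j).tendsto_atTop_zero.comp hT)).const_mul _
  simp only [sub_zero] at t3
  refine tendsto_nhds_unique t1 ((t3.add t2).congr (fun q => ?_))
  simp only [Function.comp]
  rw [hb]

lemma fdq_bound (x0 : ℝ) (B : ℕ) (K : ℕ) : ∀ (f : ℕ → ℝ → ℂ)
    (_ : ∀ k x, x0 ≤ x → HasDerivAt (f k) (f (k + 1) x) x) (n : ℕ) (_ : x0 ≤ ((n + B : ℕ) : ℝ))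
    (C : ℝ) (_ : ∀ y, ((n + B : ℕ) : ℝ) ≤ y → ‖f K y‖ ≤ C),
    ‖(fdq^[K] (fun n => f 0 ((n + B : ℕ) : ℝ))) n‖ ≤ C := by
  induction K with
  | zero => intro f _ n _ C h; exact h _ le_rfl
  | succ K ih =>
    intro f hf n hn C h
    rw [Function.iterate_succ_apply]
    have h1 := ih (fun k y => f k (y + 1) - f k y) (fun k x hx => by
      refine HasDerivAt.sub ?_ (hf k x hx)
      exact (hf k (x + 1) (by linarith)).comp_add_const x 1) n hn C (fun y hy => by
        have := (convex_Icc y (y + 1)).norm_image_sub_le_of_norm_hasDerivWithin_le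
          (f := f K) (f' := f (K + 1)) (C := C) (x := y) (y := y + 1)
          (fun z hz => (hf K z (by linarith [hz.1])).hasDerivWithinAt)
          (fun z hz => h z (by linarith [hz.1])) (by simp) (by simp)
        simpa using this)
    have e : fdq (fun n => f 0 ((n + B : ℕ) : ℝ)) =
        fun n : ℕ => f 0 (((n + B : ℕ) : ℝ) + 1) - f 0 ((n + B : ℕ) : ℝ) := by
      funext n
      simp only [fdq]
      push_cast
      ring_nf
    rw [e]
    exact h1

lemma fdq_poly (B K : ℕ) (Q : Polynomial ℂ) (hQ : Q.natDegree < K) (n : ℕ) :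
    (fdq^[K] (fun n => Q.eval ((n + B : ℕ) : ℂ))) n = 0 := by
  have h := fdq_bound 0 B K (fun k x => (Polynomial.derivative^[k] Q).eval (x : ℂ))
    (fun k x _ => by
      rw [Function.iterate_succ_apply']
      exact ((Polynomial.derivative^[k] Q).hasDerivAt (x : ℂ)).comp_ofReal) n (by positivity) 0
    (fun y _ => by simp [Polynomial.iterate_derivative_eq_zero hQ])
  simpa using h

lemma fdq_diff (U : Set ℂ) (K : ℕ) : ∀ (a : ℂ → ℕ → ℂ)
    (_ : ∀ n, DifferentiableOn ℂ (fun s => a s n) U) (n : ℕ),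
    DifferentiableOn ℂ (fun s => (fdq^[K] (a s)) n) U := by
  induction K with
  | zero => intro a h n; exact h n
  | succ K ih =>
    intro a h n
    simp only [Function.iterate_succ_apply]
    exact ih (fun s => fdq (a s)) (fun n => (h (n + 1)).sub (h n)) n

/-- the polynomials in the k-th derivative -/
noncomputable def Rp (P : Polynomial ℂ) (s : ℂ) : ℕ → Polynomial ℂ
  | 0 => Polynomial.derivative P
  | k + 1 => Polynomial.derivative (Rp P s k) * P -
      Polynomial.C (s + k) * (Rp P s k * Polynomial.derivative P)

lemma Rp_deg (P : Polynomial ℂ) (s : ℂ) (d : ℕ) (hd : 1 ≤ d) (hP : P.natDegree = d) (k : ℕ) :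
    (Rp P s k).natDegree ≤ (k + 1) * (d - 1) := by
  obtain ⟨r, rfl⟩ : ∃ r, d = r + 1 := ⟨d - 1, by omega⟩
  have hdP : (Polynomial.derivative P).natDegree ≤ r := by
    have := Polynomial.natDegree_derivative_le P; omega
  simp only [Nat.add_sub_cancel]
  induction k with
  | zero => simpa [Rp] using hdP
  | succ k ih =>
    rw [Rp]
    refine (Polynomial.natDegree_sub_le _ _).trans (max_le ?_ ?_)
    · by_cases h0 : (Rp P s k).natDegree = 0
      · have : Polynomial.derivative (Rp P s k) = 0 :=
          Polynomial.derivative_of_natDegree_zero h0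
        simp [this]
      · refine Polynomial.natDegree_mul_le.trans ?_
        have := Polynomial.natDegree_derivative_lt h0
        rw [hP]
        nlinarith
    · refine (Polynomial.natDegree_C_mul_le _ _).trans (Polynomial.natDegree_mul_le.trans ?_)
      nlinarith

lemma Rp_cont (P : Polynomial ℂ) (k : ℕ) : ∀ i, Continuous (fun s => (Rp P s k).coeff i) := by
  induction k with
  | zero => intro i; exact continuous_const
  | succ k ih =>
    intro i
    simp only [Rp, Polynomial.coeff_sub, Polynomial.coeff_C_mul]
    simp only [Polynomial.coeff_mul, Polynomial.coeff_derivative]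
    fun_prop

lemma Rp_bound (P : Polynomial ℂ) (d : ℕ) (hd : 1 ≤ d) (hP : P.natDegree = d) (k : ℕ) (M : ℝ) :
    ∃ C, 0 ≤ C ∧ ∀ s : ℂ, ‖s‖ ≤ M → ∀ x : ℝ, 1 ≤ x →
      ‖(Rp P s k).eval (x : ℂ)‖ ≤ C * x ^ ((k + 1) * (d - 1)) := by
  have h : ∀ i, ∃ C, ∀ s : ℂ, ‖s‖ ≤ M → ‖(Rp P s k).coeff i‖ ≤ C := by
    intro i
    obtain ⟨C, hC⟩ := (isCompact_closedBall (0 : ℂ) M).exists_bound_of_continuousOn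
      (Rp_cont P k i).continuousOn
    exact ⟨C, fun s hs => hC s (by simpa using hs)⟩
  choose C hC using h
  refine ⟨∑ i ∈ Finset.range ((k + 1) * (d - 1) + 1), |C i|, by positivity, ?_⟩
  intro s hs x hx
  rw [Polynomial.eval_eq_sum_range' (Nat.lt_succ_of_le (Rp_deg P s d hd hP k)), Finset.sum_mul]
  refine (norm_sum_le _ _).trans (Finset.sum_le_sum (fun i hi => ?_))
  rw [norm_mul, norm_pow, Complex.norm_real, Real.norm_of_nonneg (by linarith)]
  have : i ≤ (k + 1) * (d - 1) := by have := Finset.mem_range.1 hi; omega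
  gcongr
  exact (hC i s hs).trans (le_abs_self _)

lemma Rp_deriv (P : Polynomial ℂ) (s : ℂ) (k : ℕ) (x : ℝ) (hx : P.eval (x : ℂ) ∈ Complex.slitPlane) :
    HasDerivAt (fun x : ℝ => (Rp P s k).eval (x : ℂ) * (P.eval (x : ℂ)) ^ (-s - k))
      ((Rp P s (k + 1)).eval (x : ℂ) * (P.eval (x : ℂ)) ^ (-s - ((k + 1 : ℕ) : ℂ))) x := by
  have h := (((Rp P s k).hasDerivAt (x : ℂ)).mul
    ((P.hasDerivAt (x : ℂ)).cpow_const (c := -s - k) hx)).comp_ofReal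
  refine h.congr_deriv ?_
  have h0 : P.eval (x : ℂ) ≠ 0 := Complex.slitPlane_ne_zero hx
  have e : (P.eval (x : ℂ)) ^ (-s - (k : ℂ)) =
      (P.eval (x : ℂ)) ^ (-s - ((k + 1 : ℕ) : ℂ)) * P.eval (x : ℂ) := by
    
    rw [show -s - (k : ℂ) = (-s - ((k + 1 : ℕ) : ℂ)) + 1 by push_cast; ring,
      Complex.cpow_add _ _ h0, Complex.cpow_one]
  have e2 : -s - (k : ℂ) - 1 = -s - ((k + 1 : ℕ) : ℂ) := by push_cast; ring
  rw [e2, e, Rp]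
  simp only [Polynomial.eval_sub, Polynomial.eval_mul, Polynomial.eval_C]
  ring

lemma P_lower (P : Polynomial ℝ) (d : ℕ) (hd : 1 ≤ d) (hdeg : P.natDegree = d)
    (hlead : 0 < P.leadingCoeff) :
    ∃ x0 : ℝ, 1 ≤ x0 ∧ ∃ c : ℝ, 0 < c ∧ ∀ x, x0 ≤ x → 1 ≤ P.eval x ∧ c * x ^ d ≤ P.eval x := by
  have h1 : Tendsto (fun x => P.eval x) atTop atTop :=
    P.tendsto_atTop_of_leadingCoeff_nonneg (by
      rw [← Polynomial.natDegree_pos_iff_degree_pos]; omega) hlead.le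
  have h2 := P.isEquivalent_atTop_lead.symm.isBigO
  rw [hdeg] at h2
  obtain ⟨C, hCpos, hC⟩ := h2.exists_pos
  have h3 := hC.bound
  have h4 := (h1.eventually_ge_atTop 1).and (h3.and (eventually_ge_atTop (1 : ℝ)))
  obtain ⟨x0, hx0⟩ := eventually_atTop.1 h4
  refine ⟨max x0 1, le_max_right _ _, P.leadingCoeff / C, by positivity, fun x hx => ?_⟩
  obtain ⟨ha, hb, hc⟩ := hx0 x ((le_max_left _ _).trans hx)
  refine ⟨ha, ?_⟩
  rw [Real.norm_of_nonneg (by positivity), Real.norm_of_nonneg (by linarith)] at hb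
  rw [div_mul_eq_mul_div, div_le_iff₀ hCpos]
  linarith

lemma fdq_lin {ι : Type*} (S : Finset ι) (j : ℕ) : ∀ (r : ι → ℂ) (a : ι → ℕ → ℂ),
    fdq^[j] (fun n => ∑ i ∈ S, r i * a i n) = fun n => ∑ i ∈ S, r i * (fdq^[j] (a i)) n := by
  induction j with
  | zero => intro r a; rfl
  | succ j ih =>
    intro r a
    simp only [Function.iterate_succ_apply]
    rw [← ih]
    congr 1
    funext n
    simp only [fdq, mul_sub, Finset.sum_sub_distrib]

lemma fdq_shift (T j : ℕ) : ∀ (a : ℕ → ℂ) (n : ℕ),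
    (fdq^[j] (fun n => a (n + T))) n = (fdq^[j] a) (n + T) := by
  induction j with
  | zero => intro a n; rfl
  | succ j ih =>
    intro a n
    simp only [Function.iterate_succ_apply]
    rw [← ih]
    have : (fdq fun n => a (n + T)) = fun n => fdq a (n + T) := by
      funext n
      simp only [fdq]
      rw [show n + T + 1 = n + 1 + T by ring]
    rw [this]

/-- boundary functional -/
noncomputable def Lfn (b : ℕ → ℂ) (K : ℕ) (a : ℕ → ℂ) : ℂ :=
  ∑ j ∈ Finset.range K, b j * (fdq^[j] a) 0

lemma Lfn_lin {ι : Type*} (b : ℕ → ℂ) (K : ℕ) (S : Finset ι) (r : ι → ℂ) (a : ι → ℕ → ℂ) :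
    Lfn b K (fun n => ∑ i ∈ S, r i * a i n) = ∑ i ∈ S, r i * Lfn b K (a i) := by
  simp only [Lfn, fdq_lin, Finset.mul_sum]
  rw [Finset.sum_comm]
  refine Finset.sum_congr rfl fun i _ => Finset.sum_congr rfl fun j _ => ?_
  ring

lemma Lfn_fin (N : ℕ) (K : ℕ) (c b e : ℕ → ℂ) (hb : ∀ (a : ℕ → ℂ) (q : ℕ),
      ∑ n ∈ Finset.range (q * N), c n * a n =
        ∑ j ∈ Finset.range K, b j * ((fdq^[j] a) 0 - (fdq^[j] a) (q * N)) +
        ∑ n ∈ Finset.range (q * N), e n * (fdq^[K] a) n)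
    (a : ℕ → ℂ) (h : ∀ n, (fdq^[K] a) n = 0) (q : ℕ) :
    ∑ n ∈ Finset.range (q * N), c n * a n = Lfn b K a - Lfn b K (fun n => a (n + q * N)) := by
  rw [hb]
  simp only [h, mul_zero, Finset.sum_const_zero, add_zero, Lfn, fdq_shift, mul_sub,
    Finset.sum_sub_distrib, zero_add]

lemma psi_rec (N : ℕ) (χ ψ : ℕ → ℂ)
    (hψ : PowerSeries.X * (∑ n ∈ Finset.Icc 1 N,
        PowerSeries.C (χ n) * PowerSeries.rescale (n : ℂ) (PowerSeries.exp ℂ)) =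
      (1 - PowerSeries.rescale (N : ℂ) (PowerSeries.exp ℂ)) *
        (- PowerSeries.mk fun m => ψ m / (m.factorial : ℂ))) (k : ℕ) :
    (k + 1 : ℂ) * ∑ n ∈ Finset.Icc 1 N, χ n * (n : ℂ) ^ k =
      ∑ j ∈ Finset.range (k + 1), ((k + 1).choose j : ℂ) * (N : ℂ) ^ (k + 1 - j) * ψ j := by
  have h := congrArg (PowerSeries.coeff (k + 1)) hψ
  rw [PowerSeries.coeff_succ_X_mul, mul_comm, PowerSeries.coeff_mul,
    Finset.Nat.sum_antidiagonal_eq_sum_range_succ_mk, Finset.sum_range_succ] at h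
  simp only [map_sum, PowerSeries.coeff_C_mul, PowerSeries.coeff_rescale, PowerSeries.coeff_exp,
    map_neg, map_sub, PowerSeries.coeff_mk, PowerSeries.coeff_one, Nat.sub_self] at h
  have hf : ∀ n : ℕ, (n.factorial : ℂ) ≠ 0 := fun n => by exact_mod_cast n.factorial_ne_zero
  have hz : (if True then (1:ℂ) else 0) - (N : ℂ) ^ 0 *
      (algebraMap ℚ ℂ) (1 / ((Nat.factorial 0 : ℕ) : ℚ)) = 0 := by simp
  rw [hz, mul_zero, add_zero] at h
  have h2 := congrArg (fun z => ((k + 1).factorial : ℂ) * z) h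
  simp only [Finset.mul_sum] at h2
  rw [Finset.mul_sum]
  convert h2 using 1
  · refine Finset.sum_congr rfl fun n _ => ?_
    have := hf k
    simp only [map_div₀, map_one, map_natCast]
    rw [Nat.factorial_succ]
    push_cast
    field_simp
  · refine Finset.sum_congr rfl fun j hj => ?_
    have hj' : j < k + 1 := Finset.mem_range.1 hj
    rw [if_neg (by omega), Nat.cast_choose ℂ hj'.le]
    have h3 := hf j
    have h4 := hf (k + 1 - j)
    simp only [map_div₀, map_one, map_natCast]
    field_simp
    ring

lemma rec_zero (N : ℕ) (hN : 1 ≤ N) (K : ℕ) (u v : ℕ → ℂ)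
    (h : ∀ k, k < K → ∑ j ∈ Finset.range (k + 1),
        ((k + 1).choose j : ℂ) * (N : ℂ) ^ (k + 1 - j) * u j =
      ∑ j ∈ Finset.range (k + 1), ((k + 1).choose j : ℂ) * (N : ℂ) ^ (k + 1 - j) * v j) :
    ∀ k, k < K → u k = v k := by
  have hNC : (N : ℂ) ≠ 0 := by exact_mod_cast (by omega : N ≠ 0)
  intro k
  induction k using Nat.strong_induction_on with
  | _ k ih =>
    intro hk
    have := h k hk
    rw [Finset.sum_range_succ, Finset.sum_range_succ] at this
    rw [Finset.sum_congr rfl (fun j hj => by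
      rw [ih j (Finset.mem_range.1 hj) ((Finset.mem_range.1 hj).trans hk)])] at this
    have h2 := add_left_cancel this
    refine mul_left_cancel₀ ?_ h2
    refine mul_ne_zero ?_ (pow_ne_zero _ hNC)
    rw [Nat.choose_succ_self_right]
    exact_mod_cast Nat.succ_ne_zero k

lemma shift_binom (N k : ℕ) (x : ℂ) :
    ∑ j ∈ Finset.range (k + 2), (((k + 1).choose j : ℂ) * (N : ℂ) ^ (k + 1 - j)) *
      ((j : ℂ) * x ^ (j - 1)) = (k + 1) * (x + N) ^ k := by
  rw [Finset.sum_range_succ', add_pow, Finset.mul_sum]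
  simp only [Nat.cast_zero, zero_mul, mul_zero, add_zero]
  refine Finset.sum_congr rfl fun j _ => ?_
  have := congrArg (fun n : ℕ => (n : ℂ)) (Nat.add_one_mul_choose_eq k j)
  push_cast at this
  rw [Nat.add_sub_add_right, Nat.add_sub_cancel]
  push_cast
  linear_combination (-(N : ℂ) ^ (k - j) * x ^ j) * this

lemma psi_eq (N : ℕ) (hN : 1 ≤ N) (χ ψ : ℕ → ℂ)
    (hψ : PowerSeries.X * (∑ n ∈ Finset.Icc 1 N,
        PowerSeries.C (χ n) * PowerSeries.rescale (n : ℂ) (PowerSeries.exp ℂ)) =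
      (1 - PowerSeries.rescale (N : ℂ) (PowerSeries.exp ℂ)) *
        (- PowerSeries.mk fun m => ψ m / (m.factorial : ℂ)))
    (K : ℕ) (b e : ℕ → ℂ) (hb : ∀ (a : ℕ → ℂ) (q : ℕ),
      ∑ n ∈ Finset.range (q * N), χ (n + 1) * a n =
        ∑ j ∈ Finset.range K, b j * ((fdq^[j] a) 0 - (fdq^[j] a) (q * N)) +
        ∑ n ∈ Finset.range (q * N), e n * (fdq^[K] a) n) :
    ∀ k, k < K → ψ k = - Lfn b K (fun n => (k : ℂ) * ((n + 1 : ℕ) : ℂ) ^ (k - 1)) := by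
  apply rec_zero N hN
  intro k hk
  rw [← psi_rec N χ ψ hψ k]
  have h1 := Lfn_fin N K (fun n => χ (n + 1)) b e hb
    (fun n => ((k + 1 : ℕ) : ℂ) * ((n + 1 : ℕ) : ℂ) ^ (k + 1 - 1)) (fun n => by
      have := fdq_poly 1 K (Polynomial.C ((k + 1 : ℕ) : ℂ) * Polynomial.X ^ k)
        (lt_of_le_of_lt (Polynomial.natDegree_C_mul_X_pow_le _ _) hk) n
      simpa using this) 1
  have h2 := Lfn_lin b K (Finset.range (k + 2))
    (fun j => ((k + 1).choose j : ℂ) * (N : ℂ) ^ (k + 1 - j))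
    (fun j n => (j : ℂ) * ((n + 1 : ℕ) : ℂ) ^ (j - 1))
  simp only [shift_binom] at h2
  rw [Finset.sum_range_succ] at h2
  have e1 : (fun n : ℕ => ((k + 1 : ℕ) : ℂ) * ((n + 1 * N + 1 : ℕ) : ℂ) ^ (k + 1 - 1)) =
      fun n : ℕ => ((k : ℂ) + 1) * (((n + 1 : ℕ) : ℂ) + N) ^ k := by
    funext n
    rw [Nat.add_sub_cancel]
    push_cast
    ring
  rw [e1, h2, one_mul] at h1
  simp only [Nat.choose_self, Nat.sub_self, pow_zero, Nat.cast_one, one_mul] at h1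
  have e2 : (k + 1 : ℂ) * ∑ n ∈ Finset.Icc 1 N, χ n * (n : ℂ) ^ k =
      ∑ n ∈ Finset.range N, χ (n + 1) * (((k + 1 : ℕ) : ℂ) * ((n + 1 : ℕ) : ℂ) ^ (k + 1 - 1)) := by
    rw [← Finset.Ico_add_one_right_eq_Icc, Finset.sum_Ico_eq_sum_range, Finset.mul_sum, Nat.add_sub_cancel]
    refine Finset.sum_congr rfl fun n _ => ?_
    rw [add_comm 1 n, Nat.add_sub_cancel]
    push_cast
    ring
  rw [e2, h1]
  simp only [mul_neg, Finset.sum_neg_distrib]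
  ring

lemma Psi_Lfn (N : ℕ) (hN : 1 ≤ N) (χ ψ : ℕ → ℂ)
    (hψ : PowerSeries.X * (∑ n ∈ Finset.Icc 1 N,
        PowerSeries.C (χ n) * PowerSeries.rescale (n : ℂ) (PowerSeries.exp ℂ)) =
      (1 - PowerSeries.rescale (N : ℂ) (PowerSeries.exp ℂ)) *
        (- PowerSeries.mk fun m => ψ m / (m.factorial : ℂ)))
    (K : ℕ) (b e : ℕ → ℂ) (hb : ∀ (a : ℕ → ℂ) (q : ℕ),
      ∑ n ∈ Finset.range (q * N), χ (n + 1) * a n =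
        ∑ j ∈ Finset.range K, b j * ((fdq^[j] a) 0 - (fdq^[j] a) (q * N)) +
        ∑ n ∈ Finset.range (q * N), e n * (fdq^[K] a) n)
    (R : Polynomial ℝ) (hR : R.natDegree < K) :
    PsiPolyR ψ R = - Lfn b K (fun n =>
      (((Polynomial.derivative R).eval ((n + 1 : ℕ) : ℝ) : ℝ) : ℂ)) := by
  have e1 : (fun n : ℕ => (((Polynomial.derivative R).eval ((n + 1 : ℕ) : ℝ) : ℝ) : ℂ)) =
      fun n : ℕ => ∑ k ∈ R.support, ((R.coeff k : ℝ) : ℂ) *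
        ((k : ℂ) * ((n + 1 : ℕ) : ℂ) ^ (k - 1)) := by
    funext n
    rw [Polynomial.derivative_eval, Polynomial.sum_def]
    push_cast
    refine Finset.sum_congr rfl fun k _ => ?_
    ring
  rw [e1, Lfn_lin, PsiPolyR, ← Finset.sum_neg_distrib]
  refine Finset.sum_congr rfl fun k hk => ?_
  rw [psi_eq N hN χ ψ hψ K b e hb k
    (lt_of_le_of_lt (Polynomial.le_natDegree_of_mem_supp k hk) hR)]
  ring

lemma eval_map_cast (P : Polynomial ℝ) (x : ℝ) :
    (P.map Complex.ofRealHom).eval (x : ℂ) = ((P.eval x : ℝ) : ℂ) := by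
  have := Polynomial.eval_map_apply (p := P) Complex.ofRealHom x
  simpa using this

lemma tail_bound (P : Polynomial ℝ) (d : ℕ) (hd : 1 ≤ d) (hdeg : P.natDegree = d)
    (x0 c : ℝ) (hx0 : 1 ≤ x0) (hc : 0 < c)
    (hP : ∀ x, x0 ≤ x → 1 ≤ P.eval x ∧ c * x ^ d ≤ P.eval x)
    (m K : ℕ) (hK : K = d * (m + 1) + 1) (M : ℝ) (B : ℕ) (hB : x0 ≤ (B : ℝ)) :
    ∃ C, 0 ≤ C ∧ ∀ s : ℂ, ‖s‖ ≤ M → -(m : ℝ) ≤ s.re → ∀ n : ℕ,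
      ‖(fdq^[K] (fun n => (((Polynomial.derivative P).eval ((n + B : ℕ) : ℝ) : ℝ) : ℂ) /
        ((P.eval ((n + B : ℕ) : ℝ) : ℝ) : ℂ) ^ s)) n‖ ≤ C * (1 / ((n + B : ℕ) : ℝ) ^ 2) := by
  have hdeg' : (P.map Complex.ofRealHom).natDegree = d := by
    rw [Polynomial.natDegree_map, hdeg]
  obtain ⟨C, hC0, hC⟩ := Rp_bound (P.map Complex.ofRealHom) d hd hdeg' K M
  obtain ⟨r, rfl⟩ : ∃ r, d = r + 1 := ⟨d - 1, by omega⟩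
  obtain ⟨t, ht⟩ : ∃ t, t = r * (m + 1) + 2 := ⟨_, rfl⟩
  have hKt : K = t + m := by rw [hK, ht]; ring
  refine ⟨C / c ^ t, by positivity, ?_⟩
  intro s hs hre n
  have hn : x0 ≤ ((n + B : ℕ) : ℝ) := by
    push_cast
    have : (0 : ℝ) ≤ n := by positivity
    linarith
  have h := fdq_bound x0 B K (fun k x => (Rp (P.map Complex.ofRealHom) s k).eval (x : ℂ) *
      ((P.map Complex.ofRealHom).eval (x : ℂ)) ^ (-s - (k : ℂ)))
    (fun k x hx => Rp_deriv _ s k x (by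
      rw [eval_map_cast, Complex.ofReal_mem_slitPlane]
      linarith [(hP x hx).1])) n hn (C / c ^ t * (1 / ((n + B : ℕ) : ℝ) ^ 2)) (by
    intro y hy
    have hxy := hn.trans hy
    obtain ⟨h1, h2⟩ := hP y hxy
    have hy1 : 1 ≤ y := hx0.trans hxy
    rw [norm_mul, eval_map_cast, Complex.norm_cpow_eq_rpow_re_of_pos (by linarith)]
    have b1 := hC s hs y hy1
    have b2 : (P.eval y) ^ (-s - (K : ℂ)).re ≤ ((c * y ^ (r + 1)) ^ t)⁻¹ := by
      calc (P.eval y) ^ (-s - (K : ℂ)).re ≤ (P.eval y) ^ (-(t : ℝ)) := by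
            apply Real.rpow_le_rpow_of_exponent_le h1
            simp only [Complex.sub_re, Complex.neg_re, Complex.natCast_re]
            rw [hKt]; push_cast; linarith
        _ = ((P.eval y) ^ t)⁻¹ := by rw [Real.rpow_neg (by linarith), Real.rpow_natCast]
        _ ≤ _ := by gcongr
    calc _ ≤ (C * y ^ ((K + 1) * (r + 1 - 1))) * ((c * y ^ (r + 1)) ^ t)⁻¹ := by
          gcongr
      _ = C / c ^ t * (1 / y ^ 2) := by
          have he : (y ^ (r + 1)) ^ t = y ^ ((K + 1) * (r + 1 - 1)) * y ^ 2 := by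
            rw [← pow_mul, ← pow_add]
            congr 1
            rw [hK, ht, Nat.add_sub_cancel]
            ring
          rw [mul_pow, he]
          have : y ≠ 0 := by linarith
          field_simp
      _ ≤ _ := by
          have : 0 < ((n + B : ℕ) : ℝ) := by linarith
          gcongr)
  convert h using 3
  funext n
  simp only [Rp, Polynomial.derivative_map, eval_map_cast, Nat.cast_zero, sub_zero,
    Complex.cpow_neg, div_eq_mul_inv]

lemma head_summable (P : Polynomial ℝ) (d : ℕ) (hd : 1 ≤ d) (hdeg : P.natDegree = d)
    (x0 c : ℝ) (hx0 : 1 ≤ x0) (hc : 0 < c)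
    (hP : ∀ x, x0 ≤ x → 1 ≤ P.eval x ∧ c * x ^ d ≤ P.eval x)
    (B : ℕ) (hB : x0 ≤ (B : ℝ)) (s : ℂ) (hs : 2 ≤ s.re) :
    Summable (fun n : ℕ => (((Polynomial.derivative P).eval ((n + B : ℕ) : ℝ) : ℝ) : ℂ) /
        ((P.eval ((n + B : ℕ) : ℝ) : ℝ) : ℂ) ^ s) := by
  have hdeg' : (P.map Complex.ofRealHom).natDegree = d := by
    rw [Polynomial.natDegree_map, hdeg]
  obtain ⟨C, hC0, hC⟩ := Rp_bound (P.map Complex.ofRealHom) d hd hdeg' 0 0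
  obtain ⟨r, rfl⟩ : ∃ r, d = r + 1 := ⟨d - 1, by omega⟩
  have hsum : Summable (fun n : ℕ => C / c ^ 2 * (1 / ((n + B : ℕ) : ℝ) ^ 2)) :=
    ((summable_nat_add_iff B).2 (Real.summable_one_div_nat_pow.2 one_lt_two)).mul_left _
  refine Summable.of_norm_bounded hsum (fun n => ?_)
  have hn : x0 ≤ ((n + B : ℕ) : ℝ) := by
    push_cast
    have : (0 : ℝ) ≤ n := by positivity
    linarith
  generalize ((n + B : ℕ) : ℝ) = y at hn ⊢
  obtain ⟨h1, h2⟩ := hP y hn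
  have hy1 : 1 ≤ y := hx0.trans hn
  have b1 := hC 0 (by simp) y hy1
  simp only [Rp, Polynomial.derivative_map, eval_map_cast, zero_add, one_mul,
    Nat.add_sub_cancel] at b1
  rw [norm_div, Complex.norm_cpow_eq_rpow_re_of_pos (by linarith)]
  have b2 : (c * y ^ (r + 1)) ^ 2 ≤ (P.eval y) ^ s.re := by
    calc (c * y ^ (r + 1)) ^ 2 ≤ (P.eval y) ^ 2 := by gcongr
      _ = (P.eval y) ^ (2 : ℝ) := by rw [← Real.rpow_natCast]; norm_num
      _ ≤ _ := Real.rpow_le_rpow_of_exponent_le h1 hs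
  calc _ ≤ C * y ^ r / (c * y ^ (r + 1)) ^ 2 := by gcongr
    _ = C / c ^ 2 * (1 / y ^ (r + 2)) := by
      have : y ≠ 0 := by linarith
      field_simp
      ring
    _ ≤ _ := by
      gcongr
      omega

end

/-- If `F` is entire and agrees with `L_{A,χ,P}(s) = Σ_{n=A}^∞ χ(n)·P'(n)/P(n)^s`
for `Re(s) > 1`, then for every `m ≥ 1`,
`F(1-m) = -(1/m)·Ψ_χ(P^m) - Σ_{n=1}^{A-1} χ(n)·P'(n)·P(n)^{m-1}`.
Here `ψ m = Ψ_χ(X^m)` is characterized by the power-series identity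
`t·(Σ_{n=1}^N χ(n)e^{nt})/(1-e^{Nt}) = -Σ_m ψ(m) t^m/m!`. -/
theorem dirichlet_like_values_at_negative_integers
    (N : ℕ) (hN : 1 ≤ N) (χ : ℕ → ℂ)
    (hper : ∀ n : ℕ, 1 ≤ n → χ (n + N) = χ n)
    (hsum : ∑ n ∈ Finset.Icc 1 N, χ n = 0)
    (ψ : ℕ → ℂ)
    (hψ : PowerSeries.X * (∑ n ∈ Finset.Icc 1 N,
        PowerSeries.C (χ n) * PowerSeries.rescale (n : ℂ) (PowerSeries.exp ℂ)) =
      (1 - PowerSeries.rescale (N : ℂ) (PowerSeries.exp ℂ)) *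
        (- PowerSeries.mk fun m => ψ m / (m.factorial : ℂ)))
    (P : Polynomial ℝ) (d : ℕ) (hd : 1 ≤ d) (hdeg : P.natDegree = d)
    (hlead : 0 < P.leadingCoeff)
    (A : ℕ) (hA : 1 ≤ A) (hpos : ∀ n : ℕ, A ≤ n → 0 < P.eval (n : ℝ))
    (F : ℂ → ℂ) (hF : Differentiable ℂ F)
    (hFs : ∀ s : ℂ, 1 < s.re →
      F s = ∑' n : ℕ,
        χ (n + A) * (Complex.ofReal ((Polynomial.derivative P).eval ((n + A : ℕ) : ℝ))) /
          (Complex.ofReal (P.eval ((n + A : ℕ) : ℝ))) ^ s) :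
    ∀ m : ℕ, 0 < m →
      F (1 - (m : ℂ)) = -(1 / (m : ℂ)) * PsiPolyR ψ (P ^ m) -
        ∑ n ∈ Finset.Ico 1 A,
          χ n * (Complex.ofReal ((Polynomial.derivative P).eval (n : ℝ))) *
            (Complex.ofReal (P.eval (n : ℝ))) ^ (m - 1) := by
  intro m hm
  obtain ⟨K, hK⟩ : ∃ K, K = d * (m + 1) + 1 := ⟨_, rfl⟩
  obtain ⟨x0, hx0, cc, hcc, hP⟩ := P_lower P d hd hdeg hlead
  have hcper : ∀ n, (fun n => χ (n + 1)) (n + N) = (fun n => χ (n + 1)) n := fun n => by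
    simp only
    rw [show n + N + 1 = (n + 1) + N by ring, hper _ (by omega)]
  have hc0 : ∑ n ∈ Finset.range N, (fun n => χ (n + 1)) n = 0 := by
    rw [← Finset.Ico_add_one_right_eq_Icc, Finset.sum_Ico_eq_sum_range, Nat.add_sub_cancel] at hsum
    simpa [add_comm] using hsum
  obtain ⟨b, e, he, hb⟩ := abel_fin N hN K _ hcper hc0
  obtain ⟨q, hq⟩ : ∃ q : ℕ, q = max A ⌈x0⌉₊ := ⟨_, rfl⟩
  obtain ⟨B, hBdef⟩ : ∃ B : ℕ, B = q * N + 1 := ⟨_, rfl⟩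
  have hqB : q ≤ B := by rw [hBdef]; nlinarith
  have hAB : A ≤ B := le_trans (by rw [hq]; exact le_max_left _ _) hqB
  have hB : x0 ≤ (B : ℝ) := by
    refine (Nat.le_ceil x0).trans ?_
    exact_mod_cast le_trans (by rw [hq]; exact le_max_right _ _) hqB
  have hχB : ∀ n, χ (n + B) = χ (n + 1) := fun n => by
    rw [hBdef]
    have := per_mul N (fun n => χ (n + 1)) hcper q n
    simpa [add_assoc] using this
  let g : ℂ → ℕ → ℂ := fun s n => (((Polynomial.derivative P).eval (n : ℝ) : ℝ) : ℂ) /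
        ((P.eval (n : ℝ) : ℝ) : ℂ) ^ s
  have hgd : ∀ n, A ≤ n → Differentiable ℂ (fun s => g s n) := by
    intro n hn
    have h0 : ((P.eval (n : ℝ) : ℝ) : ℂ) ≠ 0 := by exact_mod_cast (hpos n hn).ne'
    intro s
    have h1 : DifferentiableAt ℂ (fun s : ℂ => ((P.eval (n : ℝ) : ℝ) : ℂ) ^ s) s :=
      differentiableAt_id.const_cpow (Or.inl h0)
    exact (differentiableAt_const _).div h1 (by simp [Complex.cpow_eq_zero_iff, h0])
  let a : ℂ → ℕ → ℂ := fun s n => g s (n + B)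
  have hFG : ∀ s : ℂ, 2 < s.re → F s = ∑ n ∈ Finset.Ico A B, χ n * g s n +
      (Lfn b K (a s) + ∑' n, e n * (fdq^[K] (a s)) n) := by
    intro s hs
    have hsm : Summable (a s) := head_summable P d hd hdeg x0 cc hx0 hcc hP B hB s hs.le
    have h1 := abel_inf N hN K _ b e hcper he hb (a s) hsm
    rw [Lfn, ← h1, hFs s (by linarith)]
    have e1 : (fun n : ℕ => χ (n + A) *
        (Complex.ofReal ((Polynomial.derivative P).eval ((n + A : ℕ) : ℝ))) /
          (Complex.ofReal (P.eval ((n + A : ℕ) : ℝ))) ^ s) = fun n => χ (n + A) * g s (n + A) := by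
      funext n
      rw [mul_div_assoc]
    rw [e1]
    have e2 : (fun n => (fun n => χ (n + A) * g s (n + A)) (n + (B - A))) =
        fun n => χ (n + 1) * a s n := by
      funext n
      simp only
      rw [show n + (B - A) + A = n + B by omega, hχB]
    have hs2 : Summable (fun n => χ (n + 1) * a s n) := by
      obtain ⟨C, _, hC⟩ := per_bdd N hN (fun n => χ (n + 1)) hcper
      refine Summable.of_norm_bounded (hsm.norm.mul_left C) (fun n => ?_)
      rw [norm_mul]
      gcongr
      exact hC n
    have hs3 : Summable (fun n => χ (n + A) * g s (n + A)) :=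
      (summable_nat_add_iff (B - A)).1 (by rw [e2]; exact hs2)
    rw [← hs3.sum_add_tsum_nat_add (B - A), e2, Finset.sum_Ico_eq_sum_range]
    simp only [add_comm A]
  obtain ⟨C, hC0, hC⟩ := tail_bound P d hd hdeg x0 cc hx0 hcc hP m K hK (m + 10) B hB
  obtain ⟨Ce, hCe0, hCe⟩ := per_bdd N hN e he
  let U : Set ℂ := {s : ℂ | -(m : ℝ) < s.re} ∩ Metric.ball 0 (m + 10)
  have hUo : IsOpen U := (isOpen_lt continuous_const Complex.continuous_re).inter Metric.isOpen_ball
  have hUc : IsPreconnected U :=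
    ((convex_halfSpace_re_gt _).inter (convex_ball _ _)).isPreconnected
  have had : ∀ n, DifferentiableOn ℂ (fun s => a s n) U := fun n =>
    (hgd (n + B) (by omega)).differentiableOn
  have hG : DifferentiableOn ℂ (fun s => ∑ n ∈ Finset.Ico A B, χ n * g s n +
      (Lfn b K (a s) + ∑' n, e n * (fdq^[K] (a s)) n)) U := by
    refine DifferentiableOn.add ?_ (DifferentiableOn.add ?_ ?_)
    · refine DifferentiableOn.fun_sum (fun n hn => ?_)
      exact ((hgd n (Finset.mem_Ico.1 hn).1).const_mul _).differentiableOn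
    · simp only [Lfn]
      refine DifferentiableOn.fun_sum (fun j _ => ?_)
      exact (fdq_diff U j a had 0).const_mul _
    · have hsum : Summable (fun n : ℕ => Ce * (C * (1 / ((n + B : ℕ) : ℝ) ^ 2))) :=
        (((summable_nat_add_iff B).2
          (Real.summable_one_div_nat_pow.2 one_lt_two)).mul_left _).mul_left _
      refine Complex.differentiableOn_tsum_of_summable_norm hsum
        (fun n => (fdq_diff U K a had n).const_mul _) hUo (fun n s hs => ?_)
      rw [norm_mul]
      have h1 : ‖s‖ < m + 10 := by simpa using hs.2
      exact mul_le_mul (hCe n) (hC s h1.le (le_of_lt hs.1) n) (norm_nonneg _) hCe0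
  have h3U : (3 : ℂ) ∈ U := by
    have hm0 : (0 : ℝ) ≤ m := by positivity
    refine ⟨?_, ?_⟩
    · change -(m : ℝ) < (3 : ℂ).re
      norm_num
      linarith
    · rw [mem_ball_zero_iff]
      norm_num
      linarith
  have hmU : (1 - (m : ℂ)) ∈ U := by
    refine ⟨?_, ?_⟩
    · change -(m : ℝ) < (1 - (m : ℂ)).re
      simp
    · rw [mem_ball_zero_iff]
      refine (norm_sub_le _ _).trans_lt ?_
      simp
      linarith
  have hev : F =ᶠ[nhds 3] (fun s => ∑ n ∈ Finset.Ico A B, χ n * g s n +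
      (Lfn b K (a s) + ∑' n, e n * (fdq^[K] (a s)) n)) := by
    have : {s : ℂ | 2 < s.re} ∈ nhds (3 : ℂ) :=
      (isOpen_lt continuous_const Complex.continuous_re).mem_nhds (by
        change (2 : ℝ) < (3 : ℂ).re
        norm_num)
    filter_upwards [this] with s hs using hFG s hs
  have hfin := (hF.differentiableOn.analyticOnNhd hUo).eqOn_of_preconnected_of_eventuallyEq
    (hG.analyticOnNhd hUo) hUc h3U hev hmU
  simp only at hfin
  -- evaluate at 1 - m
  let Q : ℕ → ℂ := fun n => (((Polynomial.derivative P).eval (n : ℝ) : ℝ) : ℂ) *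
    ((P.eval (n : ℝ) : ℝ) : ℂ) ^ (m - 1)
  have hgQ : ∀ n, g (1 - (m : ℂ)) n = Q n := by
    intro n
    simp only [g, Q]
    rw [show (1 - (m : ℂ)) = -((m - 1 : ℕ) : ℂ) by rw [Nat.cast_sub hm]; push_cast; ring,
      Complex.cpow_neg, Complex.cpow_natCast, div_inv_eq_mul]
  have hRdeg : (P ^ m).natDegree < K := by
    rw [Polynomial.natDegree_pow, hdeg, hK]
    nlinarith
  have hmC : (m : ℂ) ≠ 0 := by exact_mod_cast hm.ne'
  let Qp : Polynomial ℂ := (Polynomial.derivative P * P ^ (m - 1)).map Complex.ofRealHom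
  have hQp : ∀ n : ℕ, Qp.eval (n : ℂ) = Q n := by
    intro n
    have := eval_map_cast (Polynomial.derivative P * P ^ (m - 1)) (n : ℝ)
    simp only [Qp, Q]
    rw [Complex.ofReal_natCast] at this
    rw [this]
    simp
  have hQdeg : Qp.natDegree < K := by
    refine lt_of_le_of_lt Polynomial.natDegree_map_le ?_
    refine lt_of_le_of_lt Polynomial.natDegree_mul_le ?_
    have h1 := Polynomial.natDegree_derivative_le P
    have h2 := Polynomial.natDegree_pow P (m - 1)
    have h3 : (P ^ m).natDegree = m * d := by rw [Polynomial.natDegree_pow, hdeg]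
    have h4 : m * d = (m - 1) * d + d := by
      obtain ⟨k, rfl⟩ : ∃ k, m = k + 1 := ⟨m - 1, by omega⟩
      rw [Nat.add_sub_cancel]; ring
    rw [hdeg] at h1 h2
    omega
  have hz : ∀ B' n, (fdq^[K] (fun n => Q (n + B'))) n = 0 := by
    intro B' n
    have := fdq_poly B' K Qp hQdeg n
    simpa only [hQp] using this
  have haQ : a (1 - (m : ℂ)) = fun n => Q (n + B) := by
    funext n
    exact hgQ _
  rw [haQ] at hfin
  simp only [hz, hgQ, mul_zero, tsum_zero, add_zero] at hfin
  have hL := Lfn_fin N K _ b e hb (fun n => Q (n + 1)) (hz 1) q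
  have hshift : (fun n => (fun n => Q (n + 1)) (n + q * N)) = fun n => Q (n + B) := by
    funext n
    simp only [hBdef, add_assoc]
  rw [hshift] at hL
  have hPsi := Psi_Lfn N hN χ ψ hψ K b e hb (P ^ m) hRdeg
  have hder : (fun n : ℕ => (((Polynomial.derivative (P ^ m)).eval ((n + 1 : ℕ) : ℝ) : ℝ) : ℂ)) =
      fun n : ℕ => ∑ i ∈ Finset.range 1, (m : ℂ) * Q (n + 1) := by
    funext n
    simp only [Polynomial.derivative_pow, Q, Finset.sum_range_one, Polynomial.eval_mul,
      Polynomial.eval_pow, Polynomial.eval_C]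
    push_cast
    ring
  rw [hder, Lfn_lin b K (Finset.range 1) (fun _ => (m : ℂ)) (fun _ n => Q (n + 1)),
    Finset.sum_range_one] at hPsi
  have hsplit : ∑ n ∈ Finset.range (q * N), χ (n + 1) * Q (n + 1) =
      ∑ n ∈ Finset.Ico 1 A, χ n * Q n + ∑ n ∈ Finset.Ico A B, χ n * Q n := by
    rw [Finset.sum_Ico_consecutive _ hA hAB, Finset.sum_Ico_eq_sum_range, hBdef, Nat.add_sub_cancel]
    simp only [add_comm 1]
  rw [hsplit] at hL
  have hgoal : ∑ n ∈ Finset.Ico 1 A,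
          χ n * (Complex.ofReal ((Polynomial.derivative P).eval (n : ℝ))) *
            (Complex.ofReal (P.eval (n : ℝ))) ^ (m - 1) = ∑ n ∈ Finset.Ico 1 A, χ n * Q n := by
    refine Finset.sum_congr rfl fun n _ => ?_
    simp only [Q]
    ring
  rw [hgoal, hfin, hPsi]
  field_simp
  linear_combination hL
end

section
/- Suppose in addition that Re(P(n)) > 0 for all integers n ≥ 1. Let F : ℂ → ℂ be holomorphic on ℂ with F(s) = Σ_{n=1}^∞ χ(n)·P'(n)/P(n)^s for all s with Re(s) > 1. Then for every positive integer m, F(1−m) = −Ψ_χ(P^m)/m. -/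
lemma taylor_aux (n : ℕ) : ∀ (f : ℕ → ℝ → ℂ) (x H M : ℝ), 0 ≤ H →
    (∀ k < n, ∀ y ∈ Set.Icc x (x + H), HasDerivAt (f k) (f (k+1) y) y) →
    (∀ y ∈ Set.Icc x (x + H), ‖f n y‖ ≤ M) → ∀ h ∈ Set.Icc 0 H,
    ‖f 0 (x + h) - ∑ j ∈ Finset.range n, f j x * ((h : ℂ) ^ j / (j.factorial : ℂ))‖ ≤ M * H ^ n := by
  induction n with
  | zero =>
    intro f x H M hH _ hb h hh
    simpa using hb (x + h) ⟨by linarith [hh.1], by linarith [hh.2]⟩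
  | succ n ih =>
    intro f x H M hH hd hb h hh
    have hM : 0 ≤ M := le_trans (norm_nonneg _) (hb x ⟨le_rfl, by linarith⟩)
    have key := ih (fun k => f (k+1)) x H M hH
      (fun k hk y hy => hd (k+1) (by omega) y hy) hb
    have hder : ∀ t ∈ Set.Icc (0:ℝ) H, HasDerivWithinAt
        (fun t : ℝ => f 0 (x + t) - ∑ j ∈ Finset.range (n+1), f j x * ((t : ℂ) ^ j / (j.factorial : ℂ)))
        (f 1 (x + t) - ∑ j ∈ Finset.range n, f (j+1) x * ((t : ℂ) ^ j / (j.factorial : ℂ)))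
        (Set.Icc 0 H) t := by
      intro t ht
      apply HasDerivAt.hasDerivWithinAt
      apply HasDerivAt.sub
      · have := hd 0 (by omega) (x + t) ⟨by linarith [ht.1], by linarith [ht.2]⟩
        exact HasDerivAt.comp_const_add x t this
      · simp only [Finset.sum_range_succ']
        have h1 : HasDerivAt (fun t : ℝ => ∑ j ∈ Finset.range n,
            f (j+1) x * ((t : ℂ) ^ (j+1) / ((j+1).factorial : ℂ)))
            (∑ j ∈ Finset.range n, f (j+1) x * ((t : ℂ) ^ j / (j.factorial : ℂ))) t := by
          apply HasDerivAt.fun_sum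
          intro j _
          have h2 := ((((hasDerivAt_pow (j+1) (t:ℂ)).comp_ofReal).div_const
            ((j+1).factorial : ℂ))).const_mul (f (j+1) x)
          refine h2.congr_deriv ?_
          have : (j.factorial : ℂ) ≠ 0 := by exact_mod_cast j.factorial_ne_zero
          have : (j + 1 : ℂ) ≠ 0 := by exact_mod_cast j.succ_ne_zero
          rw [Nat.factorial_succ]
          push_cast
          field_simp
          try simp
        simpa using h1.add_const (f 0 x * ((1:ℂ) / ((Nat.factorial 0 : ℕ):ℂ)))
    have := norm_image_sub_le_of_norm_deriv_le_segment' hder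
      (C := M * H ^ n) (fun t ht => key t ⟨ht.1, ht.2.le⟩) h hh
    have h0 : f 0 (x + 0) - ∑ j ∈ Finset.range (n+1), f j x * (((0:ℝ) : ℂ) ^ j / (j.factorial : ℂ)) = 0 := by
      rw [Finset.sum_range_succ']
      simp
    beta_reduce at this
    rw [h0, sub_zero] at this
    refine this.trans ?_
    rw [pow_succ, ← mul_assoc]
    apply mul_le_mul_of_nonneg_left _ (by positivity)
    linarith [hh.2]

lemma coef_id (N : ℕ) (hN : 1 ≤ N) (χ : ℕ → ℂ)
    (hsum : ∑ n ∈ Finset.Icc 1 N, χ n = 0)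
    (ψ : ℕ → ℂ)
    (hψ : PowerSeries.X * (∑ n ∈ Finset.Icc 1 N,
        PowerSeries.C (χ n) * PowerSeries.rescale (n : ℂ) (PowerSeries.exp ℂ)) =
      (1 - PowerSeries.rescale (N : ℂ) (PowerSeries.exp ℂ)) *
        (- PowerSeries.mk fun m => ψ m / (m.factorial : ℂ))) :
    ψ 0 = 0 ∧ ∀ l : ℕ, ∑ j ∈ Finset.Icc 1 N, χ j * ((j:ℂ) ^ l / (l.factorial : ℂ)) +
      ψ (l+1) / ((l+1).factorial : ℂ) =
      ∑ k ∈ Finset.range (l+1), ψ (k+1) / ((k+1).factorial : ℂ) *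
        ((N:ℂ) ^ (l-k) / ((l-k).factorial : ℂ)) := by
  have hc : ∀ l : ℕ, ∑ j ∈ Finset.Icc 1 N, χ j * ((j:ℂ) ^ l / (l.factorial : ℂ)) +
      ψ (l+1) / ((l+1).factorial : ℂ) =
      ∑ k ∈ Finset.range (l+2), ψ k / (k.factorial : ℂ) *
        ((N:ℂ) ^ (l+1-k) / ((l+1-k).factorial : ℂ)) := by
    intro l
    have h := congrArg (PowerSeries.coeff (l+1)) hψ
    rw [PowerSeries.coeff_succ_X_mul, map_sum, sub_mul, one_mul, map_sub, mul_comm (PowerSeries.rescale _ _),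
      PowerSeries.coeff_mul, Finset.Nat.sum_antidiagonal_eq_sum_range_succ_mk] at h
    simp only [PowerSeries.coeff_C_mul, PowerSeries.coeff_rescale, PowerSeries.coeff_exp, map_neg,
      PowerSeries.coeff_mk, neg_mul, Finset.sum_neg_distrib] at h
    simp only [map_div₀, map_one, map_natCast, mul_one_div] at h
    rw [h]
    simp only [Nat.succ_eq_add_one]
    ring
  have h0 : ψ 0 = 0 := by
    have h := hc 0
    simp [Finset.sum_range_succ, hsum] at h
    rcases h with h | h
    · exact h
    · omega
  refine ⟨h0, fun l => ?_⟩
  rw [hc l, Finset.sum_range_succ']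
  simp [h0]

lemma em_aux (N : ℕ) (χ : ℕ → ℂ) (c : ℕ → ℂ)
    (hc : ∀ l : ℕ, ∑ j ∈ Finset.Icc 1 N, χ j * ((j:ℂ) ^ l / (l.factorial : ℂ)) + c l =
      ∑ k ∈ Finset.range (l+1), c k * ((N:ℂ) ^ (l-k) / ((l-k).factorial : ℂ))) (n : ℕ) :
    ∃ C : ℝ, 0 ≤ C ∧ ∀ (f : ℕ → ℝ → ℂ) (x M : ℝ),
    (∀ k < n, ∀ y ∈ Set.Icc x (x + N), HasDerivAt (f k) (f (k+1) y) y) →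
    (∀ y ∈ Set.Icc x (x + N), ‖f n y‖ ≤ M) →
    ‖∑ j ∈ Finset.Icc 1 N, χ j * f 0 (x + j) + ∑ k ∈ Finset.range n, c k * f k x
      - ∑ k ∈ Finset.range n, c k * f k (x + N)‖ ≤ C * M := by
  refine ⟨∑ j ∈ Finset.Icc 1 N, ‖χ j‖ * (N:ℝ)^n + ∑ k ∈ Finset.range n, ‖c k‖ * (N:ℝ)^(n-k),
    by positivity, ?_⟩
  intro f x M hd hb
  have hT1 : ∀ j ∈ Finset.Icc 1 N, ‖f 0 (x + j) -
      ∑ i ∈ Finset.range n, f i x * ((j : ℂ) ^ i / (i.factorial : ℂ))‖ ≤ M * (N:ℝ)^n := by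
    intro j hj
    rw [Finset.mem_Icc] at hj
    have := taylor_aux n f x N M (by positivity) hd hb j ⟨by positivity, by exact_mod_cast hj.2⟩
    simpa using this
  have hT2 : ∀ k ∈ Finset.range n, ‖f k (x + N) -
      ∑ i ∈ Finset.range (n-k), f (k+i) x * ((N : ℂ) ^ i / (i.factorial : ℂ))‖ ≤ M * (N:ℝ)^(n-k) := by
    intro k hk
    rw [Finset.mem_range] at hk
    have := taylor_aux (n-k) (fun i => f (k+i)) x N M (by positivity)
      (fun i hi y hy => hd (k+i) (by omega) y hy)
      (by rw [Nat.add_sub_cancel' hk.le]; exact hb) N ⟨by positivity, le_rfl⟩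
    simpa using this
  have hz : ∑ j ∈ Finset.Icc 1 N, χ j * (∑ i ∈ Finset.range n, f i x * ((j : ℂ) ^ i / (i.factorial : ℂ)))
      + ∑ k ∈ Finset.range n, c k * f k x = ∑ k ∈ Finset.range n, c k *
      ∑ i ∈ Finset.range (n-k), f (k+i) x * ((N : ℂ) ^ i / (i.factorial : ℂ)) := by
    have e1 := Finset.sum_range_diag_flip n
      (fun k i => c k * (f (k+i) x * ((N : ℂ) ^ i / (i.factorial : ℂ))))
    simp only [Finset.mul_sum]
    rw [← e1, Finset.sum_comm, ← Finset.sum_add_distrib]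
    apply Finset.sum_congr rfl
    intro l _
    have : ∀ k ∈ Finset.range (l+1), c k * (f (k+(l-k)) x * ((N : ℂ) ^ (l-k) / ((l-k).factorial : ℂ)))
      = f l x * (c k * ((N : ℂ) ^ (l-k) / ((l-k).factorial : ℂ))) := by
      intro k hk
      rw [Finset.mem_range] at hk
      rw [Nat.add_sub_cancel' (by omega)]
      ring
    rw [Finset.sum_congr rfl this, ← Finset.mul_sum, ← hc l, mul_add, Finset.mul_sum]
    congr 1
    · exact Finset.sum_congr rfl fun j _ => by ring
    · ring
  have hE : ∑ j ∈ Finset.Icc 1 N, χ j * f 0 (x + j) + ∑ k ∈ Finset.range n, c k * f k x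
      - ∑ k ∈ Finset.range n, c k * f k (x + N) =
      ∑ j ∈ Finset.Icc 1 N, χ j * (f 0 (x + j) -
        ∑ i ∈ Finset.range n, f i x * ((j : ℂ) ^ i / (i.factorial : ℂ))) -
      ∑ k ∈ Finset.range n, c k * (f k (x + N) -
        ∑ i ∈ Finset.range (n-k), f (k+i) x * ((N : ℂ) ^ i / (i.factorial : ℂ))) := by
    simp only [mul_sub, Finset.sum_sub_distrib]
    linear_combination hz
  rw [hE]
  refine (norm_sub_le _ _).trans ?_
  rw [add_mul, Finset.sum_mul, Finset.sum_mul]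
  refine add_le_add (norm_sum_le_of_le _ fun j hj => ?_) (norm_sum_le_of_le _ fun j hj => ?_)
  · rw [norm_mul, mul_assoc, mul_comm _ M]
    exact mul_le_mul_of_nonneg_left (hT1 j hj) (norm_nonneg _)
  · rw [norm_mul, mul_assoc, mul_comm _ M]
    exact mul_le_mul_of_nonneg_left (hT2 j hj) (norm_nonneg _)

open Polynomial in
noncomputable def RR (p : ℂ[X]) : ℕ → ℂ → ℂ[X]
  | 0, _ => derivative p
  | k+1, s => derivative (RR p k s) * p - C (s + k) * (derivative p * RR p k s)

open Polynomial in
noncomputable def ff (p : ℂ[X]) (s : ℂ) (k : ℕ) (x : ℝ) : ℂ :=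
  (RR p k s).eval (x : ℂ) * (p.eval (x:ℂ)) ^ (-(s + k))

open Polynomial in
lemma RR_deg (p : ℂ[X]) (k : ℕ) (s : ℂ) : (RR p k s).natDegree ≤ (p.natDegree - 1) * (k+1) := by
  induction k with
  | zero => simp [RR, natDegree_derivative_le p]
  | succ k ih =>
    rw [RR]
    by_cases hd : p.natDegree = 0
    · have hp : derivative p = 0 := derivative_of_natDegree_zero hd
      have h0 : derivative (RR p k s) = 0 := by
        apply derivative_of_natDegree_zero
        simpa [hd] using ih
      simp [hp, h0]
    have e : (p.natDegree - 1) * (k+1+1) = (p.natDegree - 1) * (k+1) + (p.natDegree - 1) := by ring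
    refine (natDegree_sub_le _ _).trans (max_le ?_ ?_)
    · by_cases h0 : (RR p k s).natDegree = 0
      · rw [derivative_of_natDegree_zero h0]; simp
      refine natDegree_mul_le.trans ?_
      have := natDegree_derivative_le (RR p k s)
      omega
    · refine (natDegree_C_mul_le _ _).trans (natDegree_mul_le.trans ?_)
      have := natDegree_derivative_le p
      omega

open Polynomial in
lemma RR_diff (p : ℂ[X]) (k : ℕ) : ∀ i, Differentiable ℂ (fun s => (RR p k s).coeff i) := by
  induction k with
  | zero => intro i; simp only [RR]; fun_prop
  | succ k ih =>
    intro i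
    simp only [RR, coeff_sub, coeff_C_mul]
    simp only [coeff_mul, coeff_derivative]
    have := ih
    fun_prop

open Polynomial in
lemma RR_eval (p : ℂ[X]) (k : ℕ) (s z : ℂ) : (RR p k s).eval z =
    ∑ i ∈ Finset.range ((p.natDegree - 1) * (k+1) + 1), (RR p k s).coeff i * z ^ i :=
  eval_eq_sum_range' (Nat.lt_succ_of_le (RR_deg p k s)) z

open Polynomial in
lemma ff_diff (p : ℂ[X]) (k : ℕ) (x : ℝ) (hx : p.eval (x:ℂ) ≠ 0) :
    Differentiable ℂ (fun s => ff p s k x) := by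
  unfold ff
  apply Differentiable.mul
  · simp only [RR_eval]
    have := RR_diff p k
    fun_prop
  · intro s
    exact DifferentiableAt.const_cpow (by fun_prop) (Or.inl hx)

open Polynomial in
lemma ff_deriv (p : ℂ[X]) (k : ℕ) (s : ℂ) (x : ℝ) (hx : p.eval (x:ℂ) ∈ Complex.slitPlane) :
    HasDerivAt (ff p s k) (ff p s (k+1) x) x := by
  have h1 := ((RR p k s).hasDerivAt (x:ℂ)).mul
    ((p.hasDerivAt (x:ℂ)).cpow_const (c := -(s+k)) hx)
  have h2 := h1.comp_ofReal
  have hne := Complex.slitPlane_ne_zero hx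
  refine h2.congr_deriv ?_
  unfold ff
  simp only [RR, eval_sub, eval_mul, eval_C]
  have e1 : (p.eval (x:ℂ)) ^ (-(s+k)) = p.eval (x:ℂ) * (p.eval (x:ℂ)) ^ (-(s+k) - 1) := by
    rw [Complex.cpow_sub _ _ hne, Complex.cpow_one]; field_simp
  have e2 : -(s + ((k+1:ℕ):ℂ)) = -(s+k) - 1 := by push_cast; ring
  rw [e2, e1]
  ring

open Polynomial in
lemma RR_bound (p : ℂ[X]) (k : ℕ) (B : ℝ) : ∃ C : ℝ, 0 ≤ C ∧ ∀ s ∈ Metric.closedBall (0:ℂ) B,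
    ∀ x : ℝ, 1 ≤ x → ‖(RR p k s).eval (x:ℂ)‖ ≤ C * x ^ ((p.natDegree - 1) * (k+1)) := by
  have : ∀ i, ∃ C : ℝ, ∀ s ∈ Metric.closedBall (0:ℂ) B, ‖(RR p k s).coeff i‖ ≤ C := fun i =>
    (isCompact_closedBall (0:ℂ) B).exists_bound_of_continuousOn (RR_diff p k i).continuous.continuousOn
  choose C hC using this
  refine ⟨∑ i ∈ Finset.range ((p.natDegree - 1) * (k+1) + 1), |C i|, by positivity, ?_⟩
  intro s hs x hx
  rw [RR_eval, Finset.sum_mul]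
  refine norm_sum_le_of_le _ fun i hi => ?_
  rw [norm_mul, norm_pow, Complex.norm_real, Real.norm_of_nonneg (by linarith)]
  rw [Finset.mem_range] at hi
  exact mul_le_mul ((hC i s hs).trans (le_abs_self _)) (pow_le_pow_right₀ hx (by omega))
    (by positivity) (by positivity)

open Polynomial in
lemma eval_cast (P : ℝ[X]) (x : ℝ) : (P.map Complex.ofRealHom).eval (x:ℂ) = ((P.eval x : ℝ) : ℂ) := by
  have := Polynomial.eval_map_apply (f := Complex.ofRealHom) (p := P) x
  simpa using this

open Polynomial in
lemma ff_zero (P : ℝ[X]) (s : ℂ) (x : ℝ) : ff (P.map Complex.ofRealHom) s 0 x =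
    ((derivative P).eval x : ℝ) / ((P.eval x : ℝ) : ℂ) ^ s := by
  simp only [ff, RR, derivative_map, eval_cast, Nat.cast_zero, add_zero, Complex.cpow_neg, div_eq_mul_inv]

open Polynomial in
lemma ff_bound (P : ℝ[X]) (d : ℕ) (hdeg : P.natDegree = d) (X0 A : ℝ) (hX0 : 1 ≤ X0) (hA : 0 ≤ A)
    (h1 : ∀ x, X0 ≤ x → 1 ≤ P.eval x) (h2 : ∀ x, X0 ≤ x → x ^ d ≤ A * P.eval x)
    (k q : ℕ) (B : ℝ) (hq : (d-1)*(k+1) + 2 ≤ d * q) :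
    ∃ C : ℝ, 0 ≤ C ∧ ∀ s ∈ Metric.closedBall (0:ℂ) B, (q:ℝ) ≤ s.re + k → ∀ x, X0 ≤ x →
      ‖ff (P.map Complex.ofRealHom) s k x‖ ≤ C / x ^ 2 := by
  obtain ⟨C, hC0, hC⟩ := RR_bound (P.map Complex.ofRealHom) k B
  have hnd : (P.map Complex.ofRealHom).natDegree = d := by
    rw [natDegree_map]; exact hdeg
  rw [hnd] at hC
  refine ⟨C * A ^ q, by positivity, ?_⟩
  intro s hs hsq x hx
  have hx1 : 1 ≤ x := hX0.trans hx
  have hP := h1 x hx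
  have hP0 : 0 < P.eval x := by linarith
  unfold ff
  rw [norm_mul, eval_cast, Complex.norm_cpow_eq_rpow_re_of_pos hP0]
  have e1 : (P.eval x) ^ (-(s + k)).re ≤ ((P.eval x) ^ q)⁻¹ := by
    rw [← Real.rpow_natCast, ← Real.rpow_neg hP0.le]
    apply Real.rpow_le_rpow_of_exponent_le hP
    simp
    linarith
  have e2 : x ^ (d * q) ≤ A ^ q * (P.eval x) ^ q := by
    rw [pow_mul, ← mul_pow]
    exact pow_le_pow_left₀ (by positivity) (h2 x hx) q
  have e3 : x ^ ((d-1)*(k+1)) * x ^ 2 ≤ x ^ (d*q) := by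
    rw [← pow_add]
    exact pow_le_pow_right₀ hx1 hq
  calc _ ≤ (C * x ^ ((d-1)*(k+1))) * ((P.eval x) ^ q)⁻¹ :=
        mul_le_mul (hC s hs x hx1) e1 (by positivity) (by positivity)
    _ ≤ C * A ^ q / x ^ 2 := by
        rw [← div_eq_mul_inv, div_le_div_iff₀ (by positivity) (by positivity), mul_assoc, mul_assoc]
        exact mul_le_mul_of_nonneg_left (e3.trans e2) hC0

lemma block_sum (N : ℕ) (χ : ℕ → ℂ)
    (hper : ∀ n : ℕ, 1 ≤ n → χ (n + N) = χ n) (h : ℝ → ℂ) (a : ℕ) :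
    ∑ i ∈ Finset.range ((a+1)*N), χ (i+1) * h ((i+1 : ℕ):ℝ) =
    ∑ i ∈ Finset.range (a*N), χ (i+1) * h ((i+1 : ℕ):ℝ) +
    ∑ j ∈ Finset.Icc 1 N, χ j * h ((a*N:ℕ) + j) := by
  have hp : ∀ a j : ℕ, 1 ≤ j → χ (a*N+j) = χ j := by
    intro a j hj
    induction a with
    | zero => simp
    | succ a ih => rw [← ih, ← hper (a*N+j) (by omega)]; congr 1; ring
  rw [add_mul, one_mul, Finset.sum_range_add]
  congr 1
  rw [← Finset.Ico_add_one_right_eq_Icc, Finset.sum_Ico_eq_sum_range]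
  apply Finset.sum_congr (by simp)
  intro j _
  rw [add_assoc, hp a (j+1) (by omega), add_comm 1 j]
  push_cast
  rfl

open Polynomial in
lemma ff_poly (p : ℂ[X]) (m : ℕ) (hm : 0 < m) (x : ℝ) (hx : p.eval (x:ℂ) ≠ 0) :
    ff p (1 - m) 0 x = (derivative p * p ^ (m-1)).eval (x:ℂ) := by
  obtain ⟨m, rfl⟩ : ∃ k, m = k + 1 := ⟨m-1, by omega⟩
  have : -(1 - ((m+1:ℕ):ℂ) + ((0:ℕ):ℂ)) = (m : ℕ) := by push_cast; ring
  simp only [ff, RR, this, Complex.cpow_natCast, eval_mul, eval_pow, Nat.add_sub_cancel]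

open Polynomial in
lemma ff_poly_k (p : ℂ[X]) (m : ℕ) (hm : 0 < m) (X0 : ℝ)
    (hx : ∀ x : ℝ, X0 < x → p.eval (x:ℂ) ∈ Complex.slitPlane) (k : ℕ) : ∀ x, X0 < x →
    ff p (1 - m) k x = (derivative^[k] (derivative p * p ^ (m-1))).eval (x:ℂ) := by
  induction k with
  | zero => intro x h; exact ff_poly p m hm x (Complex.slitPlane_ne_zero (hx x h))
  | succ k ih =>
    intro x h
    have h1 := ff_deriv p k (1-m) x (hx x h)
    have h2 := ((derivative^[k] (derivative p * p ^ (m-1))).hasDerivAt (x:ℂ)).comp_ofReal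
    rw [Function.iterate_succ_apply']
    refine h1.unique (h2.congr_of_eventuallyEq ?_)
    filter_upwards [lt_mem_nhds h] with y hy using ih y hy

open Polynomial in
lemma poly_em (N : ℕ) (χ : ℕ → ℂ) (c : ℕ → ℂ)
    (hper : ∀ n : ℕ, 1 ≤ n → χ (n + N) = χ n)
    (hc : ∀ l : ℕ, ∑ j ∈ Finset.Icc 1 N, χ j * ((j:ℂ) ^ l / (l.factorial : ℂ)) + c l =
      ∑ k ∈ Finset.range (l+1), c k * ((N:ℂ) ^ (l-k) / ((l-k).factorial : ℂ))) (n : ℕ)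
    (Q : ℂ[X]) (hQ : derivative^[n] Q = 0) (a : ℕ) :
    ∑ i ∈ Finset.range (a*N), χ (i+1) * Q.eval (((i+1 : ℕ):ℝ):ℂ) =
    ∑ k ∈ Finset.range n, c k * (derivative^[k] Q).eval (((a*N:ℕ):ℝ):ℂ) -
    ∑ k ∈ Finset.range n, c k * (derivative^[k] Q).eval 0 := by
  induction a with
  | zero => simp
  | succ a ih =>
    have hb := block_sum N χ hper (fun x => Q.eval (x:ℂ)) a
    beta_reduce at hb
    rw [hb, ih]
    obtain ⟨C, hC, hE⟩ := em_aux N χ c hc n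
    have := hE (fun k x => (derivative^[k] Q).eval (x:ℂ)) ((a*N:ℕ):ℝ) 0
      (by
        intro k _ y _
        simp only [Function.iterate_succ_apply']
        exact ((derivative^[k] Q).hasDerivAt (y:ℂ)).comp_ofReal)
      (by intro y _; simp [hQ])
    rw [mul_zero, norm_le_zero_iff] at this
    have e : (((a+1)*N:ℕ):ℝ) = ((a*N:ℕ):ℝ) + N := by push_cast; ring
    rw [e]
    simp only [Function.iterate_zero, id] at this
    linear_combination this

open Polynomial in
lemma psi_final (ψ : ℕ → ℂ) (h0 : ψ 0 = 0) (P : ℝ[X]) (m n : ℕ) (hm : 0 < m)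
    (hn : (P^m).natDegree ≤ n) (Ps : ℂ)
    (hPs : Ps = ∑ k ∈ (P^m).support, (Complex.ofReal ((P^m).coeff k)) * ψ k) :
    ∑ k ∈ Finset.range n, ψ (k+1) / ((k+1).factorial : ℂ) *
      (derivative^[k] (derivative (P.map Complex.ofRealHom) * (P.map Complex.ofRealHom) ^ (m-1))).eval 0
      = Ps / m := by
  have hm0 : (m:ℂ) ≠ 0 := by exact_mod_cast hm.ne'
  rw [eq_div_iff hm0, Finset.sum_mul, hPs]
  have h1 : ∑ k ∈ (P^m).support, (Complex.ofReal ((P^m).coeff k)) * ψ k =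
      ∑ k ∈ Finset.range (n+1), (Complex.ofReal ((P^m).coeff k)) * ψ k := by
    apply Finset.sum_subset
    · intro k hk
      have := le_natDegree_of_mem_supp k hk
      rw [Finset.mem_range]; omega
    · intro k _ hk
      rw [notMem_support_iff.mp hk]; simp
  rw [h1, Finset.sum_range_succ', h0, mul_zero, add_zero]
  apply Finset.sum_congr rfl
  intro k _
  have h2 : derivative^[k+1] ((P.map Complex.ofRealHom)^m) =
      C (m:ℂ) * derivative^[k] (derivative (P.map Complex.ofRealHom) * (P.map Complex.ofRealHom) ^ (m-1)) := by
    rw [Function.iterate_succ_apply, ← iterate_derivative_C_mul, derivative_pow]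
    congr 1
    ring
  have h3 := congrArg (eval 0) h2
  rw [eval_mul, eval_C, ← coeff_zero_eq_eval_zero, coeff_iterate_derivative, ← Polynomial.map_pow,
    coeff_map, zero_add, Nat.descFactorial_self, nsmul_eq_mul, Complex.ofRealHom_eq_coe] at h3
  have : ((k+1).factorial : ℂ) ≠ 0 := by exact_mod_cast (k+1).factorial_ne_zero
  field_simp
  linear_combination -ψ (k+1) * h3

/-- If `Re(P(n)) > 0` for all `n ≥ 1` and `F` is entire with
`F(s) = Σ_{n=1}^∞ χ(n)·P'(n)/P(n)^s` for `Re(s) > 1`, then for every `m ≥ 1`,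
`F(1-m) = -Ψ_χ(P^m)/m`. -/
theorem dirichlet_like_values_at_negative_integers_A_one
    (N : ℕ) (hN : 1 ≤ N) (χ : ℕ → ℂ)
    (hper : ∀ n : ℕ, 1 ≤ n → χ (n + N) = χ n)
    (hsum : ∑ n ∈ Finset.Icc 1 N, χ n = 0)
    (ψ : ℕ → ℂ)
    (hψ : PowerSeries.X * (∑ n ∈ Finset.Icc 1 N,
        PowerSeries.C (χ n) * PowerSeries.rescale (n : ℂ) (PowerSeries.exp ℂ)) =
      (1 - PowerSeries.rescale (N : ℂ) (PowerSeries.exp ℂ)) *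
        (- PowerSeries.mk fun m => ψ m / (m.factorial : ℂ)))
    (P : Polynomial ℝ) (d : ℕ) (hd : 1 ≤ d) (hdeg : P.natDegree = d)
    (hlead : 0 < P.leadingCoeff)
    (hpos : ∀ n : ℕ, 1 ≤ n → 0 < P.eval (n : ℝ))
    (F : ℂ → ℂ) (hF : Differentiable ℂ F)
    (hFs : ∀ s : ℂ, 1 < s.re →
      F s = ∑' n : ℕ,
        χ (n + 1) * (Complex.ofReal ((Polynomial.derivative P).eval ((n + 1 : ℕ) : ℝ))) /
          (Complex.ofReal (P.eval ((n + 1 : ℕ) : ℝ))) ^ s) :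
    ∀ m : ℕ, 0 < m →
      F (1 - (m : ℂ)) = -(PsiPolyR ψ (P ^ m)) / (m : ℂ) := by
  intro m hm
  obtain ⟨hψ0, hcoef⟩ := coef_id N hN χ hsum ψ hψ
  set c : ℕ → ℂ := fun k => ψ (k+1) / ((k+1).factorial : ℂ) with hcdef
  have hc : ∀ l : ℕ, ∑ j ∈ Finset.Icc 1 N, χ j * ((j:ℂ) ^ l / (l.factorial : ℂ)) + c l =
      ∑ k ∈ Finset.range (l+1), c k * ((N:ℂ) ^ (l-k) / ((l-k).factorial : ℂ)) := hcoef
  set n : ℕ := d * (m+1) + 1 with hn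
  set p := P.map Complex.ofRealHom with hp
  have hPdeg : 0 < P.degree := Polynomial.natDegree_pos_iff_degree_pos.mp (by omega)
  -- growth of `P`
  obtain ⟨X0, A, hX0, hA, hP1, hP2⟩ : ∃ X0 A : ℝ, 1 ≤ X0 ∧ 0 ≤ A ∧
      (∀ x, X0 ≤ x → 1 ≤ P.eval x) ∧ (∀ x, X0 ≤ x → x ^ d ≤ A * P.eval x) := by
    have h1 := (P.tendsto_atTop_of_leadingCoeff_nonneg hPdeg hlead.le).eventually_ge_atTop 1
    have h2 := Polynomial.isBigO_atTop_of_degree_le (Polynomial.X ^ d : Polynomial ℝ) P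
      (by rw [Polynomial.degree_X_pow, ← hdeg,
            Polynomial.degree_eq_natDegree (Polynomial.ne_zero_of_degree_gt hPdeg)])
    obtain ⟨A, hA, h3⟩ := h2.exists_nonneg
    rw [Asymptotics.isBigOWith_iff] at h3
    obtain ⟨X1, hX1⟩ := Filter.eventually_atTop.mp (h1.and h3)
    refine ⟨max 1 X1, A, le_max_left _ _, hA, fun x hx => (hX1 x ((le_max_right _ _).trans hx)).1,
      fun x hx => ?_⟩
    obtain ⟨h4, h5⟩ := hX1 x ((le_max_right _ _).trans hx)
    have hx1 : 1 ≤ x := (le_max_left _ _).trans hx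
    rw [Polynomial.eval_pow, Polynomial.eval_X, Real.norm_of_nonneg (by positivity),
      Real.norm_of_nonneg (by linarith)] at h5
    exact h5
  obtain ⟨a0, ha0⟩ := exists_nat_gt X0
  have ha01 : 1 ≤ a0 := by
    have : (1:ℝ) < a0 := by linarith
    exact_mod_cast this.le
  set XX : ℕ → ℝ := fun a => (((a0 + a) * N : ℕ) : ℝ) with hXX
  have hXXa : ∀ a : ℕ, (a:ℝ) + X0 < XX a := by
    intro a
    have : a0 + a ≤ (a0 + a) * N := Nat.le_mul_of_pos_right _ hN
    have h' : ((a0 + a : ℕ) : ℝ) ≤ XX a := Nat.cast_le.mpr this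
    push_cast at h'
    linarith
  have hXX0 : ∀ a, X0 < XX a := fun a => by
    have := hXXa a
    have : (0:ℝ) ≤ a := by positivity
    linarith
  have hXXs : ∀ a, XX (a+1) = XX a + N := by
    intro a; simp only [hXX]; push_cast; ring
  have hslit : ∀ x : ℝ, X0 ≤ x → p.eval (x:ℂ) ∈ Complex.slitPlane := by
    intro x hx
    rw [hp, eval_cast]
    exact Complex.ofReal_mem_slitPlane.mpr (by linarith [hP1 x hx])
  have hposne : ∀ i : ℕ, p.eval (((i+1:ℕ):ℝ):ℂ) ≠ 0 := by
    intro i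
    rw [hp, eval_cast]
    exact_mod_cast (hpos (i+1) (by omega)).ne'
  obtain ⟨Cem, hCem, hEM⟩ := em_aux N χ c hc n
  set B : ℝ := m + 5 with hB
  set U : Set ℂ := {s : ℂ | -(m:ℝ) < s.re} ∩ Metric.ball (0:ℂ) B with hU
  have hUo : IsOpen U := (isOpen_lt continuous_const Complex.continuous_re).inter Metric.isOpen_ball
  have hUc : IsPreconnected U :=
    ((convex_halfSpace_re_gt _).inter (convex_ball _ _)).isPreconnected
  obtain ⟨Cn, hCn, hbn⟩ := ff_bound P d hdeg X0 A hX0 hA hP1 hP2 n (n - m) B (by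
    have h1 : n - m = (d*m - m) + d + 1 := by
      have : m ≤ d * m := Nat.le_mul_of_pos_left _ hd
      rw [hn, mul_add]; omega
    obtain ⟨e, rfl⟩ : ∃ e, d = e + 1 := ⟨d-1, by omega⟩
    have h2 : (e+1)*m - m = e * m := by rw [add_mul, one_mul]; omega
    rw [h1, h2, hn, Nat.add_sub_cancel]
    apply le_of_eq
    ring)
  set E : ℕ → ℂ → ℂ := fun a s => ∑ j ∈ Finset.Icc 1 N, χ j * ff p s 0 (XX a + j) +
    ∑ k ∈ Finset.range n, c k * ff p s k (XX a) -
    ∑ k ∈ Finset.range n, c k * ff p s k (XX a + N) with hEdef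
  have hEb : ∀ a s, s ∈ U → ‖E a s‖ ≤ Cem * Cn * (1 / ((a:ℝ) + 1) ^ 2) := by
    intro a s hs
    have h1 := hEM (ff p s) (XX a) (Cn / ((a:ℝ)+1)^2)
      (fun k _ y hy => ff_deriv p k s y (hslit y ((hXX0 a).le.trans hy.1)))
      (fun y hy => by
        refine (hbn s (Metric.ball_subset_closedBall hs.2) ?_ y ((hXX0 a).le.trans hy.1)).trans ?_
        · have : m ≤ n := by
            have : m ≤ d * m := Nat.le_mul_of_pos_left _ hd
            rw [hn, mul_add]; omega
          rw [Nat.cast_sub this]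
          have := hs.1
          simp only [Set.mem_ofPred_eq] at this
          linarith
        · have h3 : (a:ℝ) + 1 ≤ y := by linarith [hXXa a, hy.1]
          gcongr)
    refine h1.trans (le_of_eq ?_)
    ring
  have hsumm : Summable (fun a : ℕ => Cem * Cn * (1 / ((a:ℝ) + 1) ^ 2)) := by
    apply Summable.mul_left
    have := (summable_nat_add_iff 1).mpr (Real.summable_one_div_nat_pow.mpr (one_lt_two))
    simpa using this
  have hEd : ∀ a, Differentiable ℂ (E a) := by
    intro a
    have hne : ∀ x, X0 ≤ x → p.eval (x:ℂ) ≠ 0 := fun x hx => Complex.slitPlane_ne_zero (hslit x hx)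
    have h1 := (hXX0 a).le
    apply Differentiable.sub
    · apply Differentiable.add
      · exact Differentiable.fun_sum fun j _ => (ff_diff p 0 _ (hne _ (by
          have : (0:ℝ) ≤ j := by positivity
          linarith))).const_mul _
      · exact Differentiable.fun_sum fun j _ => (ff_diff p j _ (hne _ h1)).const_mul _
    · exact Differentiable.fun_sum fun j _ => (ff_diff p j _ (hne _ (by
          have : (0:ℝ) ≤ N := by positivity
          linarith))).const_mul _
  set G : ℂ → ℂ := fun s => ∑ i ∈ Finset.range (a0*N), χ (i+1) * ff p s 0 ((i+1:ℕ):ℝ) -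
    ∑ k ∈ Finset.range n, c k * ff p s k (XX 0) + ∑' a, E a s with hG
  have hGd : DifferentiableOn ℂ G U := by
    apply DifferentiableOn.add
    · apply Differentiable.differentiableOn
      apply Differentiable.sub
      · exact Differentiable.fun_sum fun i _ => (ff_diff p 0 _ (hposne i)).const_mul _
      · exact Differentiable.fun_sum fun j _ =>
          (ff_diff p j _ (Complex.slitPlane_ne_zero (hslit _ (hXX0 0).le))).const_mul _
    · exact Complex.differentiableOn_tsum_of_summable_norm hsumm
        (fun a => (hEd a).differentiableOn) hUo hEb
  -- partial sums
  have hpart : ∀ s (a : ℕ), ∑ i ∈ Finset.range ((a0 + a)*N), χ (i+1) * ff p s 0 ((i+1:ℕ):ℝ) =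
      ∑ i ∈ Finset.range (a0*N), χ (i+1) * ff p s 0 ((i+1:ℕ):ℝ) -
      ∑ k ∈ Finset.range n, c k * ff p s k (XX 0) + ∑ b ∈ Finset.range a, E b s +
      ∑ k ∈ Finset.range n, c k * ff p s k (XX a) := by
    intro s a
    induction a with
    | zero => simp
    | succ a ih =>
      rw [← add_assoc, block_sum N χ hper (ff p s 0) (a0 + a), ih,
        Finset.sum_range_succ (fun b => E b s), hXXs]
      have hEa : E a s = ∑ j ∈ Finset.Icc 1 N, χ j * ff p s 0 ((((a0 + a)*N:ℕ):ℝ) + j) +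
        ∑ k ∈ Finset.range n, c k * ff p s k (XX a) -
        ∑ k ∈ Finset.range n, c k * ff p s k (XX a + N) := rfl
      rw [hEa]
      ring
  have hFG : ∀ s ∈ U, 2 < s.re → F s = G s := by
    intro s hs hs2
    have hsB := Metric.ball_subset_closedBall hs.2
    have hterm : ∀ k : ℕ, ∃ C : ℝ, 0 ≤ C ∧ ∀ x, X0 ≤ x → ‖ff p s k x‖ ≤ C / x ^ 2 := by
      intro k
      obtain ⟨C, hC, h⟩ := ff_bound P d hdeg X0 A hX0 hA hP1 hP2 k (k+2) B (by
        obtain ⟨e, rfl⟩ : ∃ e, d = e + 1 := ⟨d-1, by omega⟩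
        rw [Nat.add_sub_cancel]
        nlinarith)
      exact ⟨C, hC, h s hsB (by push_cast; linarith)⟩
    have hS : Summable (fun i : ℕ => χ (i+1) * ff p s 0 ((i+1:ℕ):ℝ)) := by
      obtain ⟨D, hD⟩ : ∃ D : ℝ, ∀ i : ℕ, ‖χ (i+1)‖ ≤ D := by
        have hp : ∀ i : ℕ, χ (i+1) = χ (i % N + 1) := by
          intro i
          induction i using Nat.strong_induction_on with
          | _ i ih =>
            by_cases h : i < N
            · rw [Nat.mod_eq_of_lt h]
            · have h1 := ih (i - N) (by omega)
              rw [Nat.mod_eq_sub_mod (by omega), ← h1, ← hper (i - N + 1) (by omega)]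
              congr 1; omega
        refine ⟨∑ i ∈ Finset.range N, ‖χ (i+1)‖, fun i => ?_⟩
        rw [hp i]
        exact Finset.single_le_sum (f := fun i => ‖χ (i+1)‖) (fun _ _ => norm_nonneg _)
          (Finset.mem_range.mpr (Nat.mod_lt _ hN))
      obtain ⟨C, hC, h⟩ := hterm 0
      have hs1 : Summable (fun i : ℕ => D * C * (1 / ((i:ℝ) + 1) ^ 2)) := by
        apply Summable.mul_left
        have := (summable_nat_add_iff 1).mpr (Real.summable_one_div_nat_pow.mpr (one_lt_two))
        simpa using this
      refine Summable.of_norm_bounded_eventually_nat hs1 ?_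
      filter_upwards [Filter.eventually_ge_atTop a0] with i hi
      have hi' : (a0:ℝ) ≤ i := by exact_mod_cast hi
      have h1 := h ((i+1:ℕ):ℝ) (by push_cast; linarith)
      rw [norm_mul]
      refine (mul_le_mul (hD i) h1 (norm_nonneg _) ((norm_nonneg _).trans (hD i))).trans (le_of_eq ?_)
      push_cast
      ring
    have hFs' : F s = ∑' i : ℕ, χ (i+1) * ff p s 0 ((i+1:ℕ):ℝ) := by
      rw [hFs s (by linarith)]
      congr 1
      funext i
      rw [hp, ff_zero, mul_div_assoc]
    have hXt : Filter.Tendsto XX Filter.atTop Filter.atTop :=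
      Filter.tendsto_atTop_mono (fun a => by linarith [hXXa a]) tendsto_natCast_atTop_atTop
    have hlim1 : Filter.Tendsto (fun a : ℕ => ∑ i ∈ Finset.range ((a0 + a)*N),
        χ (i+1) * ff p s 0 ((i+1:ℕ):ℝ)) Filter.atTop (nhds (F s)) := by
      rw [hFs']
      refine hS.hasSum.tendsto_sum_nat.comp (Filter.tendsto_atTop_mono (fun a => ?_) Filter.tendsto_id)
      exact (Nat.le_add_left a a0).trans (Nat.le_mul_of_pos_right _ hN)
    have hES : Summable (fun a => E a s) := Summable.of_norm_bounded hsumm (fun a => hEb a s hs)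
    have hlim2 : Filter.Tendsto (fun a : ℕ => ∑ k ∈ Finset.range n, c k * ff p s k (XX a))
        Filter.atTop (nhds 0) := by
      have : Filter.Tendsto (fun a : ℕ => ∑ k ∈ Finset.range n, c k * ff p s k (XX a))
        Filter.atTop (nhds (∑ k ∈ Finset.range n, c k * 0)) := by
        apply tendsto_finsetSum
        intro k _
        apply Filter.Tendsto.const_mul
        obtain ⟨C, hC, h⟩ := hterm k
        refine squeeze_zero_norm (fun a => h (XX a) (hXX0 a).le) ?_
        exact Filter.Tendsto.const_div_atTop
          ((Filter.tendsto_pow_atTop (two_ne_zero)).comp hXt) C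
      simpa using this
    simp only [hpart s] at hlim1
    have hlim3 := (hES.hasSum.tendsto_sum_nat.const_add
      (∑ i ∈ Finset.range (a0*N), χ (i+1) * ff p s 0 ((i+1:ℕ):ℝ) -
      ∑ k ∈ Finset.range n, c k * ff p s k (XX 0))).add hlim2
    rw [add_zero] at hlim3
    exact tendsto_nhds_unique hlim1 hlim3
  have h3U : (3:ℂ) ∈ U := by
    refine ⟨?_, ?_⟩
    · simp only [Set.mem_ofPred_eq, Complex.re_ofNat]
      have : (0:ℝ) ≤ m := by positivity
      linarith
    · rw [mem_ball_zero_iff, Complex.norm_ofNat, hB]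
      have : (0:ℝ) ≤ m := by positivity
      linarith
  have hmU : (1 - (m:ℂ)) ∈ U := by
    refine ⟨?_, ?_⟩
    · simp
    · rw [mem_ball_zero_iff]
      refine (norm_sub_le _ _).trans_lt ?_
      rw [norm_one, Complex.norm_natCast, hB]
      linarith
  have heq : Set.EqOn F G U := by
    refine (hF.differentiableOn.analyticOnNhd hUo).eqOn_of_preconnected_of_eventuallyEq
      (hGd.analyticOnNhd hUo) hUc h3U ?_
    have ho : IsOpen {s : ℂ | 2 < s.re} := isOpen_lt continuous_const Complex.continuous_re
    filter_upwards [hUo.mem_nhds h3U, ho.mem_nhds (by simp; norm_num : (3:ℂ) ∈ {s : ℂ | 2 < s.re})]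
      with s h1 h2 using hFG s h1 h2
  rw [heq hmU]
  -- evaluation at `1 - m`
  set Q0 := Polynomial.derivative p * p ^ (m-1) with hQ0
  have hpd : p.natDegree = d := by rw [hp, Polynomial.natDegree_map]; exact hdeg
  have hQn : Polynomial.derivative^[n] Q0 = 0 := by
    apply Polynomial.iterate_derivative_eq_zero
    refine Polynomial.natDegree_mul_le.trans_lt ?_
    have h1 := Polynomial.natDegree_derivative_le p
    have h2 := Polynomial.natDegree_pow_le (p := p) (n := m-1)
    rw [hpd] at h1 h2
    have h3 : (m-1) * d ≤ d * m := by rw [mul_comm]; exact Nat.mul_le_mul_left _ (by omega)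
    rw [hn, mul_add]
    omega
  have hffk := ff_poly_k p m hm X0 (fun x hx => hslit x hx.le)
  have hE0 : ∀ a, E a (1 - (m:ℂ)) = 0 := by
    intro a
    have h1 := hEM (ff p (1 - (m:ℂ))) (XX a) 0
      (fun k _ y hy => ff_deriv p k _ y (hslit y ((hXX0 a).le.trans hy.1)))
      (fun y hy => by
        rw [hffk n y ((hXX0 a).trans_le hy.1), hQn]; simp)
    rw [mul_zero, norm_le_zero_iff] at h1
    exact h1
  have hpe := poly_em N χ c hper hc n Q0 hQn a0
  have hfin := psi_final ψ hψ0 P m n hm (by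
    refine Polynomial.natDegree_pow_le.trans ?_
    rw [hdeg, hn, mul_add, mul_comm]
    omega) (PsiPolyR ψ (P^m)) rfl
  simp only [hG, hE0, tsum_zero, add_zero]
  have hA1 : ∑ i ∈ Finset.range (a0*N), χ (i+1) * ff p (1 - (m:ℂ)) 0 ((i+1:ℕ):ℝ) =
      ∑ i ∈ Finset.range (a0*N), χ (i+1) * Q0.eval (((i+1 : ℕ):ℝ):ℂ) :=
    Finset.sum_congr rfl fun i _ => by rw [ff_poly p m hm _ (hposne i)]
  have hA2 : ∑ k ∈ Finset.range n, c k * ff p (1 - (m:ℂ)) k (XX 0) =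
      ∑ k ∈ Finset.range n, c k * (Polynomial.derivative^[k] Q0).eval ((XX 0 : ℝ):ℂ) :=
    Finset.sum_congr rfl fun k _ => by rw [hffk k _ (hXX0 0)]
  rw [hA1, hA2, hpe]
  rw [neg_div, ← hfin]
  simp only [hXX, add_zero]
  ring
end

section
/- Let d ≥ 1 and a = (a_1,…,a_d) ∈ ℂ^d with a ≠ (0,…,0), and set δ = (2·max_j |a_j|)^{-1} > 0. For N ∈ ℕ, s = (s_1,…,s_d) ∈ ℂ^d and x ∈ [−δ, δ], define c_ℓ(s) = (−1)^ℓ · Σ_{α ∈ ℕ^d, |α| = ℓ} a^α · Π_{j=1}^d binom(−s_j, α_j) and ρ_N(x; s) = (−1)^{N+1}·(N+1) · Σ_{α ∈ ℕ^d, |α| = N+1} a^α · Π_{j=1}^d binom(−s_j, α_j) · ∫_0^1 (1−t)^N · Π_{j=1}^d (1 − t·x·a_j)^{−s_j−α_j} dt. Then for any N ∈ ℕ, any s ∈ ℂ^d and any x ∈ [−δ, δ], one has Π_{j=1}^d (1 − x·a_j)^{−s_j} = Σ_{ℓ=0}^N c_ℓ(s)·x^ℓ + x^{N+1}·ρ_N(x;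 s). -/
/-- Generalized binomial coefficient `binom(z,k) = z(z-1)⋯(z-k+1)/k!` for `z ∈ ℂ`, `k ∈ ℕ`. -/
noncomputable def cbinom (z : ℂ) (k : ℕ) : ℂ :=
  (∏ i ∈ Finset.range k, (z - (i : ℂ))) / (k.factorial : ℂ)

/-- The Taylor coefficient
`c_ℓ(s) = (-1)^ℓ Σ_{|α|=ℓ} a^α Π_j binom(-s_j, α_j)`. -/
noncomputable def taylorC (d : ℕ) (a : Fin d → ℂ) (ℓ : ℕ) (s : Fin d → ℂ) : ℂ :=
  (-1) ^ ℓ * ∑ α ∈ Finset.Nat.antidiagonalTuple d ℓ,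
    (∏ j, a j ^ α j) * ∏ j, cbinom (-(s j)) (α j)

/-- The remainder
`ρ_N(x;s) = (-1)^{N+1}(N+1) Σ_{|α|=N+1} a^α (Π_j binom(-s_j,α_j))
  ∫_0^1 (1-t)^N Π_j (1-t·x·a_j)^{-s_j-α_j} dt`. -/
noncomputable def taylorRho (d : ℕ) (a : Fin d → ℂ) (N : ℕ) (x : ℝ) (s : Fin d → ℂ) : ℂ :=
  (-1) ^ (N + 1) * (N + 1) * ∑ α ∈ Finset.Nat.antidiagonalTuple d (N + 1),
    (∏ j, a j ^ α j) * (∏ j, cbinom (-(s j)) (α j)) *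
      ∫ t in (0:ℝ)..1,
        ((1 - t) ^ N : ℝ) • ∏ j, (1 - (t : ℂ) * (x : ℂ) * a j) ^ (-(s j) - (α j : ℂ))

lemma cbinom_succ_mul (z : ℂ) (k : ℕ) :
    cbinom z k * (z - k) = (k + 1) * cbinom z (k + 1) := by
  unfold cbinom
  rw [Finset.prod_range_succ, Nat.factorial_succ]
  have h1 : (k.factorial : ℂ) ≠ 0 := by exact_mod_cast k.factorial_ne_zero
  have h2 : (k + 1 : ℂ) ≠ 0 := by exact_mod_cast k.succ_ne_zero
  push_cast
  field_simp

/-- One-variable factor. -/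
noncomputable def uFac (b z : ℂ) (k : ℕ) (t : ℂ) : ℂ :=
  b ^ k * cbinom z k * (1 + t * b) ^ (z - k)

lemma hasDerivAt_uFac (b z : ℂ) (k : ℕ) (t : ℂ) (h : 1 + t * b ∈ Complex.slitPlane) :
    HasDerivAt (uFac b z k) ((k + 1) * uFac b z (k + 1) t) t := by
  have h0 : HasDerivAt (fun t : ℂ => 1 + t * b) b t := by
    simpa using ((hasDerivAt_id t).mul_const b).const_add 1
  have h1 := (h0.cpow_const (c := z - k) h).const_mul (b ^ k * cbinom z k)
  refine h1.congr_deriv ?_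
  unfold uFac
  have e : z - ((k + 1 : ℕ) : ℂ) = z - k - 1 := by push_cast; ring
  rw [e]
  linear_combination b ^ (k + 1) * (1 + t * b) ^ (z - k - 1) * cbinom_succ_mul z k

noncomputable def bigF (d : ℕ) (u : Fin d → ℕ → ℂ → ℂ) (n : ℕ) (t : ℂ) : ℂ :=
  ∑ α ∈ Finset.Nat.antidiagonalTuple d n, ∏ j, u j (α j) t

lemma sum_shift (d n : ℕ) (j : Fin d) (P : (Fin d → ℕ) → ℂ) :
    ∑ α ∈ Finset.Nat.antidiagonalTuple d n,
        ((α j : ℂ) + 1) * P (Function.update α j (α j + 1)) =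
      ∑ β ∈ Finset.Nat.antidiagonalTuple d (n + 1), (β j : ℂ) * P β := by
  have hs : ∀ (α : Fin d → ℕ) (v : ℕ),
      (∑ i, Function.update α j v i) + α j = (∑ i, α i) + v := by
    intro α v
    rw [Finset.sum_update_of_mem (Finset.mem_univ j),
      ← Finset.add_sum_erase Finset.univ α (Finset.mem_univ j), Finset.sdiff_singleton_eq_erase]
    ring
  refine Finset.sum_of_injOn (fun α => Function.update α j (α j + 1)) ?_ ?_ ?_ ?_
  · intro α _ β _ h
    ext i
    have := congrFun h i
    by_cases hi : i = j
    · subst hi; simpa using this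
    · simpa [Function.update_of_ne hi] using this
  · intro α hα
    simp only [Finset.mem_coe, Finset.Nat.mem_antidiagonalTuple] at hα ⊢
    have := hs α (α j + 1)
    omega
  · intro β hβ hn
    rw [Finset.Nat.mem_antidiagonalTuple] at hβ
    by_cases h0 : β j = 0
    · simp [h0]
    · exfalso
      apply hn
      refine ⟨Function.update β j (β j - 1), ?_, ?_⟩
      · simp only [Finset.mem_coe, Finset.Nat.mem_antidiagonalTuple]
        have := hs β (β j - 1)
        omega
      · have : β j - 1 + 1 = β j := by omega
        simp [this]
  · intro α _
    simp

lemma hasDerivAt_bigF (d : ℕ) (u : Fin d → ℕ → ℂ → ℂ) (t : ℂ)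
    (hu : ∀ j k, HasDerivAt (u j k) ((k + 1) * u j (k + 1) t) t) (n : ℕ) :
    HasDerivAt (bigF d u n) ((n + 1) * bigF d u (n + 1) t) t := by
  have h1 : HasDerivAt (bigF d u n) (∑ α ∈ Finset.Nat.antidiagonalTuple d n,
      ∑ j, (∏ i ∈ Finset.univ.erase j, u i (α i) t) • ((α j + 1) * u j (α j + 1) t)) t := by
    unfold bigF
    refine HasDerivAt.fun_sum fun α _ => ?_
    exact HasDerivAt.fun_finsetProd fun j _ => hu j (α j)
  refine h1.congr_deriv ?_
  rw [Finset.sum_comm]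
  have h2 : ∀ j : Fin d, ∑ α ∈ Finset.Nat.antidiagonalTuple d n,
      (∏ i ∈ Finset.univ.erase j, u i (α i) t) • (((α j : ℂ) + 1) * u j (α j + 1) t) =
      ∑ β ∈ Finset.Nat.antidiagonalTuple d (n + 1), (β j : ℂ) * ∏ i, u i (β i) t := by
    intro j
    rw [← sum_shift d n j (fun β => ∏ i, u i (β i) t)]
    refine Finset.sum_congr rfl fun α _ => ?_
    rw [← Finset.mul_prod_erase Finset.univ _ (Finset.mem_univ j)]
    have : ∏ i ∈ Finset.univ.erase j, u i (Function.update α j (α j + 1) i) t =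
        ∏ i ∈ Finset.univ.erase j, u i (α i) t := by
      refine Finset.prod_congr rfl fun i hi => ?_
      rw [Function.update_of_ne (Finset.ne_of_mem_erase hi)]
    rw [this, Function.update_self, smul_eq_mul]
    ring
  rw [Finset.sum_congr rfl fun j _ => h2 j, Finset.sum_comm, bigF, Finset.mul_sum]
  refine Finset.sum_congr rfl fun β hβ => ?_
  rw [Finset.Nat.mem_antidiagonalTuple] at hβ
  rw [← Finset.sum_mul]
  congr 1
  exact_mod_cast hβ

lemma hasDerivAt_H (F : ℕ → ℂ → ℂ) (t : ℂ)
    (hF : ∀ n : ℕ, HasDerivAt (F n) ((n + 1) * F (n + 1) t) t) (N : ℕ) :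
    HasDerivAt (fun t => ∑ l ∈ Finset.range (N + 1), (1 - t) ^ l * F l t)
      ((N + 1) * (1 - t) ^ N * F (N + 1) t) t := by
  induction N with
  | zero => simpa using hF 0
  | succ N ih =>
    have h0 : HasDerivAt (fun t : ℂ => 1 - t) (-1) t := by
      simpa using (hasDerivAt_id t).const_sub 1
    have := ih.fun_add ((h0.fun_pow (N + 1)).fun_mul (hF (N + 1)))
    simp_rw [Finset.sum_range_succ _ (N + 1)]
    refine this.congr_deriv ?_
    push_cast
    ring_nf

/-- the Taylor expansion with remainder
`Π_j (1-x·a_j)^{-s_j} = Σ_{ℓ=0}^N c_ℓ(s) x^ℓ + x^{N+1} ρ_N(x;s)`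
for `x ∈ [-δ,δ]` with `δ = (2·max_j |a_j|)⁻¹`. -/
theorem taylor_expansion_with_remainder
    (d : ℕ) (hd : 1 ≤ d) (a : Fin d → ℂ) (ha : a ≠ 0)
    (δ : ℝ) (hδ : δ = (2 * ⨆ j, ‖a j‖)⁻¹)
    (N : ℕ) (s : Fin d → ℂ) (x : ℝ) (hx : x ∈ Set.Icc (-δ) δ) :
    ∏ j, (1 - (x : ℂ) * a j) ^ (-(s j)) =
      (∑ ℓ ∈ Finset.range (N + 1), taylorC d a ℓ s * (x : ℂ) ^ ℓ) +
        (x : ℂ) ^ (N + 1) * taylorRho d a N x s := by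
  have hxa : ∀ j, |x| * ‖a j‖ ≤ 1 / 2 := by
    intro j
    have h1 : ‖a j‖ ≤ ⨆ j, ‖a j‖ := le_ciSup (f := fun j => ‖a j‖) (Set.finite_range _).bddAbove j
    have h2 : |x| ≤ δ := abs_le.mpr hx
    have h0 : 0 ≤ ⨆ j, ‖a j‖ := (norm_nonneg _).trans h1
    calc |x| * ‖a j‖ ≤ δ * ⨆ j, ‖a j‖ := by gcongr; exact (abs_nonneg x).trans h2
      _ = (⨆ j, ‖a j‖)⁻¹ * (⨆ j, ‖a j‖) / 2 := by rw [hδ, mul_inv]; ring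
      _ ≤ 1 / 2 := by gcongr; exact inv_mul_le_one
  have hslit : ∀ j, ∀ t ∈ Set.Icc (0:ℝ) 1,
      1 + (t : ℂ) * (-(x : ℂ) * a j) ∈ Complex.slitPlane := by
    intro j t ht
    apply Complex.mem_slitPlane_of_norm_lt_one
    have : ‖(t : ℂ) * (-(x : ℂ) * a j)‖ = t * (|x| * ‖a j‖) := by
      simp [abs_of_nonneg ht.1]
    rw [this]
    have := hxa j
    have h0 : 0 ≤ |x| * ‖a j‖ := by positivity
    nlinarith [ht.1, ht.2]
  set u : Fin d → ℕ → ℂ → ℂ := fun j => uFac (-(x : ℂ) * a j) (-(s j)) with hu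
  have hprod : ∀ n, ∀ α ∈ Finset.Nat.antidiagonalTuple d n, ∀ t : ℂ,
      ∏ j, u j (α j) t = (-1) ^ n * (x : ℂ) ^ n * ((∏ j, a j ^ α j) * ∏ j, cbinom (-(s j)) (α j)) *
        ∏ j, (1 - t * x * a j) ^ (-(s j) - (α j : ℂ)) := by
    intro n α hα t
    rw [Finset.Nat.mem_antidiagonalTuple] at hα
    simp only [hu, uFac, Finset.prod_mul_distrib, mul_pow]
    rw [Finset.prod_pow_eq_pow_sum, hα, neg_pow]
    have : ∀ j, 1 + t * (-(x : ℂ) * a j) = 1 - t * x * a j := fun j => by ring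
    simp only [this]
    ring
  have hderu : ∀ t ∈ Set.Icc (0:ℝ) 1, ∀ j k,
      HasDerivAt (u j k) ((k + 1) * u j (k + 1) t) (t : ℂ) :=
    fun t ht j k => hasDerivAt_uFac _ _ _ _ (hslit j t ht)
  have hderF := fun t ht => hasDerivAt_bigF d u (t : ℝ) (hderu t ht)
  have hderH := fun t ht => (hasDerivAt_H (bigF d u) (t : ℝ) (hderF t ht) N).comp_ofReal
  have hcont : ∀ α : Fin d → ℕ, ContinuousOn (fun t : ℝ => ((1 - t) ^ N : ℝ) •
      ∏ j, (1 - (t : ℂ) * (x : ℂ) * a j) ^ (-(s j) - (α j : ℂ))) (Set.uIcc 0 1) := by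
    intro α
    rw [Set.uIcc_of_le zero_le_one]
    have hc : ContinuousOn (fun t : ℝ => (1 - t) ^ N) (Set.Icc 0 1) := by fun_prop
    refine hc.smul ?_
    refine continuousOn_finset_prod _ fun j _ => ?_
    refine ContinuousOn.cpow_const ?_ ?_
    · fun_prop
    intro t ht
    have := hslit j t ht
    have e : 1 + (t : ℂ) * (-(x : ℂ) * a j) = 1 - t * x * a j := by ring
    rwa [e] at this
  have hcont2 : ContinuousOn (fun t : ℝ => ((N:ℂ) + 1) * (1 - (t:ℂ)) ^ N * bigF d u (N + 1) t)
      (Set.uIcc 0 1) := by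
    rw [Set.uIcc_of_le zero_le_one]
    refine ContinuousOn.mul (by fun_prop) ?_
    intro t ht
    exact (hderF t ht (N + 1)).comp_ofReal.continuousAt.continuousWithinAt
  have hFTC := intervalIntegral.integral_eq_sub_of_hasDerivAt
    (fun t ht => hderH t (by rwa [Set.uIcc_of_le zero_le_one] at ht))
    hcont2.intervalIntegrable
  have hint : ∫ t in (0:ℝ)..1, ((N:ℂ) + 1) * (1 - (t:ℂ)) ^ N * bigF d u (N + 1) t =
      (x : ℂ) ^ (N + 1) * taylorRho d a N x s := by
    unfold taylorRho
    rw [Finset.mul_sum, Finset.mul_sum]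
    simp only [← intervalIntegral.integral_const_mul]
    rw [← intervalIntegral.integral_finsetSum]
    · refine intervalIntegral.integral_congr fun t _ => ?_
      simp only [bigF]
      rw [Finset.mul_sum]
      refine Finset.sum_congr rfl fun α hα => ?_
      rw [hprod _ α hα, Complex.real_smul]
      push_cast
      ring
    · intro α _
      exact ((((hcont α).const_mul _).const_mul _).const_mul _).intervalIntegrable
  rw [hint] at hFTC
  have h1 : ∑ l ∈ Finset.range (N + 1), (1 - ((1:ℝ):ℂ)) ^ l * bigF d u l ((1:ℝ):ℂ) =
      ∏ j, (1 - (x : ℂ) * a j) ^ (-(s j)) := by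
    rw [Finset.sum_range_succ']
    simp [bigF, hu, uFac, cbinom, Finset.Nat.antidiagonalTuple_zero_right, sub_eq_add_neg]
  have h0 : ∑ l ∈ Finset.range (N + 1), (1 - ((0:ℝ):ℂ)) ^ l * bigF d u l ((0:ℝ):ℂ) =
      ∑ ℓ ∈ Finset.range (N + 1), taylorC d a ℓ s * (x : ℂ) ^ ℓ := by
    refine Finset.sum_congr rfl fun l _ => ?_
    rw [bigF, Finset.sum_congr rfl fun α hα => hprod l α hα _]
    simp only [taylorC, Finset.mul_sum, Finset.sum_mul]
    refine Finset.sum_congr rfl fun α _ => ?_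
    simp
    ring
  rw [h1, h0] at hFTC
  rw [hFTC]
  ring
end

section
/- For every polynomial E ∈ ℂ[X], one has Ψ_χ(E(N + X)) − Ψ_χ(E) = Σ_{n=1}^{N} χ(n)·E'(n), where E(N+X) denotes the polynomial obtained from E by substituting N + X for X. -/
/-- The linear form `Ψ_χ` applied to a complex polynomial `Q`, where `ψ m = Ψ_χ(X^m)`. -/
noncomputable def PsiPoly (ψ : ℕ → ℂ) (Q : Polynomial ℂ) : ℂ :=
  ∑ k ∈ Q.support, Q.coeff k * ψ k

theorem PsiPoly_eq_range (ψ : ℕ → ℂ) (Q : Polynomial ℂ) (n : ℕ) (h : Q.natDegree < n) :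
    PsiPoly ψ Q = ∑ k ∈ Finset.range n, Q.coeff k * ψ k :=
  Polynomial.sum_over_range' Q (f := fun k a => a * ψ k) (by simp) n h

theorem PsiPoly_add (ψ : ℕ → ℂ) (P Q : Polynomial ℂ) :
    PsiPoly ψ (P + Q) = PsiPoly ψ P + PsiPoly ψ Q :=
  Polynomial.sum_add_index P Q (fun k a => a * ψ k) (by simp) (by intros; ring)

theorem PsiPoly_monomial (ψ : ℕ → ℂ) (m : ℕ) (a : ℂ) :
    PsiPoly ψ (Polynomial.monomial m a) = a * ψ m :=
  Polynomial.sum_monomial_index (f := fun k a => a * ψ k) a (by simp)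

theorem PsiPoly_shift (ψ : ℕ → ℂ) (m : ℕ) (a c : ℂ) :
    PsiPoly ψ ((Polynomial.monomial m a).comp (Polynomial.C c + Polynomial.X)) =
      a * ∑ k ∈ Finset.range (m + 1), c ^ (m - k) * (m.choose k : ℂ) * ψ k := by
  rw [PsiPoly_eq_range ψ _ (m + 1), Finset.mul_sum]
  · refine Finset.sum_congr rfl fun k _ => ?_
    rw [Polynomial.monomial_comp, Polynomial.coeff_C_mul, add_comm (Polynomial.C c),
      Polynomial.coeff_X_add_C_pow]
    ring
  · rw [Nat.lt_succ_iff, Polynomial.natDegree_comp]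
    have h1 : (Polynomial.C c + Polynomial.X).natDegree = 1 := by
      rw [add_comm]; exact Polynomial.natDegree_X_add_C c
    rw [h1, mul_one]
    exact Polynomial.natDegree_monomial_le a

theorem shift_coeff (N : ℕ) (χ : ℕ → ℂ) (ψ : ℕ → ℂ)
    (hψ : PowerSeries.X * (∑ n ∈ Finset.Icc 1 N,
        PowerSeries.C (χ n) * PowerSeries.rescale (n : ℂ) (PowerSeries.exp ℂ)) =
      (1 - PowerSeries.rescale (N : ℂ) (PowerSeries.exp ℂ)) *
        (- PowerSeries.mk fun m => ψ m / (m.factorial : ℂ))) (m : ℕ) :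
    ∑ k ∈ Finset.range (m + 1), (N : ℂ) ^ (m - k) * (m.choose k : ℂ) * ψ k - ψ m =
      ∑ n ∈ Finset.Icc 1 N, χ n * ((m : ℂ) * (n : ℂ) ^ (m - 1)) := by
  have hm : (m.factorial : ℂ) ≠ 0 := by exact_mod_cast m.factorial_ne_zero
  have hR : (1 - PowerSeries.rescale (N : ℂ) (PowerSeries.exp ℂ)) *
        (- PowerSeries.mk fun m => ψ m / (m.factorial : ℂ)) =
      (PowerSeries.mk fun m => ψ m / (m.factorial : ℂ)) *
        PowerSeries.rescale (N : ℂ) (PowerSeries.exp ℂ) -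
        (PowerSeries.mk fun m => ψ m / (m.factorial : ℂ)) := by ring
  rw [hR] at hψ
  have h := congrArg (fun f => (m.factorial : ℂ) * PowerSeries.coeff m f) hψ
  simp only [map_sub] at h
  rw [PowerSeries.coeff_mul m (PowerSeries.mk _)] at h
  simp only [PowerSeries.coeff_mk, PowerSeries.coeff_rescale, PowerSeries.coeff_exp] at h
  rw [Finset.Nat.sum_antidiagonal_eq_sum_range_succ_mk, mul_sub, mul_div_cancel₀ _ hm] at h
  have h2 : ∑ k ∈ Finset.range (m + 1), (N : ℂ) ^ (m - k) * (m.choose k : ℂ) * ψ k =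
      ∑ k ∈ Finset.range (m + 1), (m.factorial : ℂ) * (ψ k / (k.factorial : ℂ) *
        ((N : ℂ) ^ (m - k) * (algebraMap ℚ ℂ) (1 / ((m - k).factorial : ℚ)))) := by
    refine Finset.sum_congr rfl fun k hk => ?_
    have hk' : k ≤ m := Nat.lt_succ_iff.mp (Finset.mem_range.mp hk)
    rw [Nat.cast_choose ℂ hk']
    simp
    field_simp
  rw [h2, ← Finset.mul_sum]
  refine h.symm.trans ?_
  cases m with
  | zero => simp
  | succ m =>
    rw [mul_comm PowerSeries.X, PowerSeries.coeff_succ_mul_X, map_sum, Finset.mul_sum]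
    refine Finset.sum_congr rfl fun n _ => ?_
    have hm' : (m.factorial : ℂ) ≠ 0 := by exact_mod_cast m.factorial_ne_zero
    rw [PowerSeries.coeff_C_mul, PowerSeries.coeff_rescale, PowerSeries.coeff_exp,
      Nat.factorial_succ]
    simp
    field_simp

/-- `Ψ_χ(E(N+X)) - Ψ_χ(E) = Σ_{n=1}^N χ(n)·E'(n)` for every polynomial `E`. -/
theorem Psi_shift_by_period
    (N : ℕ) (hN : 1 ≤ N) (χ : ℕ → ℂ)
    (hper : ∀ n : ℕ, 1 ≤ n → χ (n + N) = χ n)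
    (hsum : ∑ n ∈ Finset.Icc 1 N, χ n = 0)
    (ψ : ℕ → ℂ)
    (hψ : PowerSeries.X * (∑ n ∈ Finset.Icc 1 N,
        PowerSeries.C (χ n) * PowerSeries.rescale (n : ℂ) (PowerSeries.exp ℂ)) =
      (1 - PowerSeries.rescale (N : ℂ) (PowerSeries.exp ℂ)) *
        (- PowerSeries.mk fun m => ψ m / (m.factorial : ℂ)))
    (E : Polynomial ℂ) :
    PsiPoly ψ (E.comp (Polynomial.C (N : ℂ) + Polynomial.X)) - PsiPoly ψ E =
      ∑ n ∈ Finset.Icc 1 N, χ n * (Polynomial.derivative E).eval ((n : ℕ) : ℂ) := by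
  clear hper hsum hN
  induction E using Polynomial.induction_on' with
  | add P Q hP hQ =>
    rw [Polynomial.add_comp, PsiPoly_add, PsiPoly_add, Polynomial.derivative_add]
    simp only [Polynomial.eval_add, mul_add, Finset.sum_add_distrib]
    rw [← hP, ← hQ]
    ring
  | monomial m a =>
    rw [PsiPoly_shift, PsiPoly_monomial, ← mul_sub, shift_coeff N χ ψ hψ m, Finset.mul_sum]
    refine Finset.sum_congr rfl fun n _ => ?_
    rw [Polynomial.derivative_monomial, Polynomial.eval_monomial]
    ring
end

section
/- For every polynomial P ∈ ℂ[X], every positive integer m, and every positive integer ℓ, one has Ψ_χ(P(ℓN + X)^m) − Ψ_χ(P^m) = m · Σ_{n=1}^{ℓN} χ(n)·P'(n)·P(n)^{m−1}, where P(ℓN+X) denotes the polynomial obtained from P by substituting ℓN + X for X. -/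
open Polynomial in
/-- The linear map underlying `PsiPoly`. -/
noncomputable def PsiLin (ψ : ℕ → ℂ) : ℂ[X] →ₗ[ℂ] ℂ :=
  Polynomial.lsum fun k => ψ k • (LinearMap.id : ℂ →ₗ[ℂ] ℂ)

lemma PsiPoly_eq (ψ : ℕ → ℂ) (Q : Polynomial ℂ) : PsiPoly ψ Q = PsiLin ψ Q := by
  simp [PsiPoly, PsiLin, Polynomial.lsum_apply, Polynomial.sum_def, mul_comm]

lemma PsiLin_C_mul_X_pow (ψ : ℕ → ℂ) (a : ℂ) (k : ℕ) :
    PsiLin ψ (Polynomial.C a * Polynomial.X ^ k) = a * ψ k := by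
  rw [PsiLin, Polynomial.C_mul_X_pow_eq_monomial, Polynomial.lsum_apply,
    Polynomial.sum_monomial_index]
  · simp [mul_comm]
  · simp

lemma Psi_step_pow (N : ℕ) (χ ψ : ℕ → ℂ)
    (hψ : PowerSeries.X * (∑ n ∈ Finset.Icc 1 N,
        PowerSeries.C (χ n) * PowerSeries.rescale (n : ℂ) (PowerSeries.exp ℂ)) =
      (1 - PowerSeries.rescale (N : ℂ) (PowerSeries.exp ℂ)) *
        (- PowerSeries.mk fun m => ψ m / (m.factorial : ℂ))) (k : ℕ) :
    PsiLin ψ ((Polynomial.C (N : ℂ) + Polynomial.X) ^ k) - ψ k =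
      ∑ n ∈ Finset.Icc 1 N, χ n * ((k : ℂ) * (n : ℂ) ^ (k - 1)) := by
  have hk : (k.factorial : ℂ) ≠ 0 := by exact_mod_cast k.factorial_ne_zero
  have h1 : PsiLin ψ ((Polynomial.C (N : ℂ) + Polynomial.X) ^ k) =
      k.factorial * ∑ p ∈ Finset.HasAntidiagonal.antidiagonal k,
        (N : ℂ) ^ p.1 / p.1.factorial * (ψ p.2 / p.2.factorial) := by
    rw [(Commute.all _ _).add_pow', map_sum, Finset.mul_sum]
    refine Finset.sum_congr rfl fun p hp => ?_
    have hp' := Finset.HasAntidiagonal.mem_antidiagonal.1 hp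
    rw [map_nsmul, ← Polynomial.C_pow, PsiLin_C_mul_X_pow, nsmul_eq_mul, ← hp',
      Nat.choose_symm_add, Nat.add_choose, Nat.cast_div (Nat.factorial_mul_factorial_dvd_factorial_add _ _)
      (by exact_mod_cast Nat.mul_ne_zero (Nat.factorial_ne_zero _) (Nat.factorial_ne_zero _))]
    push_cast
    have := Nat.factorial_ne_zero p.1
    have := Nat.factorial_ne_zero p.2
    field_simp
  have h2 := congrArg (PowerSeries.coeff k) hψ
  have h3 : PowerSeries.coeff k ((1 - PowerSeries.rescale (N : ℂ) (PowerSeries.exp ℂ)) *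
        (- PowerSeries.mk fun m => ψ m / (m.factorial : ℂ))) =
      (∑ p ∈ Finset.HasAntidiagonal.antidiagonal k,
        (N : ℂ) ^ p.1 / p.1.factorial * (ψ p.2 / p.2.factorial)) - ψ k / k.factorial := by
    rw [mul_neg, sub_mul, one_mul, neg_sub, map_sub, PowerSeries.coeff_mul]
    simp [PowerSeries.coeff_rescale, PowerSeries.coeff_exp, div_eq_mul_inv]
  have h4 : k.factorial * PowerSeries.coeff k (PowerSeries.X * (∑ n ∈ Finset.Icc 1 N,
        PowerSeries.C (χ n) * PowerSeries.rescale (n : ℂ) (PowerSeries.exp ℂ))) =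
      ∑ n ∈ Finset.Icc 1 N, χ n * ((k : ℂ) * (n : ℂ) ^ (k - 1)) := by
    cases k with
    | zero => simp
    | succ j =>
      rw [PowerSeries.coeff_succ_X_mul, map_sum, Finset.mul_sum]
      refine Finset.sum_congr rfl fun n _ => ?_
      have := Nat.factorial_ne_zero j
      simp only [PowerSeries.coeff_C_mul, PowerSeries.coeff_rescale, PowerSeries.coeff_exp,
        Nat.factorial_succ]
      simp
      field_simp
  rw [← h4, h2, h3, h1, mul_sub, mul_div_cancel₀ _ hk]

lemma Psi_step (N : ℕ) (χ ψ : ℕ → ℂ)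
    (hψ : PowerSeries.X * (∑ n ∈ Finset.Icc 1 N,
        PowerSeries.C (χ n) * PowerSeries.rescale (n : ℂ) (PowerSeries.exp ℂ)) =
      (1 - PowerSeries.rescale (N : ℂ) (PowerSeries.exp ℂ)) *
        (- PowerSeries.mk fun m => ψ m / (m.factorial : ℂ))) (Q : Polynomial ℂ) :
    PsiLin ψ (Q.comp (Polynomial.C (N : ℂ) + Polynomial.X)) - PsiLin ψ Q =
      ∑ n ∈ Finset.Icc 1 N, χ n * (Polynomial.derivative Q).eval (n : ℂ) := by
  induction Q using Polynomial.induction_on' with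
  | add p q hp hq =>
    simp only [Polynomial.add_comp, map_add, Polynomial.eval_add, mul_add,
      Finset.sum_add_distrib, ← hp, ← hq]
    ring
  | monomial k a =>
    have h := Psi_step_pow N χ ψ hψ k
    rw [← Polynomial.C_mul_X_pow_eq_monomial, PsiLin_C_mul_X_pow, Polynomial.mul_comp,
      Polynomial.C_comp, Polynomial.X_pow_comp, ← Polynomial.smul_eq_C_mul, map_smul,
      smul_eq_mul, ← mul_sub, h, Finset.mul_sum]
    refine Finset.sum_congr rfl fun n _ => ?_
    simp [Polynomial.derivative_X_pow]
    ring

lemma Psi_steps (N : ℕ) (χ ψ : ℕ → ℂ)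
    (hper : ∀ n : ℕ, 1 ≤ n → χ (n + N) = χ n)
    (hψ : PowerSeries.X * (∑ n ∈ Finset.Icc 1 N,
        PowerSeries.C (χ n) * PowerSeries.rescale (n : ℂ) (PowerSeries.exp ℂ)) =
      (1 - PowerSeries.rescale (N : ℂ) (PowerSeries.exp ℂ)) *
        (- PowerSeries.mk fun m => ψ m / (m.factorial : ℂ))) (Q : Polynomial ℂ) (ℓ : ℕ) :
    PsiLin ψ (Q.comp (Polynomial.C ((ℓ * N : ℕ) : ℂ) + Polynomial.X)) - PsiLin ψ Q =
      ∑ n ∈ Finset.Icc 1 (ℓ * N), χ n * (Polynomial.derivative Q).eval (n : ℂ) := by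
  have hper' : ∀ l n : ℕ, 1 ≤ n → χ (n + l * N) = χ n := by
    intro l n hn
    induction l with
    | zero => simp
    | succ l ih => rw [Nat.succ_mul, ← add_assoc, hper _ (by omega), ih]
  induction ℓ with
  | zero => simp
  | succ l ih =>
    have h := Psi_step N χ ψ hψ (Q.comp (Polynomial.C ((l * N : ℕ) : ℂ) + Polynomial.X))
    have e : (Q.comp (Polynomial.C ((l * N : ℕ) : ℂ) + Polynomial.X)).comp
        (Polynomial.C (N : ℂ) + Polynomial.X) =
        Q.comp (Polynomial.C (((l + 1) * N : ℕ) : ℂ) + Polynomial.X) := by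
      rw [Polynomial.comp_assoc]
      congr 1
      simp
      ring
    rw [e] at h
    have hs : ∑ n ∈ Finset.Icc 1 ((l + 1) * N), χ n * (Polynomial.derivative Q).eval (n : ℂ) =
        ∑ n ∈ Finset.Icc 1 (l * N), χ n * (Polynomial.derivative Q).eval (n : ℂ) +
        ∑ n ∈ Finset.Icc 1 N, χ n * (Polynomial.derivative
          (Q.comp (Polynomial.C ((l * N : ℕ) : ℂ) + Polynomial.X))).eval (n : ℂ) := by
      have hI : ∀ M, Finset.Icc 1 M = Finset.Ico 1 (M + 1) := fun M => by ext; simp [Nat.lt_succ_iff]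
      simp only [hI, Finset.sum_Ico_eq_sum_range, Nat.add_sub_cancel]
      rw [Nat.succ_mul, Finset.sum_range_add]
      congr 1
      refine Finset.sum_congr rfl fun n _ => ?_
      rw [show 1 + (l * N + n) = (1 + n) + l * N by ring, hper' _ _ (by omega)]
      simp [Polynomial.derivative_comp, add_comm, add_left_comm]
    rw [hs, ← h, ← ih]
    ring

/-- `Ψ_χ(P(ℓN+X)^m) - Ψ_χ(P^m) = m·Σ_{n=1}^{ℓN} χ(n)·P'(n)·P(n)^{m-1}` for every
polynomial `P` and positive integers `m`, `ℓ`. -/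
theorem Psi_shift_of_power
    (N : ℕ) (hN : 1 ≤ N) (χ : ℕ → ℂ)
    (hper : ∀ n : ℕ, 1 ≤ n → χ (n + N) = χ n)
    (hsum : ∑ n ∈ Finset.Icc 1 N, χ n = 0)
    (ψ : ℕ → ℂ)
    (hψ : PowerSeries.X * (∑ n ∈ Finset.Icc 1 N,
        PowerSeries.C (χ n) * PowerSeries.rescale (n : ℂ) (PowerSeries.exp ℂ)) =
      (1 - PowerSeries.rescale (N : ℂ) (PowerSeries.exp ℂ)) *
        (- PowerSeries.mk fun m => ψ m / (m.factorial : ℂ)))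
    (P : Polynomial ℂ) (m : ℕ) (hm : 0 < m) (ℓ : ℕ) (hℓ : 0 < ℓ) :
    PsiPoly ψ ((P.comp (Polynomial.C ((ℓ * N : ℕ) : ℂ) + Polynomial.X)) ^ m) -
        PsiPoly ψ (P ^ m) =
      (m : ℂ) * ∑ n ∈ Finset.Icc 1 (ℓ * N),
        χ n * (Polynomial.derivative P).eval ((n : ℕ) : ℂ) * (P.eval ((n : ℕ) : ℂ)) ^ (m - 1) := by
  have h := Psi_steps N χ ψ hper hψ (P ^ m) ℓ
  rw [PsiPoly_eq, PsiPoly_eq, ← Polynomial.pow_comp, h, Finset.mul_sum]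
  refine Finset.sum_congr rfl fun n _ => ?_
  rw [Polynomial.derivative_pow]
  simp
  ring
end

section
/- Let d ≥ 1, a = (a_1,…,a_d) ∈ ℂ^d, ℓ ∈ ℕ, and s ∈ ℂ with s ≠ 1. For each j ∈ {1,…,d}, let f_j(s) = (s_1,…,s_d) ∈ ℂ^d where s_j = s and s_k = s − 1 for k ≠ j, and let c_ℓ(s_1,…,s_d) = (−1)^ℓ · Σ_{α ∈ ℕ^d, |α| = ℓ} a^α · Π_{k=1}^d binom(−s_k, α_k). Then Σ_{j=1}^d c_ℓ(f_j(s)) = (−1)^ℓ · Σ_{α ∈ ℕ^d, |α| = ℓ} a^α · (Π_{k=1}^d binom(−s+1, α_k)) · (ds − d + ℓ)/(s − 1). -/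
theorem cbinom_shift (s : ℂ) (hs : s ≠ 1) (k : ℕ) :
    cbinom (-s) k = cbinom (-s + 1) k * ((s - 1 + (k : ℂ)) / (s - 1)) := by
  have h1 : s - 1 ≠ 0 := sub_ne_zero.mpr hs
  have key : ∀ k : ℕ, (s - 1) * ∏ i ∈ Finset.range k, (-s - (i : ℂ)) =
      (∏ i ∈ Finset.range k, (-s + 1 - (i : ℂ))) * (s - 1 + (k : ℂ)) := by
    intro k
    induction k with
    | zero => simp
    | succ n ih =>
      rw [Finset.prod_range_succ, Finset.prod_range_succ, ← mul_assoc, ih]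
      push_cast
      ring
  have hk : (k.factorial : ℂ) ≠ 0 := by exact_mod_cast k.factorial_ne_zero
  unfold cbinom
  rw [div_mul_div_comm, div_eq_div_iff hk (mul_ne_zero hk h1), ← key k]
  ring

/-- with `f_j(s) = (s_1,…,s_d)` where `s_j = s` and `s_k = s-1` for `k ≠ j`,
`Σ_{j=1}^d c_ℓ(f_j(s)) = (-1)^ℓ Σ_{|α|=ℓ} a^α (Π_k binom(-s+1, α_k)) (ds-d+ℓ)/(s-1)`. -/
theorem sum_taylorC_eval
    (d : ℕ) (hd : 1 ≤ d) (a : Fin d → ℂ) (ℓ : ℕ) (s : ℂ) (hs : s ≠ 1) :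
    ∑ j, taylorC d a ℓ (fun k => if k = j then s else s - 1) =
      (-1) ^ ℓ * ∑ α ∈ Finset.Nat.antidiagonalTuple d ℓ,
        (∏ k, a k ^ α k) * (∏ k, cbinom (-s + 1) (α k)) *
          (((d : ℂ) * s - (d : ℂ) + (ℓ : ℂ)) / (s - 1)) := by
  have h1 : s - 1 ≠ 0 := sub_ne_zero.mpr hs
  unfold taylorC
  rw [← Finset.mul_sum, Finset.sum_comm]
  congr 1
  refine Finset.sum_congr rfl fun α hα => ?_
  rw [Finset.Nat.mem_antidiagonalTuple] at hα
  have hp : ∀ j : Fin d, ∏ k, cbinom (-(if k = j then s else s - 1)) (α k) =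
      (∏ k, cbinom (-s + 1) (α k)) * ((s - 1 + (α j : ℂ)) / (s - 1)) := by
    intro j
    have : ∀ k, cbinom (-(if k = j then s else s - 1)) (α k) =
        cbinom (-s + 1) (α k) * (if k = j then (s - 1 + (α j : ℂ)) / (s - 1) else 1) := by
      intro k
      split_ifs with h
      · subst h
        exact cbinom_shift s hs _
      · rw [mul_one]
        congr 1
        ring
    rw [Finset.prod_congr rfl fun k _ => this k, Finset.prod_mul_distrib]
    simp
  rw [Finset.sum_congr rfl fun j _ => by rw [hp j, ← mul_assoc], ← Finset.mul_sum]
  congr 1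
  rw [← Finset.sum_div, Finset.sum_add_distrib, ← hα]
  simp
end

section
/- Let d ≥ 1, a = (a_1,…,a_d) ∈ ℂ^d with a ≠ (0,…,0), set δ = (2·max_j |a_j|)^{-1}, let m be a positive integer, and set N = d·m. For each j ∈ {1,…,d}, let f_j(1−m) = (s_1,…,s_d) ∈ ℂ^d where s_j = 1−m and s_k = −m for k ≠ j. Then for every j ∈ {1,…,d} and every x ∈ [−δ, δ], one has ρ_N(x; f_j(1−m)) = 0. (Indeed, for every α ∈ ℕ^d with |α| = N+1, either α_j > m−1 or there exists k ≠ j with α_k > m, so every generalized binomial coefficient appearing in the sum vanishes.) -/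
theorem cbinom_natCast_eq_zero (n k : ℕ) (h : n < k) : cbinom (n : ℂ) k = 0 := by
  unfold cbinom
  rw [Finset.prod_eq_zero (Finset.mem_range.mpr h) (sub_self _), zero_div]

/-- with `N = d·m` and `f_j(1-m) = (s_1,…,s_d)` where `s_j = 1-m` and
`s_k = -m` for `k ≠ j`, the remainder `ρ_N(x; f_j(1-m))` vanishes for every
`x ∈ [-δ,δ]` and every `j`. -/
theorem taylorRho_vanishes_at_negative_integers
    (d : ℕ) (hd : 1 ≤ d) (a : Fin d → ℂ) (ha : a ≠ 0)
    (δ : ℝ) (hδ : δ = (2 * ⨆ j, ‖a j‖)⁻¹)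
    (m : ℕ) (hm : 0 < m) (j : Fin d) (x : ℝ) (hx : x ∈ Set.Icc (-δ) δ) :
    taylorRho d a (d * m) x (fun k => if k = j then 1 - (m : ℂ) else -(m : ℂ)) = 0 := by
  unfold taylorRho
  rw [Finset.sum_eq_zero, mul_zero]
  intro α hα
  rw [Finset.Nat.mem_antidiagonalTuple] at hα
  obtain ⟨k, hk⟩ : ∃ k, m < α k := by
    by_contra! hcon
    have h1 : ∑ i, α i ≤ ∑ _i : Fin d, m := Finset.sum_le_sum fun i _ => hcon i
    simp at h1
    omega
  have hz : ∏ i, cbinom (-((fun k => if k = j then 1 - (m : ℂ) else -(m : ℂ)) i)) (α i) = 0 := by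
    apply Finset.prod_eq_zero (Finset.mem_univ k)
    by_cases hkj : k = j
    · have h2 : -(1 - (m : ℂ)) = ((m - 1 : ℕ) : ℂ) := by
        rw [Nat.cast_sub hm]
        push_cast
        ring
      simp only [if_pos hkj]
      rw [h2]
      exact cbinom_natCast_eq_zero _ _ (by omega)
    · simp only [if_neg hkj, neg_neg]
      exact cbinom_natCast_eq_zero _ _ hk
  rw [hz, mul_zero, zero_mul]
end

section
/- Let F : ℂ → ℂ be holomorphic on ℂ with F(s) = Σ_{n=1}^∞ χ(n)·n^{−s} for all s with Re(s) > 1 (such an F exists since χ has zero sum over a period). Then for every positive integer m, F(1−m) = −Ψ_χ(X^m)/m. -/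
section aux
open Filter Topology Asymptotics Set MeasureTheory

/-- `f` has asymptotic expansion `φ` at `0` up to order `n`. -/
def AsymExp (n : ℕ) (f : ℂ → ℂ) (φ : PowerSeries ℂ) : Prop :=
  (fun t => f t - (PowerSeries.trunc n φ).eval t) =O[𝓝 0] (fun t : ℂ => t ^ n)

lemma AsymExp.add {n : ℕ} {f g : ℂ → ℂ} {φ γ : PowerSeries ℂ} (hf : AsymExp n f φ)
    (hg : AsymExp n g γ) : AsymExp n (fun t => f t + g t) (φ + γ) := by
  refine (IsBigO.add hf hg).congr_left fun t => ?_
  simp; ring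

lemma AsymExp.neg {n : ℕ} {f : ℂ → ℂ} {φ : PowerSeries ℂ} (hf : AsymExp n f φ) :
    AsymExp n (fun t => - f t) (-φ) := by
  refine (IsBigO.neg_left hf).congr_left fun t => ?_
  have : PowerSeries.trunc n (-φ) = - PowerSeries.trunc n φ := by
    ext d; simp [PowerSeries.coeff_trunc]
  rw [this, Polynomial.eval_neg]; ring

lemma isBigO_of_dvd {n : ℕ} {p : Polynomial ℂ} (h : Polynomial.X ^ n ∣ p) :
    (fun t => p.eval t) =O[𝓝 0] (fun t : ℂ => t ^ n) := by
  obtain ⟨q, rfl⟩ := h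
  have h1 : (fun t => q.eval t) =O[𝓝 0] (fun _ : ℂ => (1 : ℂ)) :=
    (q.continuous.tendsto 0).isBigO_one ℂ
  refine ((isBigO_refl (fun t : ℂ => t ^ n) _).mul h1).congr (fun t => by simp) (fun t => by simp)

lemma asymExp_poly (n : ℕ) (p : Polynomial ℂ) : AsymExp n (fun t => p.eval t) p := by
  refine (isBigO_of_dvd (n := n) (p := p - PowerSeries.trunc n (p : PowerSeries ℂ)) ?_).congr_left
    fun t => by simp
  rw [Polynomial.X_pow_dvd_iff]
  intro d hd
  simp [PowerSeries.coeff_trunc, hd]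

lemma AsymExp.mul {n : ℕ} {f g : ℂ → ℂ} {φ γ : PowerSeries ℂ} (hf : AsymExp n f φ)
    (hg : AsymExp n g γ) : AsymExp n (fun t => f t * g t) (φ * γ) := by
  have h1 (q : Polynomial ℂ) : (fun t => q.eval t) =O[𝓝 0] (fun _ : ℂ => (1 : ℂ)) :=
    (q.continuous.tendsto 0).isBigO_one ℂ
  have hpow : (fun t : ℂ => t ^ n) =O[𝓝 0] (fun _ : ℂ => (1 : ℂ)) :=
    ((continuous_pow n).tendsto 0).isBigO_one ℂ
  have hg1 : g =O[𝓝 0] (fun _ : ℂ => (1 : ℂ)) :=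
    ((IsBigO.trans hg hpow).add (h1 (PowerSeries.trunc n γ))).congr_left fun t => by ring
  have a1 := (IsBigO.mul hf hg1).congr_right (g₂ := fun t : ℂ => t ^ n) (fun t => by ring)
  have a2 := (IsBigO.mul (h1 (PowerSeries.trunc n φ)) hg).congr_right
    (g₂ := fun t : ℂ => t ^ n) (fun t => by ring)
  have a3 := isBigO_of_dvd (n := n) (p := PowerSeries.trunc n φ * PowerSeries.trunc n γ -
    PowerSeries.trunc n (φ * γ)) (by
      rw [Polynomial.X_pow_dvd_iff]
      intro d hd
      rw [← PowerSeries.trunc_trunc_mul_trunc, ← Polynomial.coe_mul, Polynomial.coeff_sub,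
        PowerSeries.coeff_trunc, if_pos hd, Polynomial.coeff_coe, sub_self])
  refine ((a1.add a2).add a3).congr_left fun t => ?_
  simp; ring

lemma asymExp_exp (n : ℕ) (a : ℂ) :
    AsymExp n (fun t => Complex.exp (a * t)) (PowerSeries.rescale a (PowerSeries.exp ℂ)) := by
  have h := (Complex.exp_sub_sum_range_isBigO_pow n).comp_tendsto
    (k := fun t : ℂ => a * t) (l' := 𝓝 0)
    (by simpa using (continuous_const_mul a).tendsto 0)
  have h2 : (fun t : ℂ => (a * t) ^ n) =O[𝓝 0] (fun t : ℂ => t ^ n) := by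
    simp_rw [mul_pow]
    exact (isBigO_refl _ _).const_mul_left _
  refine (h.trans h2).congr_left fun t => ?_
  simp only [Function.comp, Polynomial.eval, PowerSeries.eval₂_trunc_eq_sum_range]
  congr 1
  refine Finset.sum_congr rfl fun i _ => ?_
  simp [PowerSeries.coeff_rescale, PowerSeries.coeff_exp]
  ring

lemma asymExp_sum {ι : Type*} (n : ℕ) (s : Finset ι) (f : ι → ℂ → ℂ) (φ : ι → PowerSeries ℂ)
    (h : ∀ i, AsymExp n (f i) (φ i)) :
    AsymExp n (fun t => ∑ i ∈ s, f i t) (∑ i ∈ s, φ i) := by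
  classical
  induction s using Finset.induction_on with
  | empty => simpa using asymExp_poly n 0
  | insert a s ha ih => simpa [Finset.sum_insert ha] using (h a).add ih

lemma asymExp_const (n : ℕ) (a : ℂ) : AsymExp n (fun _ => a) (PowerSeries.C a) := by
  simpa using asymExp_poly n (Polynomial.C a)

lemma asymExp_X (n : ℕ) : AsymExp n (fun t => t) PowerSeries.X := by
  simpa using asymExp_poly n Polynomial.X

lemma asymExp_trunc (n : ℕ) (φ : PowerSeries ℂ) :
    AsymExp n (fun t => (PowerSeries.trunc n φ).eval t) φ := by
  simp [AsymExp, isBigO_zero]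

lemma quot_asymp (N : ℕ) (hN : 1 ≤ N) (χ : ℕ → ℂ)
    (hsum : ∑ n ∈ Finset.Icc 1 N, χ n = 0)
    (ψ : ℕ → ℂ)
    (hψ : PowerSeries.X * (∑ n ∈ Finset.Icc 1 N,
        PowerSeries.C (χ n) * PowerSeries.rescale (n : ℂ) (PowerSeries.exp ℂ)) =
      (1 - PowerSeries.rescale (N : ℂ) (PowerSeries.exp ℂ)) *
        (- PowerSeries.mk fun m => ψ m / (m.factorial : ℂ))) (k : ℕ) :
    (fun t : ℂ => (∑ n ∈ Finset.Icc 1 N, χ n * Complex.exp (n * t)) / (1 - Complex.exp (N * t)) +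
      ∑ i ∈ Finset.range (k + 1), ψ (i + 1) / ((i + 1).factorial : ℂ) * t ^ i)
      =O[𝓝[≠] 0] (fun t : ℂ => t ^ (k + 1)) := by
  have hN0 : (N : ℂ) ≠ 0 := by exact_mod_cast (by omega : N ≠ 0)
  have hψ0 : ψ 0 = 0 := by
    have h := congrArg (PowerSeries.coeff 1) hψ
    rw [show (1 : ℕ) = 0 + 1 from rfl, PowerSeries.coeff_succ_X_mul, PowerSeries.coeff_mul] at h
    simp [Finset.Nat.antidiagonal_succ, PowerSeries.coeff_rescale, PowerSeries.coeff_exp] at h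
    rw [hsum] at h
    simpa [hN0] using h.symm
  set φ : PowerSeries ℂ := PowerSeries.mk fun m => ψ m / (m.factorial : ℂ) with hφ
  have hA : AsymExp (k + 3) (fun t => t * ∑ n ∈ Finset.Icc 1 N, χ n * Complex.exp (n * t)) _ :=
    (asymExp_X (k + 3)).mul (asymExp_sum (k + 3) (Finset.Icc 1 N) _ _
      fun n => (asymExp_const _ (χ n)).mul (asymExp_exp _ (n : ℂ)))
  have hB : AsymExp (k + 3) (fun t => (1 - Complex.exp (N * t)) *
      (-(PowerSeries.trunc (k + 3) φ).eval t)) ((1 - PowerSeries.rescale (N : ℂ) (PowerSeries.exp ℂ)) * (-φ)) := by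
    refine AsymExp.mul ?_ (asymExp_trunc _ φ).neg
    simpa [sub_eq_add_neg] using (asymExp_const (k + 3) 1).add (asymExp_exp _ (N : ℂ)).neg
  rw [← hψ] at hB
  have hC : (fun t : ℂ => t * (∑ n ∈ Finset.Icc 1 N, χ n * Complex.exp (n * t)) +
      (1 - Complex.exp (N * t)) * (PowerSeries.trunc (k + 3) φ).eval t) =O[𝓝 0]
      (fun t : ℂ => t ^ (k + 3)) :=
    (IsBigO.sub hA hB).congr_left fun t => by ring
  -- `t = O(D t)`
  have hD : HasDerivAt (fun t : ℂ => 1 - Complex.exp (N * t)) (-(N : ℂ)) 0 := by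
    have := (((hasDerivAt_id (0 : ℂ)).const_mul (N : ℂ)).cexp).const_sub 1
    simpa using this
  have hinv : (fun t : ℂ => t * (1 - Complex.exp (N * t))⁻¹) =O[𝓝[≠] 0] (fun _ => (1 : ℂ)) := by
    have h := (hD.tendsto_slope_zero.inv₀ (neg_ne_zero.mpr hN0)).isBigO_one ℂ
    refine h.congr_left fun t => ?_
    simp
    ring
  have hne : ∀ᶠ t : ℂ in 𝓝[≠] 0, 1 - Complex.exp (N * t) ≠ 0 := by
    have := hD.eventually_ne (c := 0) (neg_ne_zero.mpr hN0)
    simpa using this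
  have hE := (hC.mono nhdsWithin_le_nhds).mul hinv
  have hF : (fun t : ℂ => t⁻¹ * t⁻¹) =O[𝓝[≠] 0] (fun t : ℂ => t⁻¹ * t⁻¹) := isBigO_refl _ _
  have hG := (hE.mul hF)
  have hG' := hG.sub (f₂ := fun t : ℂ => ψ (k + 2) / ((k + 2).factorial : ℂ) * t ^ (k + 1))
    (g := fun t : ℂ => t ^ (k + 3) * 1 * (t⁻¹ * t⁻¹)) (by
      refine ((isBigO_refl (fun t : ℂ => t ^ (k + 1)) _).const_mul_left _).congr' EventuallyEq.rfl ?_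
      filter_upwards [self_mem_nhdsWithin] with t ht
      have : t ≠ 0 := ht
      field_simp
      ring)
  refine hG'.congr' ?_ ?_
  · filter_upwards [self_mem_nhdsWithin, hne] with t ht hd
    have ht : t ≠ 0 := ht
    have : (PowerSeries.trunc (k + 3) φ).eval t = t * (∑ i ∈ Finset.range (k + 1),
        ψ (i + 1) / ((i + 1).factorial : ℂ) * t ^ i + ψ (k + 2) / ((k + 2).factorial : ℂ) * t ^ (k + 1)) := by
      rw [Polynomial.eval, PowerSeries.eval₂_trunc_eq_sum_range, Finset.sum_range_succ',
        ← Finset.sum_range_succ (fun i => ψ (i + 1) / ((i + 1).factorial : ℂ) * t ^ i), Finset.mul_sum]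
      simp [hφ, hψ0]
      refine Finset.sum_congr rfl fun i _ => by ring
    rw [this]
    set D := 1 - Complex.exp (N * t)
    set S := ∑ n ∈ Finset.Icc 1 N, χ n * Complex.exp (n * t)
    set S' := ∑ i ∈ Finset.range (k + 1), ψ (i + 1) / ((i + 1).factorial : ℂ) * t ^ i
    set c := ψ (k + 2) / ((k + 2).factorial : ℂ)
    field_simp
    ring
  · filter_upwards [self_mem_nhdsWithin] with t ht
    have : t ≠ 0 := ht
    field_simp
    ring

lemma chi_bdd (N : ℕ) (hN : 1 ≤ N) (χ : ℕ → ℂ)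
    (hper : ∀ n : ℕ, 1 ≤ n → χ (n + N) = χ n) : ∃ C : ℝ, ∀ n : ℕ, ‖χ (n + 1)‖ ≤ C := by
  refine ⟨∑ j ∈ Finset.range N, ‖χ (j + 1)‖, fun n => ?_⟩
  induction n using Nat.strong_induction_on with
  | _ n ih =>
    by_cases h : n < N
    · exact Finset.single_le_sum (f := fun j => ‖χ (j + 1)‖) (fun _ _ => norm_nonneg _)
        (Finset.mem_range.mpr h)
    · have := ih (n - N) (by omega)
      rwa [← hper (n - N + 1) (by omega), show n - N + 1 + N = n + 1 by omega] at this

/-- the generating function -/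
noncomputable def genFun (N : ℕ) (χ : ℕ → ℂ) (t : ℂ) : ℂ :=
  (∑ n ∈ Finset.Icc 1 N, χ n * Complex.exp (n * t)) / (1 - Complex.exp (N * t))

lemma one_sub_ne (N : ℕ) (hN : 1 ≤ N) (t : ℝ) (ht : 0 < t) :
    1 - Complex.exp (N * (-t : ℂ)) ≠ 0 := by
  have hlt : Real.exp (N * (-t)) < 1 := by
    rw [Real.exp_lt_one_iff]
    have : (0 : ℝ) < N := by exact_mod_cast hN
    nlinarith
  have : (Complex.exp (N * (-t : ℂ))) = ((Real.exp (N * (-t)) : ℝ) : ℂ) := by push_cast; rfl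
  rw [this, sub_ne_zero]
  exact_mod_cast hlt.ne'

lemma genFun_hasSum (N : ℕ) (hN : 1 ≤ N) (χ : ℕ → ℂ)
    (hper : ∀ n : ℕ, 1 ≤ n → χ (n + N) = χ n) (t : ℝ) (ht : 0 < t) :
    HasSum (fun i : ℕ => χ (i + 1) * (Real.exp (-((i + 1 : ℕ) : ℝ) * t) : ℂ))
      (genFun N χ (-t)) := by
  obtain ⟨C, hC⟩ := chi_bdd N hN χ hper
  set f : ℕ → ℂ := fun i : ℕ => χ (i + 1) * (Real.exp (-((i + 1 : ℕ) : ℝ) * t) : ℂ) with hf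
  have hs : Summable f := by
    have h1 : Summable fun i : ℕ => Real.exp (-((i + 1 : ℕ) : ℝ) * t) := by
      have := (Real.summable_exp_nat_mul_iff (a := -t)).mpr (by linarith)
      refine ((summable_nat_add_iff 1).mpr this).congr fun i => ?_
      congr 1; ring
    refine Summable.of_norm_bounded (h1.mul_left C) fun i => ?_
    rw [hf, norm_mul, Complex.norm_real, Real.norm_of_nonneg (Real.exp_pos _).le]
    exact mul_le_mul_of_nonneg_right (hC i) (Real.exp_pos _).le
  have hshift : ∀ i, f (i + N) = Complex.exp (N * (-t : ℂ)) * f i := by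
    intro i
    simp only [hf]
    rw [show i + N + 1 = (i + 1) + N by ring, hper _ (by omega), mul_left_comm]
    congr 1
    push_cast
    rw [← Complex.exp_add]
    congr 1; ring
  have key := hs.sum_add_tsum_nat_add N
  simp_rw [hshift] at key
  rw [tsum_mul_left] at key
  have hA : ∑ n ∈ Finset.Icc 1 N, χ n * Complex.exp (n * (-t : ℂ)) = ∑ i ∈ Finset.range N, f i := by
    rw [Finset.range_eq_Ico, Finset.sum_Ico_add' (fun n : ℕ => χ n * (Real.exp (-((n : ℕ) : ℝ) * t) : ℂ)) 0 N 1]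
    refine Finset.sum_congr (by ext; simp) fun n _ => ?_
    push_cast
    congr 2; ring
  have : genFun N χ (-t) = ∑' i, f i := by
    rw [genFun, div_eq_iff (one_sub_ne N hN t ht), hA]
    linear_combination key
  rw [this]
  exact hs.hasSum

lemma genFun_cont (N : ℕ) (hN : 1 ≤ N) (χ : ℕ → ℂ) :
    ContinuousOn (fun t : ℝ => genFun N χ (-t)) (Ioi 0) := by
  unfold genFun
  refine ContinuousOn.div (by fun_prop) (by fun_prop) fun t ht => one_sub_ne N hN t ht

lemma genFun_decay (N : ℕ) (hN : 1 ≤ N) (χ : ℕ → ℂ) :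
    (fun t : ℝ => genFun N χ (-t)) =O[atTop] fun t => Real.exp (-1 * t) := by
  have h1 : (fun t : ℝ => ∑ n ∈ Finset.Icc 1 N, χ n * Complex.exp (n * (-t : ℂ)))
      =O[atTop] fun t => Real.exp (-1 * t) := by
    refine IsBigO.fun_sum fun n hn => IsBigO.const_mul_left ?_ _
    refine IsBigO.of_bound 1 ?_
    filter_upwards [eventually_ge_atTop 0] with t ht
    rw [Complex.norm_exp, Real.norm_of_nonneg (Real.exp_pos _).le, one_mul, Real.exp_le_exp]
    have : (1 : ℝ) ≤ n := by exact_mod_cast (Finset.mem_Icc.mp hn).1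
    simp
    nlinarith
  have h2 : Tendsto (fun t : ℝ => (1 - Complex.exp (N * (-t : ℂ)))⁻¹) atTop (𝓝 (1 - 0)⁻¹) := by
    refine Tendsto.inv₀ (tendsto_const_nhds.sub ?_) (by simp)
    rw [tendsto_zero_iff_norm_tendsto_zero]
    simp only [Complex.norm_exp]
    refine Real.tendsto_exp_atBot.comp ?_
    have : (0 : ℝ) < N := by exact_mod_cast hN
    simpa using (tendsto_id.const_mul_atTop this)
  refine (h1.mul (h2.isBigO_one ℝ)).congr (fun t => ?_) (fun t => by simp)
  simp [genFun, div_eq_mul_inv]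

lemma hasMellin_sum {ι : Type*} (s : Finset ι) (f : ι → ℝ → ℂ) (m : ι → ℂ) (z : ℂ)
    (h : ∀ i, HasMellin (f i) z (m i)) :
    HasMellin (fun t => ∑ i ∈ s, f i t) z (∑ i ∈ s, m i) := by
  classical
  induction s using Finset.induction_on with
  | empty => simp [HasMellin, MellinConvergent, mellin]
  | insert a s ha ih =>
    have := hasMellin_add (h a).1 ih.1
    rw [(h a).2, ih.2] at this
    simpa [Finset.sum_insert ha] using this

lemma Gamma_add_nat' (s : ℂ) (hs : 0 < s.re) (k : ℕ) :
    Complex.Gamma (s + k) = (∏ i ∈ Finset.range k, (s + i)) * Complex.Gamma s := by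
  induction k with
  | zero => simp
  | succ k ih =>
    rw [Finset.prod_range_succ, Nat.cast_succ, ← add_assoc, Complex.Gamma_add_one, ih]
    · ring
    · intro h
      have := congrArg Complex.re h
      simp at this
      have h2 : (0 : ℝ) ≤ k := by positivity
      linarith

lemma mellin_genFun (N : ℕ) (hN : 1 ≤ N) (χ : ℕ → ℂ)
    (hper : ∀ n : ℕ, 1 ≤ n → χ (n + N) = χ n) (s : ℂ) (hs : 1 < s.re) :
    mellin (fun t : ℝ => genFun N χ (-t)) s =
      Complex.Gamma s * ∑' n : ℕ, χ (n + 1) * (((n + 1 : ℕ)) : ℂ) ^ (-s) := by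
  obtain ⟨C, hC⟩ := chi_bdd N hN χ hper
  have h := hasSum_mellin (a := fun i : ℕ => χ (i + 1)) (p := fun i : ℕ => ((i + 1 : ℕ) : ℝ))
    (F := fun t : ℝ => genFun N χ (-t)) (s := s) (fun i => Or.inr (by positivity)) (by linarith)
    (fun t ht => genFun_hasSum N hN χ hper t ht) (by
      have h1 := ((summable_nat_add_iff 1).mpr (Real.summable_one_div_nat_rpow.mpr hs)).mul_left C
      refine Summable.of_nonneg_of_le (fun i => by positivity) (fun i => ?_) h1
      rw [div_eq_mul_one_div]
      exact mul_le_mul_of_nonneg_right (hC i) (by positivity))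
  rw [← h.tsum_eq, ← tsum_mul_left]
  refine tsum_congr fun i => ?_
  rw [Complex.cpow_neg]
  push_cast
  ring

lemma main_aux (N : ℕ) (hN : 1 ≤ N) (χ : ℕ → ℂ)
    (hper : ∀ n : ℕ, 1 ≤ n → χ (n + N) = χ n)
    (F : ℂ → ℂ) (hF : Differentiable ℂ F)
    (hFs : ∀ s : ℂ, 1 < s.re →
      F s = ∑' n : ℕ, χ (n + 1) * (((n + 1 : ℕ)) : ℂ) ^ (-s)) (k : ℕ) (a : ℕ → ℂ)
    (hasym : (fun t : ℂ => genFun N χ t - ∑ i ∈ Finset.range (k + 1), a i * t ^ i)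
      =O[𝓝[≠] 0] (fun t : ℂ => t ^ (k + 1))) :
    F (-(k : ℂ)) = a k * k.factorial := by
  set g : ℝ → ℂ := fun t => genFun N χ (-t) with hg
  set b : ℕ → ℂ := fun i => (-1) ^ i * a i with hb
  set P : ℝ → ℂ := fun t => ∑ i ∈ Finset.range (k + 1),
    b i • indicator (Ioc 0 1) (fun t : ℝ => (t : ℂ) ^ (i : ℂ)) t with hP
  set h : ℝ → ℂ := fun t => g t - P t with hh
  have hglt : LocallyIntegrableOn g (Ioi 0) MeasureTheory.volume :=
    (genFun_cont N hN χ).locallyIntegrableOn measurableSet_Ioi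
  have hPM (s : ℂ) (hs : 0 < s.re) : HasMellin P s (∑ i ∈ Finset.range (k + 1), b i * (1 / (s + i))) := by
    refine hasMellin_sum _ _ _ _ fun i => ?_
    have hm := hasMellin_cpow_Ioc (i : ℂ) (s := s) (by simp; positivity)
    refine ⟨hm.1.const_smul _, ?_⟩
    rw [mellin_const_smul, hm.2, smul_eq_mul]
  have hPlt : LocallyIntegrableOn P (Ioi 0) MeasureTheory.volume := by
    have : LocallyIntegrable P MeasureTheory.volume := by
      have : P = indicator (Ioc 0 1)
          (fun t : ℝ => ∑ i ∈ Finset.range (k + 1), b i * (t : ℂ) ^ i) := by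
        funext t
        by_cases ht : t ∈ Ioc (0 : ℝ) 1 <;> simp [hP, ht]
      rw [this]
      exact (Continuous.locallyIntegrable (by fun_prop)).indicator measurableSet_Ioc
    exact this.locallyIntegrableOn _
  have hhl : LocallyIntegrableOn h (Ioi 0) MeasureTheory.volume := hglt.sub hPlt
  have hh_top : h =O[atTop] fun t => Real.exp (-1 * t) := by
    refine (genFun_decay N hN χ).congr' ?_ EventuallyEq.rfl
    filter_upwards [eventually_gt_atTop 1] with t ht
    have : t ∉ Ioc (0 : ℝ) 1 := fun h => by linarith [h.2]
    simp [hh, hP, hg, this]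
  have hh_bot : h =O[𝓝[>] 0] fun t : ℝ => t ^ (-(-((k : ℝ) + 1))) := by
    have htend : Tendsto (fun t : ℝ => (-t : ℂ)) (𝓝[>] 0) (𝓝[≠] 0) := by
      refine tendsto_nhdsWithin_iff.mpr ⟨?_, ?_⟩
      · have : Continuous fun t : ℝ => (-t : ℂ) := by fun_prop
        simpa using (this.tendsto 0).mono_left nhdsWithin_le_nhds
      · filter_upwards [self_mem_nhdsWithin] with t ht
        simpa using (ne_of_gt ht : t ≠ 0)
    have h1 := hasym.comp_tendsto htend
    rw [← isBigO_norm_right] at h1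
    refine h1.congr' ?_ ?_
    · filter_upwards [Ioc_mem_nhdsGT (zero_lt_one (α := ℝ))] with t ht
      simp only [Function.comp, hh, hP, hg, indicator_of_mem ht, hb, smul_eq_mul, Complex.cpow_natCast]
      congr 1
      refine Finset.sum_congr rfl fun i _ => ?_
      rw [neg_pow]; ring
    · filter_upwards [self_mem_nhdsWithin] with t ht
      have ht : 0 < t := ht
      simp only [Function.comp, norm_pow, norm_neg, Complex.norm_real, Real.norm_of_nonneg ht.le, neg_neg]
      exact_mod_cast (Real.rpow_natCast t (k + 1)).symm
  have hdiff (s : ℂ) (hs : -((k : ℝ) + 1) < s.re) : DifferentiableAt ℂ (mellin h) s :=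
    mellin_differentiableAt_of_isBigO_rpow_exp one_pos hhl hh_top hh_bot hs
  have hconv (s : ℂ) (hs : -((k : ℝ) + 1) < s.re) : MellinConvergent h s :=
    mellinConvergent_of_isBigO_rpow_exp one_pos hhl hh_top hh_bot hs
  have hid (s : ℂ) (hs : 1 < s.re) : Complex.Gamma s * F s =
      mellin h s + ∑ i ∈ Finset.range (k + 1), b i * (1 / (s + i)) := by
    have hk : (0 : ℝ) ≤ k := by positivity
    have h1 := (hasMellin_add (hconv s (by linarith)) (hPM s (by linarith)).1).2
    rw [(hPM s (by linarith)).2] at h1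
    rw [← h1, hFs s hs, ← mellin_genFun N hN χ hper s hs]
    congr 1
    funext t
    simp [hh, hg]
  -- the two sides, multiplied by the Pochhammer factor
  set L : ℂ → ℂ := fun s => Complex.Gamma (s + (k + 1 : ℕ)) * F s with hL
  set R : ℂ → ℂ := fun s => (∏ i ∈ Finset.range (k + 1), (s + i)) * mellin h s +
    ∑ i ∈ Finset.range (k + 1), b i * ∏ j ∈ (Finset.range (k + 1)).erase i, (s + j) with hR
  set U : Set ℂ := {s | -((k : ℝ) + 1) < s.re} with hU
  have hUo : IsOpen U := isOpen_lt continuous_const Complex.continuous_re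
  have hLd : AnalyticOnNhd ℂ L U := by
    refine DifferentiableOn.analyticOnNhd (fun s hs => DifferentiableAt.differentiableWithinAt ?_) hUo
    refine DifferentiableAt.mul ?_ (hF s)
    refine DifferentiableAt.comp s (g := Complex.Gamma) (f := fun s : ℂ => s + (k + 1 : ℕ))
      (Complex.differentiableAt_Gamma _ fun m hm => ?_) (by fun_prop)
    have h1 := congrArg Complex.re hm
    have h2 : -((k : ℝ) + 1) < s.re := hs
    have h3 : (0 : ℝ) ≤ m := by positivity
    simp at h1
    linarith
  have hRd : AnalyticOnNhd ℂ R U := by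
    refine DifferentiableOn.analyticOnNhd (fun s hs => DifferentiableAt.differentiableWithinAt ?_) hUo
    refine DifferentiableAt.add (DifferentiableAt.mul ?_ (hdiff s hs)) ?_
    · fun_prop
    · fun_prop
  have hUc : IsPreconnected U := (convex_halfSpace_re_gt _).isPreconnected
  have hk : (0 : ℝ) ≤ k := by positivity
  have h2U : (2 : ℂ) ∈ U := by simp [hU]; linarith
  have hev : L =ᶠ[𝓝 2] R := by
    have : {s : ℂ | 1 < s.re} ∈ 𝓝 (2 : ℂ) :=
      (isOpen_lt continuous_const Complex.continuous_re).mem_nhds (by simp)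
    filter_upwards [this] with s hs
    have hs : 1 < s.re := hs
    simp only [hL, hR]
    rw [Gamma_add_nat' s (by linarith), mul_assoc, hid s hs, mul_add, Finset.mul_sum]
    congr 1
    refine Finset.sum_congr rfl fun i hi => ?_
    rw [← Finset.mul_prod_erase _ _ hi]
    have : s + i ≠ 0 := by
      intro h0
      have := congrArg Complex.re h0
      have h3 : (0 : ℝ) ≤ i := by positivity
      simp at this
      linarith
    field_simp
  have hfin := hLd.eqOn_of_preconnected_of_eventuallyEq hRd hUc h2U hev
    (show (-(k : ℂ)) ∈ U by simp [hU])
  simp only [hL, hR] at hfin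
  rw [Finset.prod_eq_zero (Finset.self_mem_range_succ k) (by simp), zero_mul, zero_add,
    Finset.sum_eq_single_of_mem k (Finset.self_mem_range_succ k)] at hfin
  · have h1 : (-(k : ℂ)) + (k + 1 : ℕ) = 1 := by push_cast; ring
    rw [h1, Complex.Gamma_one, one_mul] at hfin
    have h2 : (Finset.range (k + 1)).erase k = Finset.range k := by
      ext; simp; omega
    have h3 : ∏ j ∈ Finset.range k, (-(k : ℂ) + j) = (-1) ^ k * k.factorial := by
      rw [← Finset.prod_range_add_one_eq_factorial, ← Finset.prod_range_reflect]
      push_cast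
      rw [← Finset.card_range k, ← Finset.prod_const, Finset.card_range, ← Finset.prod_mul_distrib]
      refine Finset.prod_congr rfl fun j hj => ?_
      have : j < k := Finset.mem_range.mp hj
      rw [show k - 1 - j = k - (j + 1) by omega, Nat.cast_sub (by omega)]
      push_cast; ring
    rw [hfin, h2, h3, hb]
    have : ((-1 : ℂ) ^ k) * (-1) ^ k = 1 := by rw [← mul_pow]; simp
    linear_combination (a k * k.factorial) * this
  · intro i hi hik
    rw [Finset.prod_eq_zero (i := k) (by simp [Ne.symm hik]) (by simp), mul_zero]

end aux

/-- if `F` is entire and agrees with `L_χ(s) = Σ_{n=1}^∞ χ(n)·n^{-s}` for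
`Re(s) > 1`, then `F(1-m) = -Ψ_χ(X^m)/m` for every `m ≥ 1`, where `ψ m = Ψ_χ(X^m)` is
characterized by `t·(Σ_{n=1}^N χ(n)e^{nt})/(1-e^{Nt}) = -Σ_m ψ(m) t^m/m!`. -/
theorem L_chi_values_at_negative_integers
    (N : ℕ) (hN : 1 ≤ N) (χ : ℕ → ℂ)
    (hper : ∀ n : ℕ, 1 ≤ n → χ (n + N) = χ n)
    (hsum : ∑ n ∈ Finset.Icc 1 N, χ n = 0)
    (ψ : ℕ → ℂ)
    (hψ : PowerSeries.X * (∑ n ∈ Finset.Icc 1 N,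
        PowerSeries.C (χ n) * PowerSeries.rescale (n : ℂ) (PowerSeries.exp ℂ)) =
      (1 - PowerSeries.rescale (N : ℂ) (PowerSeries.exp ℂ)) *
        (- PowerSeries.mk fun m => ψ m / (m.factorial : ℂ)))
    (F : ℂ → ℂ) (hF : Differentiable ℂ F)
    (hFs : ∀ s : ℂ, 1 < s.re →
      F s = ∑' n : ℕ, χ (n + 1) * (((n + 1 : ℕ)) : ℂ) ^ (-s)) :
    ∀ m : ℕ, 0 < m → F (1 - (m : ℂ)) = -(ψ m) / (m : ℂ) := by
  intro m hm
  obtain ⟨k, rfl⟩ : ∃ k, m = k + 1 := ⟨m - 1, by omega⟩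
  have h := main_aux N hN χ hper F hF hFs k (fun i => -(ψ (i + 1) / ((i + 1).factorial : ℂ)))
    ((quot_asymp N hN χ hsum ψ hψ k).congr_left fun t => by
      simp [genFun, Finset.sum_neg_distrib])
  have h1 : (1 : ℂ) - ((k + 1 : ℕ) : ℂ) = -(k : ℂ) := by push_cast; ring
  rw [h1, h, Nat.factorial_succ]
  have h2 : (k.factorial : ℂ) ≠ 0 := by exact_mod_cast k.factorial_ne_zero
  have h3 : ((k + 1 : ℕ) : ℂ) ≠ 0 := by exact_mod_cast k.succ_ne_zero
  rw [Nat.cast_mul]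
  field_simp
end
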